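/- Under the Frenet frame setup, assume κ_t ≡ 0 and κ_ν(u) ≠ 0 for all u (NR is noncylindrical and developable), and let q = (u₀,w₀) be a singular point of NR, i.e. w₀·κ_ν(u₀) = 1. Then: (1) NR has a cuspidal edge at q iff κ_s(u₀)·κ_ν'(u₀) ≠ 0; (2) NR has a swallowtail at q iff κ_s(u₀) ≠ 0, κ_ν'(u₀) = 0 and κ_ν''(u₀) ≠ 0; (3) NR has a cuspidal cross cap at q iff κ_s(u₀) = 0 and κ_s'(u₀)·κ_ν'(u₀) ≠ 0; (4) NR has a cuspidal S₁⁺ singularity at q iff κ_s(u₀) = κ_s'(u₀) = 0 and κ_s''(u₀)·κ_ν'(u₀) ≠ 0. -/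

import Mathlib

open Filter

noncomputable section

/-- Vectors in ℝ³, modeled as `Fin 3 → ℝ`. -/
abbrev R3 : Type := Fin 3 → ℝ

/-- The Euclidean inner product on ℝ³. -/
def dot3 (a b : R3) : ℝ := a 0 * b 0 + a 1 * b 1 + a 2 * b 2

/-- The determinant det(a,b,c) of three vectors of ℝ³. -/
def det3 (a b c : R3) : ℝ := Matrix.det (Matrix.of ![a, b, c])

/-- Partial derivative in the `u`-direction. -/
def pu {E : Type*} [NormedAddCommGroup E] [NormedSpace ℝ E] (F : ℝ × ℝ → E) (p : ℝ × ℝ) : E :=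
  fderiv ℝ F p (1, 0)

/-- Partial derivative in the `w`-direction. -/
def pw {E : Type*} [NormedAddCommGroup E] [NormedSpace ℝ E] (F : ℝ × ℝ → E) (p : ℝ × ℝ) : E :=
  fderiv ℝ F p (0, 1)

/-- The Frenet-type frame setup along the singular locus γ̂: `{γ̂', ĥ, ν̂}` is an
orthonormal frame satisfying the Frenet-type equations with singular curvature κ_s,
limiting normal curvature κ_ν and cuspidal torsion κ_t. -/
structure FrenetSetup (γ h ν : ℝ → R3) (κs κν κt : ℝ → ℝ) : Prop where
  smooth_γ : ContDiff ℝ (⊤ : ℕ∞) γ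
  smooth_h : ContDiff ℝ (⊤ : ℕ∞) h
  smooth_ν : ContDiff ℝ (⊤ : ℕ∞) ν
  smooth_κs : ContDiff ℝ (⊤ : ℕ∞) κs
  smooth_κν : ContDiff ℝ (⊤ : ℕ∞) κν
  smooth_κt : ContDiff ℝ (⊤ : ℕ∞) κt
  unit_t : ∀ u, dot3 (deriv γ u) (deriv γ u) = 1
  unit_h : ∀ u, dot3 (h u) (h u) = 1
  unit_ν : ∀ u, dot3 (ν u) (ν u) = 1
  orth_th : ∀ u, dot3 (deriv γ u) (h u) = 0
  orth_tν : ∀ u, dot3 (deriv γ u) (ν u) = 0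
  orth_hν : ∀ u, dot3 (h u) (ν u) = 0
  frenet_t : ∀ u, deriv (deriv γ) u = κs u • h u + κν u • ν u
  frenet_h : ∀ u, deriv h u = (-κs u) • deriv γ u + κt u • ν u
  frenet_ν : ∀ u, deriv ν u = (-κν u) • deriv γ u - κt u • h u

/-- The normal ruled surface NR(u,w) = γ̂(u) + w·ν̂(u). -/
def NR (γ ν : ℝ → R3) (p : ℝ × ℝ) : R3 := γ p.1 + p.2 • ν p.1

/-- A map `φ` is a local diffeomorphism at `p` if it is C^∞ at `p` and admits a
local C^∞ inverse near `p`. -/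
def IsLocalDiffeoAt {E F : Type*} [NormedAddCommGroup E] [NormedSpace ℝ E]
    [NormedAddCommGroup F] [NormedSpace ℝ F] (φ : E → F) (p : E) : Prop :=
  ContDiffAt ℝ (⊤ : ℕ∞) φ p ∧ ∃ ψ : F → E, ContDiffAt ℝ (⊤ : ℕ∞) ψ (φ p) ∧
    (∀ᶠ x in nhds p, ψ (φ x) = x) ∧ (∀ᶠ y in nhds (φ p), φ (ψ y) = y)

/-- 𝒜-equivalence of map germs: the germ of `f` at `p` is 𝒜-equivalent to the germ of
`g` at `q` if `f` is carried to `g` by composing with diffeomorphism germs of the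
source and the target. -/
def AEquivAt (f : ℝ × ℝ → R3) (p : ℝ × ℝ) (g : ℝ × ℝ → R3) (q : ℝ × ℝ) : Prop :=
  ∃ (φ : ℝ × ℝ → ℝ × ℝ) (Φ : R3 → R3),
    IsLocalDiffeoAt φ q ∧ φ q = p ∧ IsLocalDiffeoAt Φ (f p) ∧
    ∀ᶠ x in nhds q, Φ (f (φ x)) = g x

/-!
Near a singular point a noncylindrical developable is `𝒜`-equivalent to the germ
`(x, t) ↦ (x, ∫₀ᵗ (x - a), ∫₀ᵗ (x - a) c)`, where `a` vanishes to the order of `κν - κν u₀` and `c`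
to that of a primitive of `κs` at `u₀`. If `a` has order one, the germ folds along `x = a t`, and
the Malgrange preparation theorem brings it to the form `(u, v², v³ q(u, v²))`; the low order part
of `q`, which decides between cuspidal edge, cuspidal cross cap and `S₁⁺`, is read off from the odd
part of `c`. If `a` has order two and `c` order one, preparation turns the family of tangent planes
into a family of quartics, and the germ is its discriminant, a swallowtail. Conversely, the models
are told apart by two invariants of `𝒜`-equivalence: the Łojasiewicz exponent and the maximal order
of contact with smooth surfaces.

Malgrange division is proved by Fourier inversion, which reduces it to dividing `exp (i ξ t)` by a
monic polynomial with tempered dependence on `ξ`; there Cauchy's formula applies on a circle on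
which the polynomial is bounded below, and a partition of unity chooses the circle.
-/

section TemperateGrowth

open Function MeasureTheory
open scoped ContDiff

universe u

variable {E G : Type u} [NormedAddCommGroup E] [NormedSpace ℝ E]
  [NormedAddCommGroup G] [NormedSpace ℝ G]

theorem hasTemperateGrowth_of_fderiv_mem
    {S : ∀ (G : Type u) [NormedAddCommGroup G] [NormedSpace ℝ G], (E → G) → Prop}
    (differentiable : ∀ (G : Type u) [NormedAddCommGroup G] [NormedSpace ℝ G] (f : E → G),
      S G f → Differentiable ℝ f)
    (fderiv_mem : ∀ (G : Type u) [NormedAddCommGroup G] [NormedSpace ℝ G] (f : E → G),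
      S G f → S (E →L[ℝ] G) (fderiv ℝ f))
    (bounded : ∀ (G : Type u) [NormedAddCommGroup G] [NormedSpace ℝ G] (f : E → G),
      S G f → ∃ (k : ℕ) (C : ℝ), ∀ x, ‖f x‖ ≤ C * (1 + ‖x‖) ^ k)
    {f : E → G} (hf : S G f) : f.HasTemperateGrowth := by
  suffices h : ∀ (n : ℕ) (G : Type u) [NormedAddCommGroup G] [NormedSpace ℝ G] (f : E → G),
      S G f → ContDiff ℝ n f ∧ ∃ (k : ℕ) (C : ℝ), ∀ x,
        ‖iteratedFDeriv ℝ n f x‖ ≤ C * (1 + ‖x‖) ^ k from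
    ⟨contDiff_infty.2 fun n => (h n G f hf).1, fun n => (h n G f hf).2⟩
  intro n
  induction n with
  | zero =>
    intro G _ _ f hf
    exact ⟨contDiff_zero.2 (differentiable G f hf).continuous, by simpa using bounded G f hf⟩
  | succ n ih =>
    intro G _ _ f hf
    obtain ⟨hsmooth, hbound⟩ := ih _ _ (fderiv_mem G f hf)
    refine ⟨?_, by simpa only [norm_iteratedFDeriv_fderiv] using hbound⟩
    exact_mod_cast contDiff_succ_iff_fderiv.2 ⟨differentiable G f hf, by simp, hsmooth⟩

theorem exists_norm_le_of_hasTemperateGrowth {f : E → G} (hf : f.HasTemperateGrowth) :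
    ∃ (k : ℕ) (C : ℝ), 0 ≤ C ∧ ∀ x, ‖f x‖ ≤ C * (1 + ‖x‖) ^ k := by
  obtain ⟨k, C, hC, h⟩ := hf.norm_iteratedFDeriv_le_uniform 0
  exact ⟨k, C, hC, fun x => by simpa using h 0 le_rfl x⟩

theorem hasTemperateGrowth_fderiv {f : E → G} (hf : f.HasTemperateGrowth) :
    (fderiv ℝ f).HasTemperateGrowth := by
  refine ⟨hf.1.fderiv_right (by simp), fun n => ?_⟩
  simpa only [norm_iteratedFDeriv_fderiv] using hf.2 (n + 1)

section Products

variable {D F : Type*} [NormedAddCommGroup D] [NormedSpace ℝ D]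
  [NormedAddCommGroup F] [NormedSpace ℝ F]

@[fun_prop]
theorem hasTemperateGrowth_fst : (fun p : D × F => p.1).HasTemperateGrowth :=
  (ContinuousLinearMap.fst ℝ D F).hasTemperateGrowth

@[fun_prop]
theorem hasTemperateGrowth_snd : (fun p : D × F => p.2).HasTemperateGrowth :=
  (ContinuousLinearMap.snd ℝ D F).hasTemperateGrowth

@[fun_prop]
theorem hasTemperateGrowth_prodMk {H : Type*} [NormedAddCommGroup H] [NormedSpace ℝ H]
    {f : H → D} {g : H → F} (hf : f.HasTemperateGrowth) (hg : g.HasTemperateGrowth) :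
    (fun x => (f x, g x)).HasTemperateGrowth := by
  convert ((ContinuousLinearMap.inl ℝ D F).hasTemperateGrowth.comp hf).add
    ((ContinuousLinearMap.inr ℝ D F).hasTemperateGrowth.comp hg) using 1
  ext x <;> simp

@[fun_prop]
theorem hasTemperateGrowth_apply {ι : Type*} [Fintype ι] (i : ι) :
    (fun v : ι → F => v i).HasTemperateGrowth :=
  (ContinuousLinearMap.proj (R := ℝ) (φ := fun _ : ι => F) i).hasTemperateGrowth

end Products

section PolynomialODE

variable {F : Type u} [NormedAddCommGroup F] [NormedSpace ℝ F]

-- The class of functions `x ↦ B (x, f x)`, with `B` of temperate growth, is closed under `fderiv`.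
theorem hasTemperateGrowth_of_hasFDerivAt {f : E → F} {A : E × F → E →L[ℝ] F}
    (hA : A.HasTemperateGrowth) (hf : ∀ x, HasFDerivAt f (A (x, f x)) x) {k : ℕ} {C : ℝ}
    (hC : ∀ x, ‖f x‖ ≤ C * (1 + ‖x‖) ^ k) : f.HasTemperateGrowth := by
  let S : ∀ (G : Type u) [NormedAddCommGroup G] [NormedSpace ℝ G], (E → G) → Prop :=
    fun G _ _ g => ∃ B : E × F → G, B.HasTemperateGrowth ∧ g = fun x => B (x, f x)
  have hS (G : Type u) [NormedAddCommGroup G] [NormedSpace ℝ G] (B : E × F → G)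
      (hB : B.HasTemperateGrowth) (x : E) : HasFDerivAt (fun x => B (x, f x))
        ((fderiv ℝ B (x, f x)).comp ((ContinuousLinearMap.id ℝ E).prod (A (x, f x)))) x :=
    (hB.1.differentiable (by simp) _).hasFDerivAt.comp x ((hasFDerivAt_id x).prodMk (hf x))
  refine hasTemperateGrowth_of_fderiv_mem (S := S) ?_ ?_ ?_ ⟨Prod.snd, hasTemperateGrowth_snd, rfl⟩
  · rintro G _ _ _ ⟨B, hB, rfl⟩ x
    exact (hS G B hB x).differentiableAt
  · rintro G _ _ _ ⟨B, hB, rfl⟩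
    refine ⟨fun p => (fderiv ℝ B p).comp ((ContinuousLinearMap.id ℝ E).prod (A p)), ?_,
      funext fun x => (hS G B hB x).fderiv⟩
    refine (ContinuousLinearMap.compL ℝ E (E × F) G).bilinear_hasTemperateGrowth
      (hasTemperateGrowth_fderiv hB) ?_
    have hprod : (fun p => ContinuousLinearMap.inl ℝ E F +
        ContinuousLinearMap.compL ℝ E F (E × F) (ContinuousLinearMap.inr ℝ E F) (A p)
        ).HasTemperateGrowth :=
      .add (.const _) (ContinuousLinearMap.hasTemperateGrowth _ |>.comp hA)
    convert hprod using 2 with p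
    ext v <;> simp
  · rintro G _ _ _ ⟨B, hB, rfl⟩
    obtain ⟨l, D, hD, h⟩ := exists_norm_le_of_hasTemperateGrowth hB
    refine ⟨(k + 1) * l, D * (1 + |C|) ^ l, fun x => (h _).trans ?_⟩
    have hx : 1 + ‖(x, f x)‖ ≤ (1 + |C|) * (1 + ‖x‖) ^ (k + 1) := by
      have hpow : 1 ≤ (1 + ‖x‖) ^ k := one_le_pow₀ (by simp)
      have hx : ‖x‖ ≤ ‖x‖ * (1 + ‖x‖) ^ k := le_mul_of_one_le_right (norm_nonneg x) hpow
      have hfx : ‖f x‖ ≤ |C| * (1 + ‖x‖) ^ k := (hC x).trans (by gcongr; exact le_abs_self C)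
      calc 1 + ‖(x, f x)‖ ≤ 1 + (‖x‖ + ‖f x‖) := by
            gcongr; exact max_le_add_of_nonneg (norm_nonneg _) (norm_nonneg _)
        _ ≤ (1 + ‖x‖) ^ k + (‖x‖ * (1 + ‖x‖) ^ k + |C| * (1 + ‖x‖) ^ k) := by gcongr
        _ ≤ (1 + ‖x‖) ^ k + (‖x‖ * (1 + ‖x‖) ^ k + |C| * (1 + ‖x‖) ^ k) +
            |C| * (‖x‖ * (1 + ‖x‖) ^ k) := le_add_of_nonneg_right (by positivity)
        _ = (1 + |C|) * (1 + ‖x‖) ^ (k + 1) := by ring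
    calc D * (1 + ‖(x, f x)‖) ^ l ≤ D * ((1 + |C|) * (1 + ‖x‖) ^ (k + 1)) ^ l := by gcongr
      _ = D * (1 + |C|) ^ l * (1 + ‖x‖) ^ ((k + 1) * l) := by rw [mul_pow, pow_mul]; ring

end PolynomialODE

theorem hasTemperateGrowth_cexp {E : Type} [NormedAddCommGroup E] [NormedSpace ℝ E] {f : E → ℂ}
    {b : ℝ} (hf : f.HasTemperateGrowth) (hb : ∀ x, (f x).re ≤ b) :
    (fun x => Complex.exp (f x)).HasTemperateGrowth := by
  have hA : (fun p : E × ℂ => p.2 • fderiv ℝ f p.1).HasTemperateGrowth :=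
    hasTemperateGrowth_snd.smul ((hasTemperateGrowth_fderiv hf).comp hasTemperateGrowth_fst)
  refine hasTemperateGrowth_of_hasFDerivAt hA (k := 0) (C := Real.exp b)
    (fun x => (hf.1.differentiable (by simp) x).hasFDerivAt.cexp) fun x => ?_
  simpa [Complex.norm_exp] using hb x

theorem hasTemperateGrowth_inv {E : Type} [NormedAddCommGroup E] [NormedSpace ℝ E] {f : E → ℝ}
    {ε : ℝ} (hε : 0 < ε) (hf : f.HasTemperateGrowth) (h : ∀ x, ε ≤ f x) :
    (fun x => (f x)⁻¹).HasTemperateGrowth := by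
  have hA : (fun p : E × ℝ => -p.2 ^ 2 • fderiv ℝ f p.1).HasTemperateGrowth :=
    (hasTemperateGrowth_snd.pow 2).neg.smul
      ((hasTemperateGrowth_fderiv hf).comp hasTemperateGrowth_fst)
  refine hasTemperateGrowth_of_hasFDerivAt hA (k := 0) (C := ε⁻¹) (fun x => ?_) fun x => ?_
  · have hinv := (hasDerivAt_inv (hε.trans_le (h x)).ne').comp_hasFDerivAt x
      (hf.1.differentiable (by simp) x).hasFDerivAt
    rwa [← inv_pow] at hinv
  · simpa [abs_of_pos (hε.trans_le (h x))] using inv_anti₀ hε (h x)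

section Integral

theorem norm_kernel_apply_le {E Y W G : Type*} [NormedAddCommGroup E] [NormedAddCommGroup Y]
    [NormedAddCommGroup W] [NormedSpace ℝ W] [NormedAddCommGroup G]
    [NormedSpace ℝ G] {φ : Y → W} {K : E × Y → W →L[ℝ] G} {k : ℕ} {C : ℝ} (hC : 0 ≤ C)
    (hK : ∀ p, ‖K p‖ ≤ C * (1 + ‖p‖) ^ k)
    (x : E) (y : Y) : ‖K (x, y) (φ y)‖ ≤ C * (1 + ‖x‖) ^ k * ‖(1 + ‖y‖) ^ k • φ y‖ := by
  have hxy : 1 + ‖(x, y)‖ ≤ (1 + ‖x‖) * (1 + ‖y‖) := by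
    have hmax : ‖(x, y)‖ ≤ ‖x‖ + ‖y‖ := max_le_add_of_nonneg (norm_nonneg _) (norm_nonneg _)
    nlinarith [mul_nonneg (norm_nonneg x) (norm_nonneg y)]
  calc ‖K (x, y) (φ y)‖ ≤ C * ((1 + ‖x‖) * (1 + ‖y‖)) ^ k * ‖φ y‖ := by
        refine ((K (x, y)).le_opNorm _).trans ?_
        grw [hK, hxy]
    _ = _ := by
      rw [norm_smul, norm_pow, Real.norm_of_nonneg (by positivity : 0 ≤ 1 + ‖y‖), mul_pow]
      ring

variable {Y W : Type u} [NormedAddCommGroup Y] [NormedSpace ℝ Y]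
  [NormedAddCommGroup W] [NormedSpace ℝ W]

/-- The kernel obtained from `K` by differentiating `x ↦ K (x, y) w` under the integral sign, again
as a linear function of the weight `w`. -/
def fderivKernel (K : E × Y → W →L[ℝ] G) (p : E × Y) : W →L[ℝ] E →L[ℝ] G :=
  ((fderiv ℝ K p).comp (ContinuousLinearMap.inl ℝ E Y)).flip

variable {φ : Y → W} {K : E × Y → W →L[ℝ] G}

theorem hasTemperateGrowth_comp_const {D E F G : Type*} [NormedAddCommGroup D] [NormedSpace ℝ D]
    [NormedAddCommGroup E] [NormedSpace ℝ E] [NormedAddCommGroup F] [NormedSpace ℝ F]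
    [NormedAddCommGroup G] [NormedSpace ℝ G] {A : D → F →L[ℝ] G} (hA : A.HasTemperateGrowth)
    (L : E →L[ℝ] F) : (fun p => (A p).comp L).HasTemperateGrowth :=
  (ContinuousLinearMap.compL ℝ E F G).bilinear_hasTemperateGrowth hA (.const L)

theorem hasTemperateGrowth_fderivKernel (hK : K.HasTemperateGrowth) :
    (fderivKernel K).HasTemperateGrowth := by
  have hcomp : (fun p => (fderiv ℝ K p).comp (ContinuousLinearMap.inl ℝ E Y)).HasTemperateGrowth :=
    hasTemperateGrowth_comp_const (hasTemperateGrowth_fderiv hK) _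
  exact (ContinuousLinearEquiv.hasTemperateGrowth (F := W →L[ℝ] E →L[ℝ] G)
    (ContinuousLinearMap.flipₗᵢ ℝ E W G).toContinuousLinearEquiv).comp hcomp

variable [MeasurableSpace Y] [OpensMeasurableSpace Y] [SecondCountableTopology Y]
  {μ : Measure Y}

theorem aestronglyMeasurable_kernel_apply {G : Type*} [NormedAddCommGroup G] [NormedSpace ℝ G]
    {K : E × Y → W →L[ℝ] G} (hφ : AEStronglyMeasurable φ μ) (hK : K.HasTemperateGrowth) (x : E) :
    AEStronglyMeasurable (fun y => K (x, y) (φ y)) μ :=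
  (ContinuousLinearMap.apply ℝ G).flip.aestronglyMeasurable_comp₂
    (hK.1.continuous.comp (by fun_prop)).aestronglyMeasurable hφ

theorem integrable_kernel_apply (hφ : ∀ k : ℕ, Integrable (fun y => (1 + ‖y‖) ^ k • φ y) μ)
    (hK : K.HasTemperateGrowth) (x : E) : Integrable (fun y => K (x, y) (φ y)) μ := by
  obtain ⟨k, C, hC, h⟩ := exists_norm_le_of_hasTemperateGrowth hK
  refine ((hφ k).norm.const_mul _).mono' (aestronglyMeasurable_kernel_apply ?_ hK x)
    (.of_forall (norm_kernel_apply_le hC h x))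
  simpa using (hφ 0).aestronglyMeasurable

theorem hasFDerivAt_integral_of_hasTemperateGrowth
    (hφ : ∀ k : ℕ, Integrable (fun y => (1 + ‖y‖) ^ k • φ y) μ) (hK : K.HasTemperateGrowth)
    (x : E) : HasFDerivAt (fun x => ∫ y, K (x, y) (φ y) ∂μ)
      (∫ y, fderivKernel K (x, y) (φ y) ∂μ) x := by
  have hφ_meas : AEStronglyMeasurable φ μ := by simpa using (hφ 0).aestronglyMeasurable
  have hK' := hasTemperateGrowth_fderivKernel hK
  obtain ⟨l, B, hB, h'⟩ := exists_norm_le_of_hasTemperateGrowth hK'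
  refine hasFDerivAt_integral_of_dominated_of_fderiv_le (F := fun x y => K (x, y) (φ y))
    (F' := fun x y => fderivKernel K (x, y) (φ y)) (Metric.ball_mem_nhds x one_pos)
    (.of_forall fun x => aestronglyMeasurable_kernel_apply hφ_meas hK x)
    (integrable_kernel_apply hφ hK x) (aestronglyMeasurable_kernel_apply hφ_meas hK' x)
    (bound := fun y => B * (2 + ‖x‖) ^ l * ‖(1 + ‖y‖) ^ l • φ y‖) (.of_forall fun y z hz => ?_)
    ((hφ l).norm.const_mul _) (.of_forall fun y z _ => ?_)
  · refine (norm_kernel_apply_le hB h' z y).trans ?_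
    have hz' : 1 + ‖z‖ ≤ 2 + ‖x‖ := by linarith [norm_lt_of_mem_ball hz]
    gcongr
  · have hKz : HasFDerivAt (fun z => K (z, y)) _ z :=
      (hK.1.differentiable (by simp) (z, y)).hasFDerivAt.comp z (hasFDerivAt_prodMk_left z y)
    convert hKz.clm_apply (hasFDerivAt_const (φ y) z) using 1
    ext v
    simp [fderivKernel]

theorem hasTemperateGrowth_integral
    (hφ : ∀ k : ℕ, Integrable (fun y => (1 + ‖y‖) ^ k • φ y) μ) (hK : K.HasTemperateGrowth) :
    (fun x => ∫ y, K (x, y) (φ y) ∂μ).HasTemperateGrowth := by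
  let S : ∀ (G : Type u) [NormedAddCommGroup G] [NormedSpace ℝ G], (E → G) → Prop :=
    fun G _ _ g => ∃ K : E × Y → W →L[ℝ] G, K.HasTemperateGrowth ∧
      g = fun x => ∫ y, K (x, y) (φ y) ∂μ
  refine hasTemperateGrowth_of_fderiv_mem (S := S) ?_ ?_ ?_ ⟨K, hK, rfl⟩
  · rintro G _ _ _ ⟨K, hK, rfl⟩ x
    exact (hasFDerivAt_integral_of_hasTemperateGrowth hφ hK x).differentiableAt
  · rintro G _ _ _ ⟨K, hK, rfl⟩
    exact ⟨fderivKernel K, hasTemperateGrowth_fderivKernel hK,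
      funext fun x => (hasFDerivAt_integral_of_hasTemperateGrowth hφ hK x).fderiv⟩
  · rintro G _ _ _ ⟨K, hK, rfl⟩
    obtain ⟨k, C, hC, h⟩ := exists_norm_le_of_hasTemperateGrowth hK
    refine ⟨k, C * ∫ y, ‖(1 + ‖y‖) ^ k • φ y‖ ∂μ, fun x => ?_⟩
    calc _ ≤ ∫ y, C * (1 + ‖x‖) ^ k * ‖(1 + ‖y‖) ^ k • φ y‖ ∂μ :=
          norm_integral_le_of_norm_le ((hφ k).norm.const_mul _)
            (.of_forall (norm_kernel_apply_le hC h x))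
      _ = _ := by rw [integral_const_mul]; ring

end Integral

end TemperateGrowth

/-- Evaluation at `z` of the monic polynomial `z ^ n + a (n - 1) z ^ (n - 1) + ⋯ + a 0`. -/
def monicEval {R : Type*} [CommRing R] {n : ℕ} (a : Fin n → R) (z : R) : R :=
  z ^ n + ∑ j, a j * z ^ (j : ℕ)

/-- The coefficient of `t ^ j` in the polynomial `(z ^ m - t ^ m) / (z - t)`. -/
def powQuotCoeff {R : Type*} [CommRing R] (m : ℕ) (z : R) (j : ℕ) : R :=
  if j < m then z ^ (m - 1 - j) else 0

/-- The coefficient of `t ^ j` in the divided difference `(p z - p t) / (z - t)` of the monic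
polynomial `p` with lower coefficients `a`. -/
def dividedDiffCoeff {R : Type*} [CommRing R] {n : ℕ} (a : Fin n → R) (z : R) (j : ℕ) : R :=
  powQuotCoeff n z j + ∑ i : Fin n, a i * powQuotCoeff i z j

section MonicPolynomial

variable {n : ℕ}

theorem monicEval_eq_eval {R : Type*} [CommRing R] (a : Fin n → R) (z : R) :
    monicEval a z =
      (Polynomial.X ^ n + ∑ j, Polynomial.C (a j) * Polynomial.X ^ (j : ℕ)).eval z := by
  simp [monicEval, Polynomial.eval_finsetSum]

theorem pow_sub_pow_eq_mul_sum {R : Type*} [CommRing R] {m : ℕ} (hm : m ≤ n) (z t : R) :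
    z ^ m - t ^ m = (z - t) * ∑ j : Fin n, powQuotCoeff m z j * t ^ (j : ℕ) := by
  have hsum : ∑ j : Fin n, powQuotCoeff m z j * t ^ (j : ℕ) =
      ∑ j ∈ Finset.range m, t ^ j * z ^ (m - 1 - j) := by
    rw [Fin.sum_univ_eq_sum_range (fun j => powQuotCoeff m z j * t ^ j),
      ← Finset.sum_subset (Finset.range_mono hm)]
    · refine Finset.sum_congr rfl fun j hj => ?_
      rw [powQuotCoeff, if_pos (Finset.mem_range.1 hj), mul_comm]
    · intro j _ hj
      rw [powQuotCoeff, if_neg (by simpa using hj), zero_mul]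
  rw [hsum, ← neg_sub t z, neg_mul, mul_comm, (Commute.all t z).geom_sum₂_mul, neg_sub]

theorem monicEval_sub_monicEval {R : Type*} [CommRing R] (a : Fin n → R) (z t : R) :
    monicEval a z - monicEval a t =
      (z - t) * ∑ j : Fin n, dividedDiffCoeff a z j * t ^ (j : ℕ) := by
  have hsum : ∑ j : Fin n, dividedDiffCoeff a z j * t ^ (j : ℕ) =
      (∑ j : Fin n, powQuotCoeff n z j * t ^ (j : ℕ)) +
        ∑ i : Fin n, a i * ∑ j : Fin n, powQuotCoeff i z j * t ^ (j : ℕ) := by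
    simp only [dividedDiffCoeff, add_mul, Finset.sum_add_distrib, Finset.sum_mul, Finset.mul_sum,
      mul_assoc]
    rw [Finset.sum_comm]
  rw [hsum, mul_add, ← pow_sub_pow_eq_mul_sum le_rfl, Finset.mul_sum]
  simp only [mul_left_comm (z - t), ← pow_sub_pow_eq_mul_sum (Fin.is_le'), mul_sub,
    Finset.sum_sub_distrib, monicEval]
  ring

open Polynomial in
theorem exists_monicEval_eq_prod (a : Fin n → ℂ) :
    ∃ r : Fin n → ℂ, ∀ z, monicEval a z = ∏ j, (z - r j) := by
  set q : ℂ[X] := ∑ j : Fin n, C (a j) * X ^ (j : ℕ)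
  have hdeg : q.degree < (n : WithBot ℕ) := by
    simpa only [Polynomial.mem_degreeLT] using Submodule.sum_mem (degreeLT ℂ n) fun j _ =>
      mem_degreeLT.2 ((degree_C_mul_X_pow_le _ (a j)).trans_lt (by exact_mod_cast j.2))
  have hsplits : (X ^ n + q).Splits := IsAlgClosed.splits _
  have hcard : (X ^ n + q).roots.toList.length = n := by
    rw [Multiset.length_toList, ← hsplits.natDegree_eq_card_roots]
    exact natDegree_eq_of_degree_eq_some
      (by rw [degree_add_eq_left_of_degree_lt] <;> simp [hdeg])
  refine ⟨fun j : Fin n => (X ^ n + q).roots.toList.get (j.cast hcard.symm), fun z => ?_⟩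
  calc monicEval a z = ((X ^ n + q).roots.map (z - ·)).prod := by
        rw [monicEval_eq_eval, hsplits.eval_eq_prod_roots_of_monic (monic_X_pow_add hdeg)]
    _ = ((X ^ n + q).roots.toList.map (z - ·)).prod := by
        rw [← Multiset.prod_coe, ← Multiset.map_coe, Multiset.coe_toList]
    _ = _ := by
        rw [← Fin.prod_univ_getElem]
        exact Fintype.prod_equiv (finCongr (by simp [hcard])) _ _ fun j => by simp

theorem exists_forall_le_abs_sub (ρ : Fin n → ℝ) :
    ∃ i : Fin (n + 1), ∀ j, 1 / (2 * (n + 1 : ℝ)) ≤ |1 + (i : ℝ) / (n + 1) - ρ j| := by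
  by_contra! h
  choose j hj using h
  obtain ⟨i, i', hne, heq⟩ := Fintype.exists_ne_map_eq_of_card_lt j (by simp)
  have hi := hj i
  rw [heq] at hi
  have hdist : |(i : ℝ) / (n + 1) - (i' : ℝ) / (n + 1)| < 1 / (n + 1 : ℝ) := by
    have hi' := hj i'
    have hhalf : (1 : ℝ) / (n + 1) = 1 / (2 * (n + 1)) + 1 / (2 * (n + 1)) := by
      field_simp
      norm_num
    rw [abs_lt] at hi hi' ⊢
    constructor <;> linarith [hi.1, hi.2, hi'.1, hi'.2]
  rw [← sub_div, abs_div, abs_of_pos (by positivity : (0 : ℝ) < n + 1),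
    div_lt_div_iff_of_pos_right (by positivity)] at hdist
  have hint : |((i : ℕ) : ℤ) - ((i' : ℕ) : ℤ)| < 1 := by exact_mod_cast hdist
  rw [Int.abs_lt_one_iff] at hint
  exact hne (Fin.ext (by omega))

theorem exists_circle_le_norm_monicEval (a : Fin n → ℂ) (w : ℂ) (M : ℝ) :
    ∃ i : Fin (n + 1), ∀ z, ‖z - w‖ = M + (1 + (i : ℝ) / (n + 1)) →
      (1 / (2 * (n + 1 : ℝ))) ^ n ≤ ‖monicEval a z‖ := by
  obtain ⟨r, hr⟩ := exists_monicEval_eq_prod a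
  obtain ⟨i, hi⟩ := exists_forall_le_abs_sub fun j => ‖r j - w‖ - M
  refine ⟨i, fun z hz => ?_⟩
  have hroot (j : Fin n) : 1 / (2 * (n + 1 : ℝ)) ≤ ‖z - r j‖ :=
    calc 1 / (2 * (n + 1 : ℝ)) ≤ |1 + (i : ℝ) / (n + 1) - (‖r j - w‖ - M)| := hi j
      _ = |‖z - w‖ - ‖r j - w‖| := by rw [hz]; ring_nf
      _ ≤ ‖z - r j‖ := by simpa using abs_norm_sub_norm_le (z - w) (r j - w)
  calc (1 / (2 * (n + 1 : ℝ))) ^ n = ∏ _j : Fin n, 1 / (2 * (n + 1 : ℝ)) := by simp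
    _ ≤ ∏ j, ‖z - r j‖ := Finset.prod_le_prod (fun _ _ => by positivity) fun j _ => hroot j
    _ = ‖monicEval a z‖ := by rw [hr, norm_prod]

@[fun_prop]
theorem hasTemperateGrowth_monicEval {E R : Type*} [NormedAddCommGroup E] [NormedSpace ℝ E]
    [NormedCommRing R] [NormedAlgebra ℝ R] {a : E → Fin n → R} {z : E → R}
    (ha : ∀ j, (fun x => a x j).HasTemperateGrowth) (hz : z.HasTemperateGrowth) :
    (fun x => monicEval (a x) (z x)).HasTemperateGrowth :=
  (hz.pow n).add (.sum fun j _ => (ha j).mul (hz.pow j))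

@[fun_prop]
theorem hasTemperateGrowth_dividedDiffCoeff {E R : Type*} [NormedAddCommGroup E] [NormedSpace ℝ E]
    [NormedCommRing R] [NormedAlgebra ℝ R] {a : E → Fin n → R} {z : E → R} (j : ℕ)
    (ha : ∀ j, (fun x => a x j).HasTemperateGrowth) (hz : z.HasTemperateGrowth) :
    (fun x => dividedDiffCoeff (a x) (z x) j).HasTemperateGrowth := by
  have hquot (m : ℕ) : (fun x => powQuotCoeff m (z x) j).HasTemperateGrowth := by
    unfold powQuotCoeff
    split_ifs
    exacts [hz.pow _, .zero]
  exact (hquot n).add (.sum fun i _ => (ha i).mul (hquot i))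

end MonicPolynomial

section ContourIntegral

open MeasureTheory ComplexConjugate

theorem hasTemperateGrowth_ofReal_comp {E : Type*} [NormedAddCommGroup E] [NormedSpace ℝ E]
    {f : E → ℝ} (hf : f.HasTemperateGrowth) : (fun x => (f x : ℂ)).HasTemperateGrowth :=
  Complex.ofRealCLM.hasTemperateGrowth.comp hf

theorem hasTemperateGrowth_contDiffBump {V : Type*} [NormedAddCommGroup V] [NormedSpace ℝ V]
    [HasContDiffBump V] [FiniteDimensional ℝ V] {c : V} (β : ContDiffBump c) :
    (fun v => β v).HasTemperateGrowth :=
  β.hasCompactSupport.hasTemperateGrowth β.contDiff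

theorem exists_hasTemperateGrowth_eq_inv {δ : ℝ} (hδ : 0 < δ) :
    ∃ φ : ℂ → ℂ, φ.HasTemperateGrowth ∧ ∀ w, δ ≤ ‖w‖ → φ w = w⁻¹ := by
  let β : ContDiffBump (0 : ℂ) := ⟨δ / 2, δ, by positivity, by linarith⟩
  have hnormSq : (fun w => Complex.normSq w).HasTemperateGrowth :=
    .add (Complex.reCLM.hasTemperateGrowth.mul Complex.reCLM.hasTemperateGrowth)
      (Complex.imCLM.hasTemperateGrowth.mul Complex.imCLM.hasTemperateGrowth)
  have hpos (w : ℂ) : min 1 ((δ / 2) ^ 2) ≤ Complex.normSq w + β w := by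
    rcases le_total ‖w‖ (δ / 2) with hw | hw
    · rw [β.one_of_mem_closedBall (by simpa using hw)]
      exact (min_le_left _ _).trans (by linarith [Complex.normSq_nonneg w])
    · rw [Complex.normSq_eq_norm_sq]
      exact (min_le_right _ _).trans (le_add_of_le_of_nonneg (by gcongr) β.nonneg)
  refine ⟨fun w => conj w * ((Complex.normSq w + β w)⁻¹ : ℝ),
    (Complex.conjCLE.toContinuousLinearMap.hasTemperateGrowth).mul
      (hasTemperateGrowth_ofReal_comp (hasTemperateGrowth_inv (by positivity)
        (hnormSq.add (hasTemperateGrowth_contDiffBump β)) hpos)), fun w hw => ?_⟩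
  simp only [β.zero_of_le_dist (by simpa using hw), add_zero, Complex.inv_def]

theorem hasTemperateGrowth_intervalIntegral {E G : Type} [NormedAddCommGroup E] [NormedSpace ℝ E]
    [NormedAddCommGroup G] [NormedSpace ℝ G] {K : E × ℝ → G}
    (hK : K.HasTemperateGrowth) (a b : ℝ) :
    (fun x => ∫ θ in a..b, K (x, θ)).HasTemperateGrowth := by
  have hset (c d : ℝ) : (fun x => ∫ θ in Set.Ioc c d, K (x, θ)).HasTemperateGrowth := by
    have hint (k : ℕ) : Integrable (fun y : ℝ => (1 + ‖y‖) ^ k • (1 : ℝ))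
        (volume.restrict (Set.Ioc c d)) :=
      Continuous.integrableOn_Ioc (by fun_prop)
    have hsmul : (fun p => ContinuousLinearMap.smulRightL ℝ ℝ G 1 (K p)).HasTemperateGrowth :=
      (ContinuousLinearMap.hasTemperateGrowth (F := ℝ →L[ℝ] G) _).comp hK
    simpa using hasTemperateGrowth_integral hint hsmul
  exact (hset a b).sub (hset b a)

end ContourIntegral

section PartitionOfUnity

theorem sq_le_sq_add_integral_sq_add_sq {g g' : ℝ → ℝ} (hg : ∀ θ, HasDerivAt g (g' θ) θ)
    (hg' : Continuous g') {a b θ θ₀ : ℝ} (hθ : θ ∈ Set.Icc a b) (hθ₀ : θ₀ ∈ Set.Icc a b) :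
    g θ₀ ^ 2 ≤ g θ ^ 2 + ∫ s in a..b, (g s ^ 2 + g' s ^ 2) := by
  have hcont : Continuous g := continuous_iff_continuousAt.2 fun θ => (hg θ).continuousAt
  have hftc : ∫ s in θ..θ₀, 2 * g s * g' s = g θ₀ ^ 2 - g θ ^ 2 :=
    intervalIntegral.integral_eq_sub_of_hasDerivAt
      (fun s _ => by simpa using (hg s).fun_pow 2)
      (Continuous.intervalIntegrable (by fun_prop) _ _)
  have hbound : |∫ s in θ..θ₀, 2 * g s * g' s| ≤ ∫ s in a..b, (g s ^ 2 + g' s ^ 2) := by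
    rw [← Real.norm_eq_abs, intervalIntegral.integral_of_le (hθ.1.trans hθ.2)]
    refine intervalIntegral.norm_integral_le_integral_norm_uIoc.trans ?_
    have hsub : Set.uIoc θ θ₀ ⊆ Set.Ioc a b :=
      Set.Ioc_subset_Ioc (le_min hθ.1 hθ₀.1) (max_le hθ.2 hθ₀.2)
    refine (MeasureTheory.integral_mono ?_ ?_ fun s => ?_).trans
      (MeasureTheory.setIntegral_mono_set ?_ (.of_forall fun s => by positivity)
        hsub.eventuallyLE)
    · exact Continuous.integrableOn_uIoc (by fun_prop)
    · exact Continuous.integrableOn_uIoc (by fun_prop)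
    · rw [Real.norm_eq_abs, abs_le]
      constructor <;> nlinarith [sq_nonneg (g s + g' s), sq_nonneg (g s - g' s)]
    · exact Continuous.integrableOn_Ioc (by fun_prop)
  linarith [le_abs_self (∫ s in θ..θ₀, 2 * g s * g' s)]

theorem mul_sq_le_integral_sq_add_sq {g g' : ℝ → ℝ} (hg : ∀ θ, HasDerivAt g (g' θ) θ)
    (hg' : Continuous g') {a b θ₀ : ℝ} (hθ₀ : θ₀ ∈ Set.Icc a b) :
    (b - a) * g θ₀ ^ 2 ≤ (1 + (b - a)) * ∫ θ in a..b, (g θ ^ 2 + g' θ ^ 2) := by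
  have hab : a ≤ b := hθ₀.1.trans hθ₀.2
  have hcont : Continuous g := continuous_iff_continuousAt.2 fun θ => (hg θ).continuousAt
  set S := ∫ θ in a..b, (g θ ^ 2 + g' θ ^ 2)
  have hint {f : ℝ → ℝ} (hf : Continuous f) : IntervalIntegrable f MeasureTheory.volume a b :=
    hf.intervalIntegrable a b
  calc (b - a) * g θ₀ ^ 2 = ∫ _ in a..b, g θ₀ ^ 2 := by simp
    _ ≤ ∫ θ in a..b, (g θ ^ 2 + S) :=
      intervalIntegral.integral_mono_on hab (hint continuous_const) (hint (by fun_prop))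
        fun θ hθ => sq_le_sq_add_integral_sq_add_sq hg hg' hθ hθ₀
    _ = (∫ θ in a..b, g θ ^ 2) + (b - a) * S := by
      rw [intervalIntegral.integral_add (hint (by fun_prop)) (hint continuous_const)]
      simp
    _ ≤ S + (b - a) * S := by
      gcongr
      exact intervalIntegral.integral_mono_on hab (hint (by fun_prop)) (hint (by fun_prop))
        fun θ _ => le_add_of_nonneg_right (sq_nonneg _)
    _ = (1 + (b - a)) * S := by ring

variable {E : Type} [NormedAddCommGroup E] [NormedSpace ℝ E]

-- The cutoff is a function of the Sobolev energy in `θ` of a bump of `P`, which bounds the bump.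
theorem exists_hasTemperateGrowth_cutoff {P : E × ℝ → ℂ} (hP : P.HasTemperateGrowth) {δ : ℝ}
    (hδ : 0 < δ) {a b : ℝ} (hab : a < b) :
    ∃ ω : E → ℝ, ω.HasTemperateGrowth ∧ (∀ x, 0 ≤ ω x) ∧
      (∀ x, (∀ θ, δ ≤ ‖P (x, θ)‖) → ω x = 1) ∧
      ∀ x, ω x ≠ 0 → ∀ θ ∈ Set.Icc a b, δ / 2 ≤ ‖P (x, θ)‖ := by
  let β : ContDiffBump (0 : ℂ) := ⟨δ / 2, δ, by positivity, by linarith⟩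
  have : 0 < b - a := sub_pos.2 hab
  let ψ : ContDiffBump (0 : ℝ) :=
    ⟨(b - a) / (1 + (b - a)) / 2, (b - a) / (1 + (b - a)), by positivity,
      half_lt_self (by positivity)⟩
  let h (p : E × ℝ) : ℝ := β (P p)
  have hh : h.HasTemperateGrowth := (hasTemperateGrowth_contDiffBump β).comp hP
  let h' (p : E × ℝ) : ℝ := fderiv ℝ h p (0, 1)
  have hh' : h'.HasTemperateGrowth :=
    (ContinuousLinearMap.apply ℝ ℝ ((0, 1) : E × ℝ)).hasTemperateGrowth.comp
      (hasTemperateGrowth_fderiv hh)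
  let S (x : E) : ℝ := ∫ θ in a..b, (h (x, θ) ^ 2 + h' (x, θ) ^ 2)
  refine ⟨fun x => ψ (S x), (hasTemperateGrowth_contDiffBump ψ).comp
    (hasTemperateGrowth_intervalIntegral ((hh.pow 2).add (hh'.pow 2)) a b), fun x => ψ.nonneg,
    fun x hx => ?_, fun x hx θ hθ => ?_⟩
  · have hzero (θ : ℝ) : h (x, θ) = 0 := β.zero_of_le_dist (by simpa using hx θ)
    have hzero' (θ : ℝ) : h' (x, θ) = 0 := by
      have hmin : IsLocalMin h (x, θ) := .of_forall fun p => (hzero θ).trans_le β.nonneg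
      simp [h', hmin.fderiv_eq_zero]
    have hS : S x = 0 := by simp [S, hzero, hzero']
    simp only [hS]
    exact ψ.one_of_mem_closedBall (Metric.mem_closedBall_self ψ.rIn_pos.le)
  · by_contra! hsmall
    have hone : h (x, θ) = 1 := β.one_of_mem_closedBall (by simpa using hsmall.le)
    have hsobolev : (b - a) * h (x, θ) ^ 2 ≤ (1 + (b - a)) * S x :=
      mul_sq_le_integral_sq_add_sq (g := fun θ => h (x, θ)) (g' := fun θ => h' (x, θ))
        (fun s => (hh.1.differentiable (by simp) (x, s)).hasFDerivAt.comp_hasDerivAt s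
          ((hasDerivAt_const s x).prodMk (hasDerivAt_id s)))
        (hh'.1.continuous.comp (by fun_prop)) hθ
    refine hx (ψ.zero_of_le_dist ?_)
    rw [hone, one_pow, mul_one, ← div_le_iff₀' (by positivity)] at hsobolev
    rw [Real.dist_0_eq_abs]
    exact hsobolev.trans (le_abs_self _)

theorem exists_hasTemperateGrowth_partition {ι : Type*} [Fintype ι] {P : ι → E × ℝ → ℂ}
    (hP : ∀ i, (P i).HasTemperateGrowth) {δ : ℝ} (hδ : 0 < δ) {a b : ℝ} (hab : a < b)
    (hcover : ∀ x, ∃ i, ∀ θ, δ ≤ ‖P i (x, θ)‖) :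
    ∃ χ : ι → E → ℝ, (∀ i, (χ i).HasTemperateGrowth) ∧ (∀ x, ∑ i, χ i x = 1) ∧
      ∀ i x, χ i x ≠ 0 → ∀ θ ∈ Set.Icc a b, δ / 2 ≤ ‖P i (x, θ)‖ := by
  choose ω hω hnonneg hone hsupp using fun i => exists_hasTemperateGrowth_cutoff (hP i) hδ hab
  have hsum (x : E) : 1 ≤ ∑ i, ω i x := by
    obtain ⟨i, hi⟩ := hcover x
    rw [← hone i x hi]
    exact Finset.single_le_sum (fun j _ => hnonneg j x) (Finset.mem_univ i)
  refine ⟨fun i x => ω i x * (∑ j, ω j x)⁻¹, fun i => (hω i).mul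
    (hasTemperateGrowth_inv one_pos (.sum fun j _ => hω j) hsum), fun x => ?_,
    fun i x hx => hsupp i x (left_ne_zero_of_mul hx)⟩
  rw [← Finset.sum_mul, mul_inv_cancel₀ (one_pos.trans_le (hsum x)).ne']

end PartitionOfUnity

section ExponentialDivision

open Complex Metric

theorem inv_sub_mul_eq_monicEval_mul_add {K : Type*} [Field K] {n : ℕ} {a : Fin n → K} {z t : K}
    (ha : monicEval a z ≠ 0) (hzt : z - t ≠ 0) (y : K) :
    (z - t)⁻¹ * y = monicEval a t * ((monicEval a z)⁻¹ * (z - t)⁻¹ * y) +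
      ∑ j : Fin n, t ^ (j : ℕ) * ((monicEval a z)⁻¹ * dividedDiffCoeff a z j * y) := by
  have hsum : ∑ j : Fin n, t ^ (j : ℕ) * ((monicEval a z)⁻¹ * dividedDiffCoeff a z j * y) =
      (monicEval a z)⁻¹ * y * ∑ j : Fin n, dividedDiffCoeff a z j * t ^ (j : ℕ) := by
    rw [Finset.mul_sum]
    exact Finset.sum_congr rfl fun j _ => by ring
  rw [hsum, ← mul_right_inj' hzt]
  field_simp
  linear_combination y * monicEval_sub_monicEval a z t

theorem eq_monicEval_mul_circleIntegral_add {n : ℕ} {f : ℂ → ℂ} (hf : Differentiable ℂ f)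
    {a : Fin n → ℂ} {w t : ℂ} {r : ℝ} (ht : t ∈ ball w r)
    (ha : ∀ z ∈ sphere w r, monicEval a z ≠ 0) :
    f t = monicEval a t *
        ((2 * Real.pi * I)⁻¹ * ∮ z in C(w, r), (monicEval a z)⁻¹ * (z - t)⁻¹ * f z) +
      ∑ j : Fin n, ((2 * Real.pi * I)⁻¹ *
        ∮ z in C(w, r), (monicEval a z)⁻¹ * dividedDiffCoeff a z j * f z) * t ^ (j : ℕ) := by
  have hr : 0 ≤ r := (dist_nonneg.trans_lt ht).le
  have hne (z : ℂ) (hz : z ∈ sphere w r) : z - t ≠ 0 :=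
    sub_ne_zero.2 fun h => (h ▸ hz : dist t w = r).not_lt ht
  have hf_cont : Continuous f := hf.continuous
  have hP : ContinuousOn (fun z => (monicEval a z)⁻¹) (sphere w r) :=
    ContinuousOn.inv₀ (by unfold monicEval; fun_prop) ha
  have : ContinuousOn (fun z => (z - t)⁻¹) (sphere w r) :=
    ContinuousOn.inv₀ (by fun_prop) hne
  have hK (j : ℕ) : Continuous fun z => dividedDiffCoeff a z j :=
    (hasTemperateGrowth_dividedDiffCoeff (a := fun _ => a) j (fun _ => .const _) .id).1.continuous
  have hintR (j : Fin n) : CircleIntegrable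
      (fun z => t ^ (j : ℕ) * ((monicEval a z)⁻¹ * dividedDiffCoeff a z j * f z)) w r :=
    ContinuousOn.circleIntegrable hr (by fun_prop)
  calc f t = (2 * Real.pi * I)⁻¹ * ∮ z in C(w, r), (z - t)⁻¹ * f z :=
        (hf.diffContOnCl.two_pi_i_inv_smul_circleIntegral_sub_inv_smul ht).symm
    _ = (2 * Real.pi * I)⁻¹ * ∮ z in C(w, r),
          (monicEval a t * ((monicEval a z)⁻¹ * (z - t)⁻¹ * f z) +
            ∑ j : Fin n, t ^ (j : ℕ) * ((monicEval a z)⁻¹ * dividedDiffCoeff a z j * f z)) := by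
      rw [circleIntegral.integral_congr hr fun z hz =>
        inv_sub_mul_eq_monicEval_mul_add (ha z hz) (hne z hz) (f z)]
    _ = _ := by
      rw [circleIntegral.integral_add (ContinuousOn.circleIntegrable hr (by fun_prop))
        (ContinuousOn.circleIntegrable hr (by fun_prop)),
        circleIntegral.integral_fun_sum fun j _ => hintR j]
      simp only [circleIntegral.integral_const_mul, mul_add, Finset.mul_sum]
      congr 1
      · ring
      · exact Finset.sum_congr rfl fun j _ => by ring

theorem hasTemperateGrowth_circleMap {E : Type} [NormedAddCommGroup E] [NormedSpace ℝ E]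
    {w : E → ℂ} {r θ : E → ℝ} (hw : w.HasTemperateGrowth) (hr : r.HasTemperateGrowth)
    (hθ : θ.HasTemperateGrowth) : (fun x => circleMap (w x) (r x) (θ x)).HasTemperateGrowth :=
  hw.add ((hasTemperateGrowth_ofReal_comp hr).mul (hasTemperateGrowth_cexp (b := 0)
    ((hasTemperateGrowth_ofReal_comp hθ).mul (.const I)) (by simp)))

theorem hasTemperateGrowth_circleIntegral {E : Type} [NormedAddCommGroup E] [NormedSpace ℝ E]
    {w : E → ℂ} {r : E → ℝ} {K : E → ℂ → ℂ}
    (hr : r.HasTemperateGrowth) (hK : (fun p : E × ℝ =>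
      K p.1 (circleMap (w p.1) (r p.1) p.2)).HasTemperateGrowth) :
    (fun x => ∮ z in C(w x, r x), K x z).HasTemperateGrowth := by
  simp only [circleIntegral, deriv_circleMap]
  refine hasTemperateGrowth_intervalIntegral
    (K := fun p => (circleMap 0 (r p.1) p.2 * I) • K p.1 (circleMap (w p.1) (r p.1) p.2))
    (.smul (.mul ?_ (.const I)) hK) _ _
  exact hasTemperateGrowth_circleMap (.const 0) (hr.comp hasTemperateGrowth_fst)
    hasTemperateGrowth_snd

theorem norm_sub_mul_I_le {M t : ℝ} (hM : 0 ≤ M) (ht : t ^ 2 ≤ M) :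
    ‖(t : ℂ) - M * I‖ ≤ M + 1 / 2 := by
  have hsq : ‖(t : ℂ) - M * I‖ ^ 2 = t ^ 2 + M ^ 2 := by
    rw [← normSq_eq_norm_sq, normSq_apply]
    simp only [sub_re, ofReal_re, mul_re, I_re, I_im, ofReal_im, sub_im, mul_im]
    ring
  exact abs_le_of_sq_le_sq' (by rw [hsq]; nlinarith) (by positivity) |>.2

theorem half_le_norm_sub_of_mem_sphere {M c t : ℝ} (hM : 0 ≤ M) (hc : 1 ≤ c) (ht : t ^ 2 ≤ M)
    {z : ℂ} (hz : z ∈ sphere (M * I) (M + c)) : 1 / 2 ≤ ‖z - t‖ := by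
  have htri := norm_sub_le_norm_sub_add_norm_sub z (t : ℂ) (M * I)
  rw [mem_sphere_iff_norm.1 hz] at htri
  linarith [norm_sub_mul_I_le hM ht]

theorem hasTemperateGrowth_cexp_I_mul_circleMap {E : Type} [NormedAddCommGroup E]
    [NormedSpace ℝ E] {M θ : E → ℝ} (hM : M.HasTemperateGrowth) (hθ : θ.HasTemperateGrowth)
    {c : ℝ} (hc : ∀ x, 0 ≤ M x + c) :
    (fun x => cexp (I * circleMap (M x * I) (M x + c : ℝ) (θ x))).HasTemperateGrowth := by
  refine hasTemperateGrowth_cexp (b := c) ((Function.HasTemperateGrowth.const I).mul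
    (hasTemperateGrowth_circleMap ((hasTemperateGrowth_ofReal_comp hM).mul (.const I))
      (hM.add (.const c)) hθ)) fun x => ?_
  have him : (circleMap (M x * I) (M x + c : ℝ) (θ x)).im =
      M x + (M x + c) * Real.sin (θ x) := by
    rw [circleMap, add_im, im_ofReal_mul, im_ofReal_mul, exp_ofReal_mul_I_im, I_im, mul_one]
  rw [I_mul_re, him]
  nlinarith [mul_nonneg (hc x) (neg_le_iff_add_nonneg.1 (Real.neg_one_le_sin (θ x)))]

section ParametricDivision

variable {E : Type} [NormedAddCommGroup E] [NormedSpace ℝ E] {M : E → ℝ} {n : ℕ}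
  {a : E → Fin n → ℂ}

theorem hasTemperateGrowth_circleIntegral_mul_cexp (hM : M.HasTemperateGrowth) {c : ℝ}
    (hc : ∀ x, 0 ≤ M x + c) {G : E × ℂ → ℂ} (hG : G.HasTemperateGrowth) :
    (fun x => (2 * Real.pi * I)⁻¹ *
      ∮ z in C(M x * I, M x + c), G (x, z) * cexp (I * z)).HasTemperateGrowth := by
  have hM' : (fun p : E × ℝ => M p.1).HasTemperateGrowth := hM.comp hasTemperateGrowth_fst
  have hz : (fun p : E × ℝ => circleMap (M p.1 * I) (M p.1 + c) p.2).HasTemperateGrowth :=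
    hasTemperateGrowth_circleMap ((hasTemperateGrowth_ofReal_comp hM').mul (.const I))
      (hM'.add (.const c)) hasTemperateGrowth_snd
  exact (Function.HasTemperateGrowth.const _).mul (hasTemperateGrowth_circleIntegral
    (w := fun x => M x * I) (K := fun x z => G (x, z) * cexp (I * z)) (hM.add (.const c))
    ((hG.comp (hasTemperateGrowth_prodMk hasTemperateGrowth_fst hz)).mul
      (hasTemperateGrowth_cexp_I_mul_circleMap hM' hasTemperateGrowth_snd fun p => hc p.1)))

-- The circle of centre `M I` and radius `M + c` reaches only `c` below the real axis, so
-- `exp (I z)` is bounded on it, but it encloses the real `t` with `t ^ 2 ≤ M`.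
theorem exists_cexp_eq_of_forall_le_norm (hM : M.HasTemperateGrowth) (hM_nonneg : ∀ x, 0 ≤ M x)
    (ha : ∀ j, (fun x => a x j).HasTemperateGrowth) {c η : ℝ} (hc : 1 ≤ c) (hη : 0 < η) :
    ∃ (Q : E × ℝ → ℂ) (R : Fin n → E → ℂ),
      Q.HasTemperateGrowth ∧ (∀ j, (R j).HasTemperateGrowth) ∧
      ∀ (x : E) (t : ℝ), t ^ 2 ≤ M x →
        (∀ z ∈ sphere (M x * I) (M x + c), η ≤ ‖monicEval (a x) z‖) →
        cexp (I * t) = monicEval (a x) (t : ℂ) * Q (x, t) + ∑ j, R j x * (t : ℂ) ^ (j : ℕ) := by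
  obtain ⟨φ, hφ, hφ_eq⟩ := exists_hasTemperateGrowth_eq_inv (lt_min hη one_half_pos)
  have hr (x : E) : 0 ≤ M x + c := by linarith [hM_nonneg x]
  refine ⟨fun p => (2 * Real.pi * I)⁻¹ * ∮ z in C(M p.1 * I, M p.1 + c),
      φ (monicEval (a p.1) z) * φ (z - p.2) * cexp (I * z),
    fun j x => (2 * Real.pi * I)⁻¹ * ∮ z in C(M x * I, M x + c),
      φ (monicEval (a x) z) * dividedDiffCoeff (a x) z j * cexp (I * z), ?_, fun j => ?_,
    fun x t ht hx => ?_⟩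
  · have hfst : (fun q : (E × ℝ) × ℂ => q.1.1).HasTemperateGrowth :=
      hasTemperateGrowth_fst.comp hasTemperateGrowth_fst
    exact hasTemperateGrowth_circleIntegral_mul_cexp
      (G := fun q : (E × ℝ) × ℂ => φ (monicEval (a q.1.1) q.2) * φ (q.2 - q.1.2))
      (hM.comp hasTemperateGrowth_fst) (fun p => hr p.1)
      ((hφ.comp (hasTemperateGrowth_monicEval (fun j => (ha j).comp hfst)
        hasTemperateGrowth_snd)).mul (hφ.comp (hasTemperateGrowth_snd.sub
          (hasTemperateGrowth_ofReal_comp (hasTemperateGrowth_snd.comp hasTemperateGrowth_fst)))))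
  · have ha' (j : Fin n) : (fun q : E × ℂ => a q.1 j).HasTemperateGrowth :=
      (ha j).comp hasTemperateGrowth_fst
    exact hasTemperateGrowth_circleIntegral_mul_cexp
      (G := fun q : E × ℂ => φ (monicEval (a q.1) q.2) * dividedDiffCoeff (a q.1) q.2 j) hM hr
      ((hφ.comp (hasTemperateGrowth_monicEval ha' hasTemperateGrowth_snd)).mul
        (hasTemperateGrowth_dividedDiffCoeff j ha' hasTemperateGrowth_snd))
  · have hφP {z : ℂ} (hz : z ∈ sphere (M x * I) (M x + c)) :
        φ (monicEval (a x) z) = (monicEval (a x) z)⁻¹ :=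
      hφ_eq _ ((min_le_left _ _).trans (hx z hz))
    have hφt {z : ℂ} (hz : z ∈ sphere (M x * I) (M x + c)) : φ (z - t) = (z - t)⁻¹ :=
      hφ_eq _ ((min_le_right _ _).trans (half_le_norm_sub_of_mem_sphere (hM_nonneg x) hc ht hz))
    have hdiv := eq_monicEval_mul_circleIntegral_add (f := fun z => cexp (I * z)) (a := a x)
      (w := M x * I) (t := t) (r := M x + c) (by fun_prop)
      (mem_ball_iff_norm.2 (by linarith [norm_sub_mul_I_le (hM_nonneg x) ht]))
      fun z hz => norm_pos_iff.1 (hη.trans_le (hx z hz))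
    rw [hdiv]
    congr 1
    · congr 2
      exact circleIntegral.integral_congr (hr x) fun z hz => by simp only [hφP hz, hφt hz]
    · refine Finset.sum_congr rfl fun j _ => ?_
      congr 2
      exact circleIntegral.integral_congr (hr x) fun z hz => by simp only [hφP hz]

theorem exists_partition_le_norm_monicEval (hM : M.HasTemperateGrowth)
    (hM_nonneg : ∀ x, 0 ≤ M x) (ha : ∀ j, (fun x => a x j).HasTemperateGrowth) :
    ∃ δ > 0, ∃ χ : Fin (n + 1) → E → ℝ, (∀ i, (χ i).HasTemperateGrowth) ∧
      (∀ x, ∑ i, χ i x = 1) ∧ ∀ i x, χ i x ≠ 0 →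
        ∀ z ∈ sphere (M x * I) (M x + (1 + (i : ℝ) / (n + 1))), δ ≤ ‖monicEval (a x) z‖ := by
  let δ : ℝ := (1 / (2 * (n + 1 : ℝ))) ^ n
  have hδ : 0 < δ := by positivity
  let r (i : Fin (n + 1)) (x : E) : ℝ := M x + (1 + (i : ℝ) / (n + 1))
  have hr (i : Fin (n + 1)) (x : E) : 0 ≤ r i x := add_nonneg (hM_nonneg x) (by positivity)
  let P (i : Fin (n + 1)) (p : E × ℝ) : ℂ :=
    monicEval (a p.1) (circleMap (M p.1 * I) (r i p.1) p.2)
  have hP (i : Fin (n + 1)) : (P i).HasTemperateGrowth :=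
    hasTemperateGrowth_monicEval (fun j => (ha j).comp hasTemperateGrowth_fst)
      (hasTemperateGrowth_circleMap
        (((hasTemperateGrowth_ofReal_comp hM).mul (.const I)).comp hasTemperateGrowth_fst)
        ((hM.add (.const _)).comp hasTemperateGrowth_fst) hasTemperateGrowth_snd)
  have hcover (x : E) : ∃ i, ∀ θ, δ ≤ ‖P i (x, θ)‖ := by
    obtain ⟨i, hi⟩ := exists_circle_le_norm_monicEval (a x) (M x * I) (M x)
    exact ⟨i, fun θ => hi _ (mem_sphere_iff_norm.1 (circleMap_mem_sphere _ (hr i x) θ))⟩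
  obtain ⟨χ, hχ, hχ_sum, hχ_supp⟩ :=
    exists_hasTemperateGrowth_partition hP hδ Real.two_pi_pos hcover
  refine ⟨δ / 2, half_pos hδ, χ, hχ, hχ_sum, fun i x hx z hz => ?_⟩
  obtain ⟨θ, hθ, rfl⟩ : z ∈ circleMap (M x * I) (r i x) '' Set.Ioc 0 (2 * Real.pi) := by
    rwa [image_circleMap_Ioc, abs_of_nonneg (hr i x)]
  exact hχ_supp i x hx θ (Set.Ioc_subset_Icc_self hθ)

theorem exists_cexp_eq_monicEval_mul_add (hM : M.HasTemperateGrowth) (hM_nonneg : ∀ x, 0 ≤ M x)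
    (ha : ∀ j, (fun x => a x j).HasTemperateGrowth) :
    ∃ (Q : E × ℝ → ℂ) (R : Fin n → E → ℂ),
      Q.HasTemperateGrowth ∧ (∀ j, (R j).HasTemperateGrowth) ∧
      ∀ (x : E) (t : ℝ), t ^ 2 ≤ M x →
        cexp (I * t) = monicEval (a x) (t : ℂ) * Q (x, t) + ∑ j, R j x * (t : ℂ) ^ (j : ℕ) := by
  obtain ⟨δ, hδ, χ, hχ, hχ_sum, hχ_supp⟩ := exists_partition_le_norm_monicEval hM hM_nonneg ha
  choose Q R hQ hR hdiv using fun i : Fin (n + 1) => exists_cexp_eq_of_forall_le_norm hM hM_nonneg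
    ha (le_add_of_nonneg_right (by positivity) : 1 ≤ 1 + (i : ℝ) / (n + 1)) hδ
  have hχ_div (i : Fin (n + 1)) (x : E) (t : ℝ) (ht : t ^ 2 ≤ M x) :
      (χ i x : ℂ) * cexp (I * t) = χ i x * (monicEval (a x) (t : ℂ) * Q i (x, t) +
        ∑ j, R i j x * (t : ℂ) ^ (j : ℕ)) := by
    by_cases hx : χ i x = 0
    · simp [hx]
    · rw [hdiv i x t ht (hχ_supp i x hx)]
  refine ⟨fun p => ∑ i, χ i p.1 * Q i p, fun j x => ∑ i, χ i x * R i j x,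
    .sum fun i _ =>
      ((hasTemperateGrowth_ofReal_comp (hχ i)).comp hasTemperateGrowth_fst).mul (hQ i),
    fun j => .sum fun i _ => (hasTemperateGrowth_ofReal_comp (hχ i)).mul (hR i j),
    fun x t ht => ?_⟩
  calc cexp (I * t) = ∑ i, χ i x * cexp (I * t) := by
        rw [← Finset.sum_mul, ← ofReal_sum, hχ_sum, ofReal_one, one_mul]
    _ = ∑ i, χ i x * (monicEval (a x) (t : ℂ) * Q i (x, t) +
        ∑ j, R i j x * (t : ℂ) ^ (j : ℕ)) := Finset.sum_congr rfl fun i _ => hχ_div i x t ht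
    _ = _ := by
      simp only [mul_add, Finset.sum_add_distrib, Finset.mul_sum, Finset.sum_mul]
      rw [Finset.sum_comm (γ := Fin n)]
      simp only [mul_left_comm, mul_assoc]

end ParametricDivision

end ExponentialDivision

section Division

open Complex MeasureTheory
open scoped FourierTransform RealInnerProductSpace ContDiff

variable {n : ℕ}

theorem monicEval_pow_mul {R : Type*} [CommRing R] (a : Fin n → R) (s z : R) :
    monicEval (fun j => s ^ (n - j) * a j) (s * z) = s ^ n * monicEval a z := by
  simp only [monicEval, mul_add, mul_pow, Finset.mul_sum]
  congr 1
  refine Finset.sum_congr rfl fun j _ => ?_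
  rw [← pow_sub_mul_pow s j.2.le]
  ring

theorem exists_cexp_mul_eq_monicEval_mul_add {E : Type} [NormedAddCommGroup E] [NormedSpace ℝ E]
    {a : E → Fin n → ℂ} {ξ : E → ℝ} (ha : ∀ j, (fun x => a x j).HasTemperateGrowth)
    (hξ : ξ.HasTemperateGrowth) :
    ∃ (Q : E × ℝ → ℂ) (R : Fin n → E → ℂ),
      Q.HasTemperateGrowth ∧ (∀ j, (R j).HasTemperateGrowth) ∧
      ∀ (x : E) (t : ℝ), t ^ 2 ≤ 1 → cexp (I * (ξ x * t)) =
        monicEval (a x) (t : ℂ) * Q (x, t) + ∑ j, R j x * (t : ℂ) ^ (j : ℕ) := by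
  have hξ' : (fun x => (ξ x : ℂ)).HasTemperateGrowth := hasTemperateGrowth_ofReal_comp hξ
  obtain ⟨Q, R, hQ, hR, hdiv⟩ := exists_cexp_eq_monicEval_mul_add
    (M := fun x => ξ x ^ 2) (a := fun x j => (ξ x : ℂ) ^ (n - j) * a x j) (hξ.pow 2)
    (fun x => sq_nonneg _) fun j => (hξ'.pow _).mul (ha j)
  refine ⟨fun p => (ξ p.1 : ℂ) ^ n * Q (p.1, ξ p.1 * p.2), fun j x => (ξ x : ℂ) ^ (j : ℕ) * R j x,
    ((hξ'.comp hasTemperateGrowth_fst).pow n).mul (hQ.comp (hasTemperateGrowth_prodMk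
      hasTemperateGrowth_fst ((hξ.comp hasTemperateGrowth_fst).mul hasTemperateGrowth_snd))),
    fun j => (hξ'.pow _).mul (hR j), fun x t ht => ?_⟩
  have h := hdiv x (ξ x * t) (by rw [mul_pow]; exact mul_le_of_le_one_right (sq_nonneg _) ht)
  rw [ofReal_mul, monicEval_pow_mul] at h
  rw [h]
  simp only [mul_pow]
  congr 1
  · ring
  · exact Finset.sum_congr rfl fun j _ => by ring

theorem exists_eq_integral_cexp_mul {V : Type} [NormedAddCommGroup V] [NormedSpace ℝ V]
    [FiniteDimensional ℝ V] {g : V → ℝ} (hg : ContDiff ℝ ∞ g) (hc : HasCompactSupport g) :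
    ∃ φ : EuclideanSpace ℝ (Fin (Module.finrank ℝ V)) → ℂ,
      (∀ k : ℕ, Integrable fun η => (1 + ‖η‖) ^ k • φ η) ∧
      ∀ x, (g x : ℂ) = ∫ η, cexp (↑(2 * Real.pi * ⟪η, toEuclidean x⟫) * I) * φ η := by
  let L := toEuclidean (E := V)
  let G : SchwartzMap (EuclideanSpace ℝ (Fin (Module.finrank ℝ V))) ℂ :=
    HasCompactSupport.toSchwartzMap (f := fun w => (g (L.symm w) : ℂ))
      ((hc.comp_homeomorph L.symm.toHomeomorph).comp_left ofReal_zero)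
      (ofRealCLM.contDiff.comp (hg.comp L.symm.contDiff))
  let G' : SchwartzMap (EuclideanSpace ℝ (Fin (Module.finrank ℝ V))) ℂ := 𝓕 G
  refine ⟨G', fun k => ?_, fun x => ?_⟩
  · have hint : Integrable fun η =>
        ∑ i ∈ Finset.range (k + 1), (k.choose i : ℝ) * (‖η‖ ^ i * ‖G' η‖) :=
      integrable_finsetSum _ fun i _ => (G'.integrable_pow_mul volume i).const_mul _
    refine hint.mono' (by fun_prop) (.of_forall fun η => le_of_eq ?_)
    rw [norm_smul, norm_pow, Real.norm_of_nonneg (by positivity), add_comm, add_pow,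
      Finset.sum_mul]
    refine Finset.sum_congr rfl fun i _ => ?_
    ring
  · calc (g x : ℂ) = G (L x) := congrArg (fun y => (g y : ℂ)) (L.symm_apply_apply x).symm
      _ = (𝓕⁻ G' : SchwartzMap _ _) (L x) := by rw [FourierTransform.fourierInv_fourier_eq]
      _ = _ := by
        rw [SchwartzMap.fourierInv_coe, Real.fourierInv_eq']
        simp only [smul_eq_mul, L]

theorem integral_mul_add_sum_mul_mul {ι W : Type*} [Fintype ι] [MeasurableSpace W]
    {μ : Measure W} {φ K₀ : W → ℂ} {K : ι → W → ℂ}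
    (hK₀ : Integrable (fun η => K₀ η * φ η) μ) (hK : ∀ j, Integrable (fun η => K j η * φ η) μ)
    (b : ℂ) (c : ι → ℂ) :
    ∫ η, (b * K₀ η + ∑ j, c j * K j η) * φ η ∂μ =
      b * ∫ η, K₀ η * φ η ∂μ + ∑ j, c j * ∫ η, K j η * φ η ∂μ := by
  simp only [add_mul, Finset.sum_mul, mul_assoc, ← integral_const_mul]
  rw [integral_add (hK₀.const_mul b) (integrable_finsetSum _ fun j _ => (hK j).const_mul (c j)),
    integral_finsetSum _ fun j _ => (hK j).const_mul (c j)]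

section RapidlyDecreasingWeight

variable {E W : Type} [NormedAddCommGroup E] [NormedSpace ℝ E] [NormedAddCommGroup W]
  [NormedSpace ℝ W] [MeasurableSpace W] [OpensMeasurableSpace W] [SecondCountableTopology W]
  {μ : Measure W} {φ : W → ℂ} {K : E × W → ℂ}

theorem contDiff_integral_mul (hφ : ∀ k : ℕ, Integrable (fun η => (1 + ‖η‖) ^ k • φ η) μ)
    (hK : K.HasTemperateGrowth) : ContDiff ℝ ∞ fun x => ∫ η, K (x, η) * φ η ∂μ :=
  (hasTemperateGrowth_integral hφ ((ContinuousLinearMap.mul ℝ ℂ).hasTemperateGrowth.comp hK)).1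

theorem integrable_mul_weight (hφ : ∀ k : ℕ, Integrable (fun η => (1 + ‖η‖) ^ k • φ η) μ)
    (hK : K.HasTemperateGrowth) (x : E) : Integrable (fun η => K (x, η) * φ η) μ :=
  integrable_kernel_apply hφ ((ContinuousLinearMap.mul ℝ ℂ).hasTemperateGrowth.comp hK) x

end RapidlyDecreasingWeight

theorem hasTemperateGrowth_two_pi_mul_inner {E W : Type*} [NormedAddCommGroup E] [NormedSpace ℝ E]
    [NormedAddCommGroup W] [InnerProductSpace ℝ W] {f g : E → W} (hf : f.HasTemperateGrowth)
    (hg : g.HasTemperateGrowth) :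
    (fun x => 2 * Real.pi * ⟪f x, g x⟫).HasTemperateGrowth :=
  (Function.HasTemperateGrowth.const (2 * Real.pi)).mul
    ((innerSL ℝ).bilinear_hasTemperateGrowth hf hg)

theorem hasTemperateGrowth_cexp_two_pi_mul_inner {V W : Type} [NormedAddCommGroup V]
    [NormedSpace ℝ V] [NormedAddCommGroup W] [InnerProductSpace ℝ W] (L : V →L[ℝ] W) :
    (fun p : V × W => cexp (↑(2 * Real.pi * ⟪p.2, L p.1⟫) * I)).HasTemperateGrowth := by
  refine hasTemperateGrowth_cexp (b := 0) ?_ fun p => by simp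
  exact (hasTemperateGrowth_ofReal_comp (hasTemperateGrowth_two_pi_mul_inner
    hasTemperateGrowth_snd (L.hasTemperateGrowth.comp hasTemperateGrowth_fst))).mul (.const I)

theorem cexp_two_pi_mul_inner_prodMk {V W : Type*} [NormedAddCommGroup V] [NormedSpace ℝ V]
    [NormedAddCommGroup W] [InnerProductSpace ℝ W] (L : V × ℝ →L[ℝ] W) (η : W) (x : V) (t : ℝ) :
    cexp (↑(2 * Real.pi * ⟪η, L (x, t)⟫) * I) = cexp (↑(2 * Real.pi * ⟪η, L (x, 0)⟫) * I) *
      cexp (I * (↑(2 * Real.pi * ⟪η, L (0, 1)⟫) * t)) := by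
  have hL : L (x, t) = L (x, 0) + t • L (0, 1) := by rw [← map_smul, ← map_add]; simp
  rw [← Complex.exp_add, hL, inner_add_right, inner_smul_right]
  push_cast
  ring_nf

theorem exists_eq_monicEval_mul_add_of_hasCompactSupport {V : Type} [NormedAddCommGroup V]
    [NormedSpace ℝ V] [FiniteDimensional ℝ V] (n : ℕ) {g : V × ℝ → ℝ} (hg : ContDiff ℝ ∞ g)
    (hc : HasCompactSupport g) :
    ∃ (Q : (V × (Fin n → ℝ)) × ℝ → ℝ) (R : Fin n → V × (Fin n → ℝ) → ℝ),
      ContDiff ℝ ∞ Q ∧ (∀ j, ContDiff ℝ ∞ (R j)) ∧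
      ∀ (x : V) (a : Fin n → ℝ) (t : ℝ), t ^ 2 ≤ 1 →
        g (x, t) = monicEval a t * Q ((x, a), t) + ∑ j, R j (x, a) * t ^ (j : ℕ) := by
  obtain ⟨φ, hφ, hgφ⟩ := exists_eq_integral_cexp_mul hg hc
  let W := EuclideanSpace ℝ (Fin (Module.finrank ℝ (V × ℝ)))
  let L : (V × ℝ) ≃L[ℝ] W := toEuclidean
  obtain ⟨Q, R, hQ, hR, hdiv⟩ := exists_cexp_mul_eq_monicEval_mul_add
    (E := (Fin n → ℝ) × W) (a := fun p j => (p.1 j : ℂ))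
    (ξ := fun p => 2 * Real.pi * ⟪p.2, L (0, 1)⟫)
    (fun j => hasTemperateGrowth_ofReal_comp
      ((hasTemperateGrowth_apply j).comp hasTemperateGrowth_fst))
    (hasTemperateGrowth_two_pi_mul_inner hasTemperateGrowth_snd (.const _))
  let e (p : V × W) : ℂ := cexp (↑(2 * Real.pi * ⟪p.2, L (p.1, 0)⟫) * I)
  have he : e.HasTemperateGrowth :=
    hasTemperateGrowth_cexp_two_pi_mul_inner ((L : V × ℝ →L[ℝ] W).comp (.inl ℝ V ℝ))
  let KQ (p : ((V × (Fin n → ℝ)) × ℝ) × W) : ℂ :=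
    e (p.1.1.1, p.2) * Q ((p.1.1.2, p.2), p.1.2)
  let KR (j : Fin n) (p : (V × (Fin n → ℝ)) × W) : ℂ := e (p.1.1, p.2) * R j (p.1.2, p.2)
  have hKQ : KQ.HasTemperateGrowth := .mul (he.comp (by fun_prop)) (hQ.comp (by fun_prop))
  have hKR (j) : (KR j).HasTemperateGrowth :=
    .mul (he.comp (by fun_prop)) ((hR j).comp (by fun_prop))
  refine ⟨fun p => (∫ η, KQ (p, η) * φ η).re, fun j p => (∫ η, KR j (p, η) * φ η).re,
    reCLM.contDiff.comp (contDiff_integral_mul hφ hKQ),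
    fun j => reCLM.contDiff.comp (contDiff_integral_mul hφ (hKR j)), fun x a t ht => ?_⟩
  have hsplit (η : W) : cexp (↑(2 * Real.pi * ⟪η, L (x, t)⟫) * I) =
      e (x, η) * cexp (I * (↑(2 * Real.pi * ⟪η, L (0, 1)⟫) * t)) :=
    cexp_two_pi_mul_inner_prodMk (L : V × ℝ →L[ℝ] W) η x t
  have hkernel (η : W) : cexp (↑(2 * Real.pi * ⟪η, L (x, t)⟫) * I) =
      monicEval (fun j => (a j : ℂ)) t * KQ (((x, a), t), η) +
        ∑ j : Fin n, (t : ℂ) ^ (j : ℕ) * KR j ((x, a), η) := by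
    rw [hsplit, hdiv (a, η) t ht, mul_add, Finset.mul_sum]
    congr 1
    · simp only [KQ]; ring
    · exact Finset.sum_congr rfl fun j _ => by simp only [KR]; ring
  have hint : (g (x, t) : ℂ) = monicEval (fun j => (a j : ℂ)) t *
      (∫ η, KQ (((x, a), t), η) * φ η) +
        ∑ j : Fin n, (t : ℂ) ^ (j : ℕ) * ∫ η, KR j ((x, a), η) * φ η := by
    rw [hgφ, ← integral_mul_add_sum_mul_mul (integrable_mul_weight hφ hKQ _)
      fun j => integrable_mul_weight hφ (hKR j) _]
    exact integral_congr_ae (.of_forall fun η => congrArg (· * φ η) (hkernel η))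
  have ha : monicEval (fun j => (a j : ℂ)) t = (monicEval a t : ℝ) := by simp [monicEval]
  simpa only [ha, ← ofReal_pow, re_ofReal_mul, add_re, re_sum, ofReal_re, mul_comm (t ^ _)]
    using congrArg re hint

end Division

section SmoothGerms

open Topology
open scoped ContDiff

variable {E F : Type*} [NormedAddCommGroup E] [NormedSpace ℝ E] [NormedAddCommGroup F]
  [NormedSpace ℝ F]

theorem exists_contDiff_hasCompactSupport_eventuallyEq [FiniteDimensional ℝ E] {f : E → F} {p : E}
    (hf : ∀ᶠ x in 𝓝 p, ContDiffAt ℝ ∞ f x) :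
    ∃ g : E → F, ContDiff ℝ ∞ g ∧ HasCompactSupport g ∧ g =ᶠ[𝓝 p] f := by
  obtain ⟨r, hr, hball⟩ := Metric.nhds_basis_closedBall.mem_iff.1 hf
  let b : ContDiffBump p := ⟨r / 2, r, half_pos hr, half_lt_self hr⟩
  refine ⟨fun x => b x • f x, contDiff_iff_contDiffAt.2 fun x => ?_, b.hasCompactSupport.smul_right,
    b.eventuallyEq_one.mono fun x hx => by simp [hx]⟩
  by_cases hx : x ∈ tsupport b
  · exact b.contDiffAt.smul (hball (b.tsupport_eq ▸ hx))
  · refine contDiffAt_const (c := (0 : F)) |>.congr_of_eventuallyEq ?_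
    filter_upwards [notMem_tsupport_iff_eventuallyEq.1 hx] with y hy
    simp [hy]

theorem isInvertible_of_injective [FiniteDimensional ℝ E] {A : E →L[ℝ] E}
    (hA : ∀ v, A v = 0 → v = 0) : A.IsInvertible :=
  ⟨(LinearEquiv.ofInjectiveEndo A.toLinearMap
    ((injective_iff_map_eq_zero _).2 hA)).toContinuousLinearEquiv, by ext; rfl⟩

theorem exists_contDiff_localInverse [CompleteSpace E] [FiniteDimensional ℝ F] {f : E → F} {p : E}
    (hf : ContDiff ℝ ∞ f) (hp : (fderiv ℝ f p).IsInvertible) :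
    ∃ g : F → E, ContDiff ℝ ∞ g ∧ g (f p) = p ∧ (∀ᶠ x in 𝓝 p, g (f x) = x) ∧
      ∀ᶠ y in 𝓝 (f p), f (g y) = y := by
  obtain ⟨A, hA⟩ := hp
  have hfp : HasFDerivAt f (A : E →L[ℝ] F) p := hA ▸ (hf.differentiable (by simp) p).hasFDerivAt
  let e := hf.contDiffAt.toOpenPartialHomeomorph f hfp (by simp)
  have hpe : p ∈ e.source := hf.contDiffAt.mem_toOpenPartialHomeomorph_source hfp (by simp)
  have hinv : ∀ᶠ x in 𝓝 p, ∃ B : E ≃L[ℝ] F, (B : E →L[ℝ] F) = fderiv ℝ f x :=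
    (hf.continuous_fderiv (by simp)).continuousAt.eventually
      (p := fun L => ∃ B : E ≃L[ℝ] F, (B : E →L[ℝ] F) = L) (hA ▸ ContinuousLinearEquiv.nhds A)
  have hsymm : ∀ᶠ y in 𝓝 (f p), ContDiffAt ℝ ∞ e.symm y := by
    have htendsto : Filter.Tendsto e.symm (𝓝 (f p)) (𝓝 p) := by
      have h := e.continuousAt_symm (e.map_source hpe)
      rwa [ContinuousAt, e.left_inv hpe] at h
    filter_upwards [e.open_target.mem_nhds (e.map_source hpe), htendsto.eventually hinv]
      with y hy ⟨B, hB⟩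
    exact e.contDiffAt_symm hy (hB ▸ (hf.differentiable (by simp) _).hasFDerivAt) hf.contDiffAt
  obtain ⟨g, hg, -, hge⟩ := exists_contDiff_hasCompactSupport_eventuallyEq hsymm
  refine ⟨g, hg, hge.eq_of_nhds.trans (e.left_inv hpe), ?_, ?_⟩
  · filter_upwards [hf.continuous.continuousAt.eventually hge, e.open_source.mem_nhds hpe]
      with x hx hxe
    exact hx.trans (e.left_inv hxe)
  · filter_upwards [hge, e.open_target.mem_nhds (e.map_source hpe)] with y hy hye
    exact (congrArg f hy).trans (e.right_inv hye)

end SmoothGerms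

section Preparation

open Topology Asymptotics
open scoped ContDiff

theorem isBigO_pow_pow_of_le {m n : ℕ} (h : m ≤ n) :
    (fun t : ℝ => t ^ n) =O[𝓝 0] fun t => t ^ m := by
  rcases h.eq_or_lt with rfl | h
  · exact isBigO_refl _ _
  · exact (isLittleO_pow_pow h).isBigO

theorem eq_zero_of_sum_mul_pow_isBigO {n : ℕ} {v : Fin n → ℝ}
    (h : (fun t : ℝ => ∑ j, v j * t ^ (j : ℕ)) =O[𝓝 0] fun t => t ^ n) : v = 0 := by
  suffices ∀ j : Fin n, v j = 0 from funext this
  intro j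
  induction j using WellFoundedLT.induction with
  | _ j ih =>
    have hrest : (fun t : ℝ => ∑ i ∈ Finset.univ.erase j, v i * t ^ (i : ℕ)) =O[𝓝 0]
        fun t => t ^ (j + 1 : ℕ) := by
      refine IsBigO.fun_sum fun i hi => ?_
      rcases (Finset.ne_of_mem_erase hi).lt_or_gt with hij | hij
      · simpa only [ih i hij, zero_mul] using isBigO_zero (E' := ℝ) _ _
      · exact (isBigO_pow_pow_of_le (Nat.succ_le_of_lt hij)).const_mul_left (v i)
    have hj : (fun t : ℝ => v j * t ^ (j : ℕ)) =O[𝓝 0] fun t => t ^ (j + 1 : ℕ) := by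
      refine ((h.trans (isBigO_pow_pow_of_le j.2)).sub hrest).congr_left fun t => ?_
      rw [← Finset.add_sum_erase _ _ (Finset.mem_univ j), add_sub_cancel_right]
    by_contra hvj
    refine isLittleO_irrefl ?_ ((isLittleO_const_mul_left_iff hvj).1
      (hj.trans_isLittleO (isLittleO_pow_pow j.1.lt_succ_self)))
    have hne : ∃ᶠ t : ℝ in 𝓝[≠] 0, t ≠ 0 :=
      (eventually_mem_nhdsWithin (s := {(0 : ℝ)}ᶜ)).frequently
    exact (hne.filter_mono nhdsWithin_le_nhds).mono fun t ht => pow_ne_zero _ ht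

theorem eq_zero_and_eq_of_pow_mul_eq {n : ℕ} {u q : ℝ → ℝ} {r : Fin n → ℝ} (hu : ContinuousAt u 0)
    (hq : ContinuousAt q 0)
    (h : ∀ᶠ t in 𝓝 0, t ^ n * u t = t ^ n * q t + ∑ j, r j * t ^ (j : ℕ)) : r = 0 ∧ q 0 = u 0 := by
  have hr : r = 0 := by
    refine eq_zero_of_sum_mul_pow_isBigO (((isBigO_refl (fun t : ℝ => t ^ n) _).mul
      ((hu.sub hq).isBigO_one ℝ)).congr' ?_ (.of_forall fun t => mul_one _))
    filter_upwards [h] with t ht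
    simp only [Pi.sub_apply, mul_sub]
    linarith
  refine ⟨hr, tendsto_nhds_unique (l := 𝓝[≠] (0 : ℝ)) (hq.tendsto.mono_left nhdsWithin_le_nhds)
    ((hu.tendsto.mono_left nhdsWithin_le_nhds).congr' ?_)⟩
  filter_upwards [nhdsWithin_le_nhds h, self_mem_nhdsWithin] with t ht (ht₀ : t ≠ 0)
  simpa [hr, ht₀] using ht

variable {V : Type} [NormedAddCommGroup V] [NormedSpace ℝ V]

theorem exists_eventually_eq_monicEval_mul_add [FiniteDimensional ℝ V] (n : ℕ) {f : V × ℝ → ℝ}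
    {x₀ : V} (hf : ∀ᶠ p in 𝓝 (x₀, 0), ContDiffAt ℝ ∞ f p) :
    ∃ (Q : (V × (Fin n → ℝ)) × ℝ → ℝ) (R : V × (Fin n → ℝ) → Fin n → ℝ),
      ContDiff ℝ ∞ Q ∧ ContDiff ℝ ∞ R ∧ ∀ᶠ p : V × ℝ in 𝓝 (x₀, 0), ∀ a : Fin n → ℝ,
        f p = monicEval a p.2 * Q ((p.1, a), p.2) + ∑ j, R (p.1, a) j * p.2 ^ (j : ℕ) := by
  obtain ⟨g, hg, hc, hgf⟩ := exists_contDiff_hasCompactSupport_eventuallyEq hf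
  obtain ⟨Q, R, hQ, hR, hdiv⟩ := exists_eq_monicEval_mul_add_of_hasCompactSupport n hg hc
  refine ⟨Q, fun p j => R j p, hQ, contDiff_pi.2 hR, ?_⟩
  have hsq : ∀ᶠ p : V × ℝ in 𝓝 (x₀, 0), p.2 ^ 2 < 1 :=
    (by fun_prop : Continuous fun p : V × ℝ => p.2 ^ 2).continuousAt.eventually_lt_const (by simp)
  filter_upwards [hgf, hsq] with p hp hp2 a
  rw [← hp, ← hdiv p.1 a p.2 hp2.le]

theorem exists_eq_add_mul_comp_sq [FiniteDimensional ℝ V] {f : V × ℝ → ℝ} {x₀ : V}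
    (hf : ∀ᶠ p in 𝓝 (x₀, 0), ContDiffAt ℝ ∞ f p) :
    ∃ e o : V × ℝ → ℝ, ContDiff ℝ ∞ e ∧ ContDiff ℝ ∞ o ∧
      ∀ᶠ p in 𝓝 (x₀, 0), f p = e (p.1, p.2 ^ 2) + p.2 * o (p.1, p.2 ^ 2) := by
  obtain ⟨_, R, _, hR, hdiv⟩ := exists_eventually_eq_monicEval_mul_add 2 hf
  have hcoeff : ContDiff ℝ ∞ fun p : V × ℝ => (p.1, ![-p.2, 0]) :=
    contDiff_fst.prodMk (contDiff_pi.2 (Fin.forall_fin_two.2 ⟨contDiff_snd.neg, contDiff_const⟩))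
  refine ⟨fun p => R (p.1, ![-p.2, 0]) 0, fun p => R (p.1, ![-p.2, 0]) 1,
    contDiff_pi.1 (hR.comp hcoeff) 0, contDiff_pi.1 (hR.comp hcoeff) 1, ?_⟩
  filter_upwards [hdiv] with p hp
  rw [hp ![-p.2 ^ 2, 0]]
  simp [monicEval, Fin.sum_univ_two, mul_comm]

variable {n : ℕ}

theorem monicEval_zero (t : ℝ) : monicEval (0 : Fin n → ℝ) t = t ^ n := by simp [monicEval]

theorem hasDerivAt_monicEval_smul (v : Fin n → ℝ) (t : ℝ) :
    HasDerivAt (fun s : ℝ => monicEval (s • v) t) (∑ j, v j * t ^ (j : ℕ)) 0 := by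
  simp only [monicEval, Pi.smul_apply, smul_eq_mul]
  refine .const_add _ (.fun_sum fun j _ => ?_)
  simpa using ((hasDerivAt_id (0 : ℝ)).mul_const (v j)).mul_const (t ^ (j : ℕ))

variable {Q : (V × (Fin n → ℝ)) × ℝ → ℝ} {R : V × (Fin n → ℝ) → Fin n → ℝ} {g : ℝ → ℝ} {x₀ : V}

-- Differentiating the division identity in `a` at `a = 0` shows that a vector `v` in the kernel
-- of `∂R / ∂a` satisfies `(∑ v_j t^j) Q(0, t) = O(t^n)`.
theorem isInvertible_fderiv_remainder (hQ : ContDiff ℝ ∞ Q) (hR : ContDiff ℝ ∞ R)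
    (hQ₀ : Q ((x₀, 0), 0) ≠ 0)
    (hdiv : ∀ᶠ t in 𝓝 (0 : ℝ), ∀ a : Fin n → ℝ,
      g t = monicEval a t * Q ((x₀, a), t) + ∑ j, R (x₀, a) j * t ^ (j : ℕ)) :
    (fderiv ℝ R (x₀, 0) ∘L .inr ℝ V (Fin n → ℝ)).IsInvertible := by
  suffices hinj : ∀ v, fderiv ℝ R (x₀, 0) (0, v) = 0 → v = 0 from
    isInvertible_of_injective fun v => by simpa using hinj v
  intro v hv
  let q (t : ℝ) : ℝ := fderiv ℝ Q ((x₀, 0), t) ((0, v), 0)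
  have hq : Continuous q := by
    have := hQ.continuous_fderiv (by simp)
    fun_prop
  have hRv (j : Fin n) : HasDerivAt (fun s : ℝ => R (x₀, s • v) j) 0 0 := by
    have h := ((hR.differentiable (by simp) (x₀, 0)).hasFDerivAt.hasLineDerivAt (0, v))
    rw [HasLineDerivAt, hv] at h
    simpa using hasDerivAt_pi.1 h j
  have hQv (t : ℝ) : HasDerivAt (fun s : ℝ => Q ((x₀, s • v), t)) (q t) 0 := by
    have h := (hQ.differentiable (by simp) ((x₀, 0), t)).hasFDerivAt.hasLineDerivAt ((0, v), 0)
    simpa [HasLineDerivAt] using h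
  have hker : ∀ᶠ t in 𝓝 (0 : ℝ),
      (∑ j, v j * t ^ (j : ℕ)) * Q ((x₀, 0), t) + t ^ n * q t = 0 := by
    filter_upwards [hdiv] with t ht
    have hsum : HasDerivAt (fun s : ℝ => ∑ j, R (x₀, s • v) j * t ^ (j : ℕ)) 0 0 := by
      simpa using HasDerivAt.fun_sum (u := Finset.univ) fun j _ => (hRv j).mul_const (t ^ (j : ℕ))
    have h := ((hasDerivAt_monicEval_smul v t).mul (hQv t)).add hsum
    simpa [monicEval_zero] using (h.congr_of_eventuallyEq
      (.of_forall fun s => ht (s • v))).unique (hasDerivAt_const (0 : ℝ) (g t))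
  have hQ_cont : ContinuousAt (fun t => Q ((x₀, 0), t)) 0 :=
    (hQ.continuous.comp (by fun_prop)).continuousAt
  have hbdd : (fun t => -q t / Q ((x₀, 0), t)) =O[𝓝 0] fun _ => (1 : ℝ) :=
    (hq.continuousAt.neg.div hQ_cont hQ₀).isBigO_one ℝ
  refine eq_zero_of_sum_mul_pow_isBigO (((isBigO_refl (fun t : ℝ => t ^ n) _).mul hbdd).congr'
    ?_ (.of_forall fun t => mul_one _))
  filter_upwards [hker, hQ_cont.eventually_ne hQ₀] with t ht hQt
  field_simp
  linarith

theorem exists_eventually_eq_monicEval_mul [FiniteDimensional ℝ V] {f : V × ℝ → ℝ} {u : ℝ → ℝ}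
    (hf : ∀ᶠ p in 𝓝 (x₀, 0), ContDiffAt ℝ ∞ f p) (hu : ContinuousAt u 0) (hu₀ : u 0 ≠ 0)
    (hfu : ∀ᶠ t in 𝓝 0, f (x₀, t) = t ^ n * u t) :
    ∃ (a : V → Fin n → ℝ) (U : V × ℝ → ℝ), ContDiffAt ℝ ∞ a x₀ ∧ ContDiffAt ℝ ∞ U (x₀, 0) ∧
      a x₀ = 0 ∧ U (x₀, 0) ≠ 0 ∧ ∀ᶠ p in 𝓝 (x₀, 0), f p = monicEval (a p.1) p.2 * U p := by
  obtain ⟨Q, R, hQ, hR, hdiv⟩ := exists_eventually_eq_monicEval_mul_add n hf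
  have hdiv₀ : ∀ᶠ t in 𝓝 (0 : ℝ), ∀ a : Fin n → ℝ,
      f (x₀, t) = monicEval a t * Q ((x₀, a), t) + ∑ j, R (x₀, a) j * t ^ (j : ℕ) :=
    (Continuous.prodMk_right x₀).continuousAt.eventually hdiv
  obtain ⟨hR₀, hQ₀⟩ : R (x₀, 0) = 0 ∧ Q ((x₀, 0), 0) = u 0 := by
    refine eq_zero_and_eq_of_pow_mul_eq (q := fun t => Q ((x₀, 0), t)) hu
      (hQ.continuous.comp (by fun_prop)).continuousAt ?_
    filter_upwards [hdiv₀, hfu] with t ht htu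
    rw [← htu, ht 0, monicEval_zero]
  have hinv := isInvertible_fderiv_remainder hQ hR (hQ₀ ▸ hu₀) hdiv₀
  let a : V → Fin n → ℝ := hR.contDiffAt.implicitFunction (by simp) hinv
  have ha : ContDiffAt ℝ ∞ a x₀ := hR.contDiffAt.contDiffAt_implicitFunction (by simp) hinv
  have ha₀ : a x₀ = 0 := hR.contDiffAt.implicitFunction_apply_self (by simp) hinv
  have hRa : ∀ᶠ x in 𝓝 x₀, R (x, a x) = 0 :=
    hR₀ ▸ hR.contDiffAt.eventually_apply_implicitFunction (by simp) hinv
  refine ⟨a, fun p => Q ((p.1, a p.1), p.2), ha,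
    hQ.contDiffAt.comp _ ((contDiffAt_fst.prodMk (ha.comp _ contDiffAt_fst)).prodMk contDiffAt_snd),
    ha₀, by simpa [ha₀, hQ₀] using hu₀, ?_⟩
  filter_upwards [hdiv, continuousAt_fst.eventually hRa] with p hp hRp
  rw [hp (a p.1), hRp]
  simp

end Preparation

open Topology Asymptotics
open scoped ContDiff

section AEquiv

variable {E F G : Type*} [NormedAddCommGroup E] [NormedSpace ℝ E] [NormedAddCommGroup F]
  [NormedSpace ℝ F] [NormedAddCommGroup G] [NormedSpace ℝ G]

namespace IsLocalDiffeoAt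

protected theorem comp {g : F → G} {f : E → F} {p : E} (hg : IsLocalDiffeoAt g (f p))
    (hf : IsLocalDiffeoAt f p) : IsLocalDiffeoAt (g ∘ f) p := by
  obtain ⟨hg, g', hg', hg'g, hgg'⟩ := hg
  obtain ⟨hf, f', hf', hf'f, hff'⟩ := hf
  have hg'p : g' (g (f p)) = f p := hg'g.self_of_nhds
  refine ⟨hg.comp p hf, f' ∘ g', .comp _ (hg'p.symm ▸ hf') hg', ?_, ?_⟩
  · filter_upwards [hf'f, hf.continuousAt.eventually hg'g] with x hfx hgx
    simp only [Function.comp_apply, hgx, hfx]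
  · filter_upwards [hgg', hg'.continuousAt.eventually (hg'p.symm ▸ hff')] with y hgy hfy
    simp only [Function.comp_apply, hfy, hgy]

theorem exists_inverse {f : E → F} {p : E} (hf : IsLocalDiffeoAt f p) :
    ∃ g : F → E, IsLocalDiffeoAt g (f p) ∧ g (f p) = p ∧ (∀ᶠ x in 𝓝 p, g (f x) = x) ∧
      ∀ᶠ y in 𝓝 (f p), f (g y) = y := by
  obtain ⟨hf, g, hg, hgf, hfg⟩ := hf
  have hgp : g (f p) = p := hgf.self_of_nhds
  exact ⟨g, ⟨hg, f, hgp.symm ▸ hf, hfg, hgp.symm ▸ hgf⟩, hgp, hgf, hfg⟩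

theorem of_inverse {f : E → F} {g : F → E} {p : E} {q : F} (hf : ContDiffAt ℝ ∞ f p) (hpq : f p = q)
    (hg : ContDiffAt ℝ ∞ g q) (hgf : ∀ᶠ x in 𝓝 p, g (f x) = x) (hfg : ∀ᶠ y in 𝓝 q, f (g y) = y) :
    IsLocalDiffeoAt f p := by
  subst hpq
  exact ⟨hf, g, hg, hgf, hfg⟩

protected theorem id {p : E} : IsLocalDiffeoAt id p :=
  .of_inverse contDiffAt_id rfl contDiffAt_id (.of_forall fun _ => rfl) (.of_forall fun _ => rfl)

theorem of_fderiv_injective [FiniteDimensional ℝ E] {f : E → E} {p : E}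
    (hf : ContDiffAt ℝ ∞ f p) (hinj : ∀ v, fderiv ℝ f p v = 0 → v = 0) : IsLocalDiffeoAt f p := by
  have := FiniteDimensional.complete ℝ E
  obtain ⟨e, hfe⟩ := isInvertible_of_injective hinj
  have he : HasFDerivAt f (e : E →L[ℝ] E) p :=
    hfe ▸ (hf.differentiableAt (by simp)).hasFDerivAt
  have hstrict := hf.hasStrictFDerivAt' he (by simp)
  exact ⟨hf, _, hf.to_localInverse he (by simp), hstrict.eventually_left_inverse,
    hstrict.eventually_right_inverse⟩

end IsLocalDiffeoAt

namespace AEquivAt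

variable {f g h : ℝ × ℝ → R3} {p q r : ℝ × ℝ}

protected theorem symm (hfg : AEquivAt f p g q) (hf : ContinuousAt f p) : AEquivAt g q f p := by
  obtain ⟨φ, Φ, hφ, rfl, hΦ, hfg⟩ := hfg
  obtain ⟨φ', hφ', hφ'q, -, hφφ'⟩ := hφ.exists_inverse
  obtain ⟨Φ', hΦ', -, hΦ'Φ, -⟩ := hΦ.exists_inverse
  refine ⟨φ', Φ', hφ', hφ'q, hfg.self_of_nhds ▸ hΦ', ?_⟩
  have hφ't : Tendsto φ' (𝓝 (φ q)) (𝓝 q) := by simpa only [hφ'q] using hφ'.1.continuousAt.tendsto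
  filter_upwards [hφφ', hφ't.eventually hfg, hf.eventually hΦ'Φ] with x hx hgx hΦx
  rw [← hgx, hx, hΦx]

protected theorem trans (hfg : AEquivAt f p g q) (hgh : AEquivAt g q h r) : AEquivAt f p h r := by
  obtain ⟨φ, Φ, hφ, rfl, hΦ, hfg⟩ := hfg
  obtain ⟨ψ, Ψ, hψ, rfl, hΨ, hgh⟩ := hgh
  refine ⟨φ ∘ ψ, Ψ ∘ Φ, hφ.comp hψ, rfl, .comp (hfg.self_of_nhds ▸ hΨ) hΦ, ?_⟩
  filter_upwards [hgh, hψ.1.continuousAt.eventually hfg] with x hx hfx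
  rw [Function.comp_apply, Function.comp_apply, hfx, hx]

end AEquivAt

end AEquiv

section HadamardDivision

variable {V : Type} [NormedAddCommGroup V] [NormedSpace ℝ V] [FiniteDimensional ℝ V] {x₀ : V}

theorem exists_eventually_eq_sum_add_pow_mul (n : ℕ) {f : V × ℝ → ℝ}
    (hf : ∀ᶠ p in 𝓝 (x₀, 0), ContDiffAt ℝ ∞ f p) :
    ∃ (R : V → Fin n → ℝ) (Q : V × ℝ → ℝ), ContDiff ℝ ∞ R ∧ ContDiff ℝ ∞ Q ∧
      ∀ᶠ p : V × ℝ in 𝓝 (x₀, 0), f p = ∑ j, R p.1 j * p.2 ^ (j : ℕ) + p.2 ^ n * Q p := by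
  obtain ⟨Q, R, hQ, hR, hdiv⟩ := exists_eventually_eq_monicEval_mul_add n hf
  refine ⟨fun x => R (x, 0), fun p => Q ((p.1, 0), p.2), by fun_prop, by fun_prop, ?_⟩
  filter_upwards [hdiv] with p hp
  rw [hp 0, monicEval_zero, add_comm]

theorem exists_eventually_eq_mul {f : V × ℝ → ℝ} (hf : ContDiff ℝ ∞ f)
    (hf₀ : ∀ᶠ x in 𝓝 x₀, f (x, 0) = 0) :
    ∃ Q : V × ℝ → ℝ, ContDiff ℝ ∞ Q ∧ ∀ᶠ p : V × ℝ in 𝓝 (x₀, 0), f p = p.2 * Q p := by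
  obtain ⟨R, Q, -, hQ, hfQ⟩ :=
    exists_eventually_eq_sum_add_pow_mul 1 (x₀ := x₀) (.of_forall fun p => hf.contDiffAt)
  refine ⟨Q, hQ, ?_⟩
  have hR : ∀ᶠ x in 𝓝 x₀, R x 0 = 0 := by
    filter_upwards [(Continuous.prodMk_left (0 : ℝ)).continuousAt.eventually hfQ, hf₀] with x hx hx₀
    simpa [hx₀, eq_comm] using hx
  filter_upwards [hfQ, continuousAt_fst.eventually hR] with p hp hRp
  simpa [hRp] using hp

theorem exists_eventuallyEq_pow_mul {n : ℕ} {f : ℝ → ℝ} (hf : ContDiff ℝ ∞ f)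
    (hfn : f =O[𝓝 0] fun t => t ^ n) :
    ∃ r : ℝ → ℝ, ContDiff ℝ ∞ r ∧ ∀ᶠ t in 𝓝 0, f t = t ^ n * r t := by
  obtain ⟨R, Q, -, hQ, hfQ⟩ := exists_eventually_eq_sum_add_pow_mul n (x₀ := (0 : ℝ))
    (f := fun p : ℝ × ℝ => f p.2) (.of_forall fun p => by fun_prop)
  have hfQ' : ∀ᶠ t in 𝓝 (0 : ℝ), f t = ∑ j, R 0 j * t ^ (j : ℕ) + t ^ n * Q (0, t) :=
    (Continuous.prodMk_right (0 : ℝ)).continuousAt.eventually hfQ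
  have hQ_bdd : (fun t : ℝ => t ^ n * Q (0, t)) =O[𝓝 0] fun t => t ^ n := by
    simpa using (isBigO_refl (fun t : ℝ => t ^ n) (𝓝 0)).mul
      ((hQ.continuous.comp (Continuous.prodMk_right (0 : ℝ))).continuousAt.isBigO_one ℝ)
  have hR : R 0 = 0 := by
    refine eq_zero_of_sum_mul_pow_isBigO ((hfn.sub hQ_bdd).congr' ?_ .rfl)
    filter_upwards [hfQ'] with t ht
    rw [ht, add_sub_cancel_right]
  refine ⟨fun t => Q (0, t), by fun_prop, ?_⟩
  filter_upwards [hfQ'] with t ht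
  simpa [hR] using ht

theorem exists_contDiff_fiberwise_inverse {F : V × ℝ → ℝ} (hF : ContDiff ℝ ∞ F)
    (hF₀ : F (x₀, 0) = 0) (hF' : deriv (fun t => F (x₀, t)) 0 ≠ 0) :
    ∃ G : V × ℝ → ℝ, ContDiff ℝ ∞ G ∧ G (x₀, 0) = 0 ∧
      (∀ᶠ p in 𝓝 (x₀, 0), G (p.1, F p) = p.2) ∧ ∀ᶠ p in 𝓝 (x₀, 0), F (p.1, G p) = p.2 := by
  have hinv : (fderiv ℝ (fun p : V × ℝ => (p.1, F p)) (x₀, 0)).IsInvertible := by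
    have hd := (hF.differentiable (by simp) (x₀, 0)).hasFDerivAt
    have hline : HasDerivAt (fun t => F (x₀, t)) (fderiv ℝ F (x₀, 0) (0, 1)) 0 :=
      hd.comp_hasDerivAt _ ((hasDerivAt_const _ _).prodMk (hasDerivAt_id _))
    rw [hline.deriv] at hF'
    rw [(hasFDerivAt_fst.prodMk hd).fderiv]
    refine isInvertible_of_injective fun ⟨v, s⟩ hvs => ?_
    obtain ⟨rfl, hs⟩ : v = 0 ∧ fderiv ℝ F (x₀, 0) (v, s) = 0 := by simpa using hvs
    have hs' : ((0 : V), s) = s • ((0 : V), (1 : ℝ)) := by simp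
    rw [hs', map_smul, smul_eq_mul, mul_eq_zero, or_iff_left hF'] at hs
    rw [hs]
    rfl
  have := FiniteDimensional.complete ℝ V
  obtain ⟨K, hK, hK₀, hKF, hFK⟩ :=
    exists_contDiff_localInverse (contDiff_fst.prodMk hF : ContDiff ℝ ∞ fun p => (p.1, F p)) hinv
  simp only [hF₀] at hK₀ hFK
  refine ⟨fun p => (K p).2, by fun_prop, congrArg Prod.snd hK₀,
    hKF.mono fun p hp => congrArg Prod.snd hp, ?_⟩
  filter_upwards [hFK] with p hp
  obtain ⟨h1, h2⟩ := Prod.ext_iff.1 hp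
  simpa [← h1] using h2

end HadamardDivision

section EdgeGerm

theorem contDiffAt_vec3 {E : Type*} [NormedAddCommGroup E] [NormedSpace ℝ E] {f g h : E → ℝ} {x : E}
    (hf : ContDiffAt ℝ ∞ f x) (hg : ContDiffAt ℝ ∞ g x) (hh : ContDiffAt ℝ ∞ h x) :
    ContDiffAt ℝ ∞ (fun x => (![f x, g x, h x] : R3)) x :=
  contDiffAt_pi.2 fun i => by fin_cases i <;> assumption

theorem eventually_apply_coord {P : ℝ × ℝ → Prop} {y : R3} (i j : Fin 3)
    (hP : ∀ᶠ p in 𝓝 (y i, y j), P p) : ∀ᶠ z in 𝓝 y, P (z i, z j) :=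
  (by fun_prop : Continuous fun z : R3 => (z i, z j)).continuousAt.eventually hP

theorem isLocalDiffeoAt_mul_add_third {m s : ℝ × ℝ → ℝ} {y : R3} (hm : ContDiff ℝ ∞ m)
    (hs : ContDiff ℝ ∞ s) (hmy : m (y 0, y 1) ≠ 0) :
    IsLocalDiffeoAt (fun z : R3 => ![z 0, z 1, m (z 0, z 1) * z 2 + s (z 0, z 1)]) y := by
  have hm_ev : ∀ᶠ p in 𝓝 (y 0, y 1), m p ≠ 0 := hm.continuous.continuousAt.eventually_ne hmy
  refine ⟨contDiffAt_vec3 (by fun_prop) (by fun_prop) (by fun_prop),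
    fun z => ![z 0, z 1, (z 2 - s (z 0, z 1)) / m (z 0, z 1)],
    contDiffAt_vec3 (by fun_prop) (by fun_prop) (.div (by fun_prop) (by fun_prop) (by simpa)),
    ?_, ?_⟩
  · filter_upwards [eventually_apply_coord 0 1 hm_ev] with z hz
    ext i
    fin_cases i <;> simp [hz]
  · filter_upwards [eventually_apply_coord (y := ![y 0, y 1, _]) 0 1 (by simpa using hm_ev)]
      with z hz
    ext i
    fin_cases i <;> simp [mul_div_cancel₀ _ hz]

theorem AEquivAt.of_eventuallyEq {f g : ℝ × ℝ → R3} {p : ℝ × ℝ} (h : f =ᶠ[𝓝 p] g) :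
    AEquivAt f p g p :=
  ⟨id, id, .id, rfl, .id, h⟩

/-- The germ `(u, v) ↦ (u, v², v³ q(u, v²))`, whose special cases are the cuspidal edge (`q = 1`),
the cuspidal cross cap (`q = u`) and the cuspidal `S₁⁺` singularity (`q = u² + y`). -/
def edgeGerm (q : ℝ × ℝ → ℝ) (p : ℝ × ℝ) : R3 := ![p.1, p.2 ^ 2, p.2 ^ 3 * q (p.1, p.2 ^ 2)]

variable {q m : ℝ × ℝ → ℝ}

theorem tendsto_fst_sq : Tendsto (fun p : ℝ × ℝ => (p.1, p.2 ^ 2)) (𝓝 0) (𝓝 0) := by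
  have h := (by fun_prop : Continuous fun p : ℝ × ℝ => (p.1, p.2 ^ 2)).tendsto 0
  simpa [← Prod.zero_eq_mk] using h

theorem edgeGerm_zero : edgeGerm q 0 = 0 := by
  ext i; fin_cases i <;> simp [edgeGerm]

theorem aequivAt_edgeGerm_of_eventuallyEq {q' : ℝ × ℝ → ℝ} (h : q =ᶠ[𝓝 0] q') :
    AEquivAt (edgeGerm q) 0 (edgeGerm q') 0 :=
  .of_eventuallyEq <| (tendsto_fst_sq.eventually h).mono fun p hp => by simp [edgeGerm, hp]

theorem continuous_edgeGerm (hq : Continuous q) : Continuous (edgeGerm q) := by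
  unfold edgeGerm
  fun_prop

theorem aequivAt_edgeGerm_mul (hm : ContDiff ℝ ∞ m) (hm₀ : m 0 ≠ 0) :
    AEquivAt (edgeGerm q) 0 (edgeGerm fun p => m p * q p) 0 := by
  refine ⟨id, fun z => ![z 0, z 1, m (z 0, z 1) * z 2 + 0],
    .id, rfl, isLocalDiffeoAt_mul_add_third hm contDiff_const
      (by simpa [edgeGerm_zero, ← Prod.zero_eq_mk] using hm₀), ?_⟩
  refine .of_forall fun p => ?_
  simp only [edgeGerm, id, Matrix.cons_val, add_zero]
  ring_nf

theorem aequivAt_edgeGerm_comp {F : ℝ × ℝ → ℝ} (hF : ContDiff ℝ ∞ F) (hF₀ : F (0, 0) = 0)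
    (hF' : deriv (fun x => F (0, x)) 0 ≠ 0) :
    AEquivAt (edgeGerm fun p => q (F (p.2, p.1), p.2)) 0 (edgeGerm q) 0 := by
  obtain ⟨G, hG, hG₀, hGF, hFG⟩ := exists_contDiff_fiberwise_inverse hF hF₀ hF'
  have hsq : Tendsto (fun p : ℝ × ℝ => (p.2 ^ 2, p.1)) (𝓝 0) (𝓝 (0, 0)) := by
    simpa using (by fun_prop : Continuous fun p : ℝ × ℝ => (p.2 ^ 2, p.1)).tendsto 0
  have hcoord : Tendsto (fun z : R3 => (z 1, z 0)) (𝓝 0) (𝓝 (0, 0)) := by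
    simpa using (by fun_prop : Continuous fun z : R3 => (z 1, z 0)).tendsto 0
  have hφ : IsLocalDiffeoAt (fun p => (G (p.2 ^ 2, p.1), p.2)) (0 : ℝ × ℝ) :=
    .of_inverse (q := 0) (g := fun p => (F (p.2 ^ 2, p.1), p.2)) (by fun_prop) (by simp [hG₀])
      (by fun_prop) ((hsq.eventually hFG).mono fun p hp => Prod.ext hp rfl)
      ((hsq.eventually hGF).mono fun p hp => Prod.ext hp rfl)
  have hΦ : IsLocalDiffeoAt (fun z : R3 => (![F (z 1, z 0), z 1, z 2] : R3)) 0 := by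
    refine .of_inverse (q := 0) (g := fun z : R3 => (![G (z 1, z 0), z 1, z 2] : R3))
      (contDiffAt_vec3 (by fun_prop) (by fun_prop) (by fun_prop)) ?_
      (contDiffAt_vec3 (by fun_prop) (by fun_prop) (by fun_prop)) ?_ ?_
    · ext i; fin_cases i <;> simp [hF₀]
    · filter_upwards [hcoord.eventually hGF] with z hz
      ext i; fin_cases i <;> simp [hz]
    · filter_upwards [hcoord.eventually hFG] with z hz
      ext i; fin_cases i <;> simp [hz]
  refine ⟨_, _, hφ, by simp [hG₀], by rwa [edgeGerm_zero], ?_⟩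
  filter_upwards [hsq.eventually hFG] with p hp
  simp [edgeGerm, hp]

theorem aequivAt_edgeGerm_one (hq : ContDiff ℝ ∞ q) (hq₀ : q 0 ≠ 0) :
    AEquivAt (edgeGerm q) 0 (edgeGerm fun _ => 1) 0 := by
  have h := aequivAt_edgeGerm_mul (q := fun _ => 1) hq hq₀
  simp only [mul_one] at h
  exact h.symm (continuous_edgeGerm continuous_const).continuousAt

theorem aequivAt_edgeGerm_fst (hq : ContDiff ℝ ∞ q) (hq₀ : q 0 = 0)
    (hq' : deriv (fun x => q (x, 0)) 0 ≠ 0) :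
    AEquivAt (edgeGerm q) 0 (edgeGerm Prod.fst) 0 :=
  aequivAt_edgeGerm_comp (q := Prod.fst) (F := fun p => q (p.2, p.1)) (by fun_prop) hq₀ hq'

theorem div_pos_of_mul_pos {x y : ℝ} (h : 0 < x * y) : 0 < x / y := by
  rwa [div_pos_iff, ← mul_pos_iff]

theorem aequivAt_edgeGerm_sq_add {ρ : ℝ → ℝ} {e : ℝ × ℝ → ℝ} (hρ : ContDiff ℝ ∞ ρ)
    (he : ContDiff ℝ ∞ e) (hρe : 0 < ρ 0 * e 0) :
    AEquivAt (edgeGerm fun p => p.1 ^ 2 * ρ p.1 + p.2 * e p) 0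
      (edgeGerm fun p => p.1 ^ 2 + p.2) 0 := by
  have hρe_ev : ∀ᶠ p : ℝ × ℝ in 𝓝 0, 0 < ρ p.1 * e p :=
    continuousAt_const.eventually_lt
      (by have := hρ.continuous; have := he.continuous; fun_prop) (by simpa using hρe)
  obtain ⟨r, hr, -, hr_eq⟩ :=
    exists_contDiff_hasCompactSupport_eventuallyEq (p := (0 : ℝ × ℝ))
      (f := fun p => √(ρ p.1 / e p)) <| hρe_ev.mono fun p hp => by
    have hep : e p ≠ 0 := right_ne_zero_of_mul hp.ne'
    exact .sqrt (.div (by fun_prop) (by fun_prop) hep)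
      (div_ne_zero (left_ne_zero_of_mul hp.ne') hep)
  have hr₀ : r 0 ≠ 0 := by
    rw [hr_eq.eq_of_nhds, Real.sqrt_ne_zero']
    exact div_pos_of_mul_pos hρe
  have hfactor : (fun p : ℝ × ℝ => p.1 ^ 2 * ρ p.1 + p.2 * e p) =ᶠ[𝓝 0]
      fun p => e p * ((p.1 * r p) ^ 2 + p.2) := by
    filter_upwards [hρe_ev, hr_eq] with p hp hrp
    have hep : e p ≠ 0 := right_ne_zero_of_mul hp.ne'
    rw [mul_pow, hrp, Real.sq_sqrt (div_pos_of_mul_pos hp).le]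
    field_simp
  have hderiv : HasDerivAt (fun x => x * r (x, 0)) (r 0) 0 := by
    have hrd : DifferentiableAt ℝ (fun x => r (x, 0)) 0 :=
      (hr.differentiable (by simp)).differentiableAt.comp (0 : ℝ) (by fun_prop)
    simpa [← Prod.zero_eq_mk] using (hasDerivAt_id' (0 : ℝ)).fun_mul hrd.hasDerivAt
  have hunit := (aequivAt_edgeGerm_mul (q := fun p => (p.1 * r p) ^ 2 + p.2) he
    (right_ne_zero_of_mul hρe.ne')).symm
      (continuous_edgeGerm (by have := hr.continuous; fun_prop)).continuousAt
  refine ((aequivAt_edgeGerm_of_eventuallyEq hfactor).trans hunit).trans ?_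
  exact aequivAt_edgeGerm_comp (q := fun p => p.1 ^ 2 + p.2) (F := fun p => p.2 * r (p.2, p.1))
    (by fun_prop) (by simp) (by simpa only [hderiv.deriv] using hr₀)

end EdgeGerm

section Morse

theorem hasDerivAt_id_mul {g : ℝ → ℝ} (hg : ContinuousAt g 0) :
    HasDerivAt (fun t => t * g t) (g 0) 0 := by
  rw [hasDerivAt_iff_tendsto_slope]
  refine (hg.tendsto.mono_left nhdsWithin_le_nhds).congr' ?_
  filter_upwards [self_mem_nhdsWithin] with t (ht : t ≠ 0)
  simp [slope_def_field, ht]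

theorem exists_contDiff_localInverse_of_deriv_ne_zero {f : ℝ → ℝ} {t : ℝ} (hf : ContDiff ℝ ∞ f)
    (hf' : deriv f t ≠ 0) :
    ∃ g : ℝ → ℝ, ContDiff ℝ ∞ g ∧ g (f t) = t ∧ (∀ᶠ x in 𝓝 t, g (f x) = x) ∧
      ∀ᶠ y in 𝓝 (f t), f (g y) = y :=
  exists_contDiff_localInverse hf <| isInvertible_of_injective fun v hv => by
    rw [fderiv_eq_smul_deriv, smul_eq_mul] at hv
    exact (mul_eq_zero.1 hv).resolve_right hf'

variable {V : Type} [NormedAddCommGroup V] [NormedSpace ℝ V] [FiniteDimensional ℝ V] {x₀ : V}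

theorem exists_eventually_eq_sq_mul {F : V × ℝ → ℝ} (hF : ContDiff ℝ ∞ F)
    (hF₀ : ∀ᶠ x in 𝓝 x₀, F (x, 0) = 0) (hF₁ : ∀ᶠ x in 𝓝 x₀, deriv (fun t => F (x, t)) 0 = 0) :
    ∃ Q : V × ℝ → ℝ, ContDiff ℝ ∞ Q ∧ ∀ᶠ p : V × ℝ in 𝓝 (x₀, 0), F p = p.2 ^ 2 * Q p := by
  obtain ⟨G, hG, hFG⟩ := exists_eventually_eq_mul hF hF₀
  have hG₀ : ∀ᶠ x in 𝓝 x₀, G (x, 0) = 0 := by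
    filter_upwards [hFG.curry_nhds, hF₁] with x hx hx₁
    have hderiv := hasDerivAt_id_mul (g := fun t => G (x, t))
      (by have := hG.continuous; fun_prop)
    exact hderiv.deriv.symm.trans ((EventuallyEq.deriv_eq (hx.mono fun t ht => ht.symm)).trans hx₁)
  obtain ⟨Q, hQ, hGQ⟩ := exists_eventually_eq_mul hG hG₀
  refine ⟨Q, hQ, ?_⟩
  filter_upwards [hFG, hGQ] with p hp hq
  rw [hp, hq, sq, mul_assoc]

theorem deriv_deriv_sq_mul {g : ℝ → ℝ} (hg : ContDiff ℝ ∞ g) :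
    deriv (deriv fun t => t ^ 2 * g t) 0 = 2 * g 0 := by
  have hderiv : deriv (fun t => t ^ 2 * g t) = fun t => t * (2 * g t + t * deriv g t) := by
    ext t
    have h := ((hasDerivAt_id' t).fun_pow 2).fun_mul (hg.differentiable (by simp) t).hasDerivAt
    rw [h.deriv]
    simp only [Nat.cast_ofNat]
    ring
  have hg' : Continuous (deriv g) := hg.continuous_deriv (by simp)
  rw [hderiv, (hasDerivAt_id_mul (by have := hg.continuous; fun_prop)).deriv]
  simp

theorem exists_fiberwise_morse {F : V × ℝ → ℝ} (hF : ContDiff ℝ ∞ F)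
    (hF₀ : ∀ᶠ x in 𝓝 x₀, F (x, 0) = 0) (hF₁ : ∀ᶠ x in 𝓝 x₀, deriv (fun t => F (x, t)) 0 = 0)
    (hF₂ : deriv (deriv fun t => F (x₀, t)) 0 ≠ 0) :
    ∃ κ : ℝ, κ ≠ 0 ∧ ∃ v T : V × ℝ → ℝ, ContDiff ℝ ∞ v ∧ ContDiff ℝ ∞ T ∧
      (∀ x, v (x, 0) = 0) ∧ (∀ᶠ p in 𝓝 (x₀, 0), T (p.1, v p) = p.2) ∧
      (∀ᶠ p in 𝓝 (x₀, 0), v (p.1, T p) = p.2) ∧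
      ∀ᶠ p in 𝓝 (x₀, 0), F (p.1, T p) = κ * p.2 ^ 2 := by
  obtain ⟨Q, hQ, hFQ⟩ := exists_eventually_eq_sq_mul hF hF₀ hF₁
  have hκ : Q (x₀, 0) ≠ 0 := by
    have hslice : (fun t => F (x₀, t)) =ᶠ[𝓝 0] fun t => t ^ 2 * Q (x₀, t) :=
      hFQ.curry_nhds.self_of_nhds
    rw [hslice.deriv.deriv_eq, deriv_deriv_sq_mul (by fun_prop)] at hF₂
    exact right_ne_zero_of_mul hF₂
  have hpos : ∀ᶠ p in 𝓝 (x₀, (0 : ℝ)), 0 < Q p / Q (x₀, 0) :=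
    (hQ.continuous.div_const _).continuousAt.eventually_const_lt (by simp [hκ])
  obtain ⟨r, hr, -, hr_eq⟩ := exists_contDiff_hasCompactSupport_eventuallyEq
    (f := fun p => √(Q p / Q (x₀, 0))) (hpos.mono fun p hp => by
      exact ContDiffAt.sqrt (by fun_prop) hp.ne')
  have hr₀ : r (x₀, 0) = 1 := by simp [hr_eq.eq_of_nhds, hκ]
  have hv : ContDiff ℝ ∞ fun p : V × ℝ => p.2 * r p := by fun_prop
  have hderiv := hasDerivAt_id_mul (g := fun t => r (x₀, t)) (by have := hr.continuous; fun_prop)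
  obtain ⟨T, hT, hT₀, hTv, hvT⟩ := exists_contDiff_fiberwise_inverse (x₀ := x₀) hv (by simp)
    (by simp [hderiv.deriv, hr₀])
  refine ⟨_, hκ, _, T, hv, hT, fun x => by simp, hTv, hvT, ?_⟩
  have htendsto : Tendsto (fun p => (p.1, T p)) (𝓝 (x₀, 0)) (𝓝 (x₀, 0)) := by
    simpa [hT₀] using (by have := hT.continuous; fun_prop :
      Continuous fun p : V × ℝ => (p.1, T p)).tendsto (x₀, 0)
  filter_upwards [hvT, htendsto.eventually hFQ, htendsto.eventually hpos,
    htendsto.eventually hr_eq] with p hvp hFp hp hrp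
  rw [← hvp, hFp, hrp, mul_pow, Real.sq_sqrt hp.le]
  field_simp

end Morse

section ModelGerm

theorem deriv_ne_zero_of_comp_eventually_eq {f g : ℝ → ℝ} {x : ℝ} (hf : DifferentiableAt ℝ f x)
    (hg : DifferentiableAt ℝ g (f x)) (h : ∀ᶠ t in 𝓝 x, g (f t) = t) : deriv f x ≠ 0 := by
  intro hf'
  have hcomp := (hg.hasDerivAt.comp x hf.hasDerivAt).congr_of_eventuallyEq
    (h.mono fun t ht => ht.symm)
  simpa [hf'] using hcomp.unique (hasDerivAt_id' x)

/-- The germ at `0` of the family of graphs over the `x`-axis whose slices have velocity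
`(x - a t) • (1, c t)`. Every noncylindrical developable surface has this form near a singular
point; its singular set is the curve `x = a t`. -/
def modelGerm (a c : ℝ → ℝ) (p : ℝ × ℝ) : R3 :=
  ![p.1, ∫ s in 0..p.2, (p.1 - a s), ∫ s in 0..p.2, (p.1 - a s) * c s]

theorem contDiff_primitive {f : ℝ → ℝ} (hf : ContDiff ℝ ∞ f) :
    ContDiff ℝ ∞ fun t => ∫ s in 0..t, f s := by
  have hderiv (t : ℝ) : HasDerivAt (fun t => ∫ s in 0..t, f s) (f t) t :=
    hf.continuous.integral_hasStrictDerivAt 0 t |>.hasDerivAt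
  rw [contDiff_infty_iff_deriv, funext fun t => (hderiv t).deriv]
  exact ⟨fun t => (hderiv t).differentiableAt, hf⟩

variable {a c : ℝ → ℝ}

theorem integral_sub_mul_eq (ha : Continuous a) (hc : Continuous c) (x t : ℝ) :
    ∫ s in 0..t, (x - a s) * c s = x * (∫ s in 0..t, c s) - ∫ s in 0..t, a s * c s := by
  rw [← intervalIntegral.integral_const_mul, ← intervalIntegral.integral_sub]
  · simp only [sub_mul]
  · exact (hc.const_mul _).intervalIntegrable _ _
  · exact (ha.mul hc).intervalIntegrable _ _

theorem contDiff_integral_sub_mul (ha : ContDiff ℝ ∞ a) (hc : ContDiff ℝ ∞ c) :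
    ContDiff ℝ ∞ fun p : ℝ × ℝ => ∫ s in 0..p.2, (p.1 - a s) * c s := by
  simp only [integral_sub_mul_eq ha.continuous hc.continuous]
  exact (contDiff_fst.mul ((contDiff_primitive hc).comp contDiff_snd)).sub
    ((contDiff_primitive (ha.mul hc)).comp contDiff_snd)

theorem contDiff_integral_sub (ha : ContDiff ℝ ∞ a) :
    ContDiff ℝ ∞ fun p : ℝ × ℝ => ∫ s in 0..p.2, (p.1 - a s) := by
  simpa using contDiff_integral_sub_mul ha (contDiff_const (c := 1))

theorem contDiff_modelGerm (ha : ContDiff ℝ ∞ a) (hc : ContDiff ℝ ∞ c) :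
    ContDiff ℝ ∞ (modelGerm a c) :=
  contDiff_iff_contDiffAt.2 fun _ => contDiffAt_vec3 contDiffAt_fst
    (contDiff_integral_sub ha).contDiffAt (contDiff_integral_sub_mul ha hc).contDiffAt

theorem modelGerm_zero : modelGerm a c 0 = 0 := by
  ext i; fin_cases i <;> simp [modelGerm]

theorem hasDerivAt_integral_sub (ha : ContDiff ℝ ∞ a) (x t : ℝ) :
    HasDerivAt (fun t => ∫ s in 0..t, (x - a s)) (x - a t) t :=
  ((by have := ha.continuous; fun_prop : Continuous fun s => x - a s).integral_hasStrictDerivAt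
    0 t).hasDerivAt

theorem hasDerivAt_integral_sub_mul (ha : ContDiff ℝ ∞ a) (hc : ContDiff ℝ ∞ c) (x t : ℝ) :
    HasDerivAt (fun t => ∫ s in 0..t, (x - a s) * c s) ((x - a t) * c t) t :=
  ((by have := ha.continuous; have := hc.continuous; fun_prop :
    Continuous fun s => (x - a s) * c s).integral_hasStrictDerivAt 0 t).hasDerivAt

theorem isLocalDiffeoAt_fst_add {b : ℝ → ℝ} {v T : ℝ × ℝ → ℝ} (hb : ContDiff ℝ ∞ b)
    (hv : ContDiff ℝ ∞ v) (hT : ContDiff ℝ ∞ T) (hb₀ : b 0 = 0)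
    (hTv : ∀ᶠ p in 𝓝 (0, 0), T (p.1, v p) = p.2) (hvT : ∀ᶠ p in 𝓝 (0, 0), v (p.1, T p) = p.2)
    (hT₀ : T 0 = 0) : IsLocalDiffeoAt (fun p : ℝ × ℝ => (p.1, b p.1 + T p)) 0 := by
  have hsub : Tendsto (fun p : ℝ × ℝ => (p.1, p.2 - b p.1)) (𝓝 0) (𝓝 (0, 0)) := by
    simpa [hb₀] using (by have := hb.continuous; fun_prop :
      Continuous fun p : ℝ × ℝ => (p.1, p.2 - b p.1)).tendsto 0
  refine .of_inverse (g := fun p => (p.1, v (p.1, p.2 - b p.1))) (q := 0) (by fun_prop)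
    (by simp [hb₀, hT₀]) (by fun_prop) ?_ ?_
  · filter_upwards [hvT] with p hp
    simp [hp]
  · filter_upwards [hsub.eventually hTv] with p hp
    simp [hp]

theorem exists_morse_coordinates (ha : ContDiff ℝ ∞ a) (ha₀ : a 0 = 0) (ha' : deriv a 0 ≠ 0) :
    ∃ (κ : ℝ) (b : ℝ → ℝ) (v T : ℝ × ℝ → ℝ), κ ≠ 0 ∧ ContDiff ℝ ∞ b ∧ ContDiff ℝ ∞ v ∧
      ContDiff ℝ ∞ T ∧ b 0 = 0 ∧ (∀ᶠ x in 𝓝 0, a (b x) = x) ∧ (∀ x, v (x, 0) = 0) ∧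
      (∀ᶠ p in 𝓝 (0, 0), T (p.1, v p) = p.2) ∧ (∀ᶠ p in 𝓝 (0, 0), v (p.1, T p) = p.2) ∧
      ∀ᶠ p : ℝ × ℝ in 𝓝 0, ∫ s in 0..b p.1 + T p, (p.1 - a s) =
        (∫ s in 0..b p.1, (p.1 - a s)) + κ * p.2 ^ 2 := by
  obtain ⟨b, hb, hb₀, -, hab⟩ := exists_contDiff_localInverse_of_deriv_ne_zero ha ha'
  rw [ha₀] at hb₀ hab
  have hY := contDiff_integral_sub ha
  have hF' (x : ℝ) : deriv (fun w => (∫ s in 0..b x + w, (x - a s)) - ∫ s in 0..b x, (x - a s)) =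
      fun w => x - a (b x + w) :=
    funext fun w => (((hasDerivAt_integral_sub ha x _).comp_const_add _ _).sub_const _).deriv
  obtain ⟨κ, hκ, v, T, hv, hT, hv₀, hTv, hvT, hFT⟩ := exists_fiberwise_morse (x₀ := (0 : ℝ))
    (F := fun p => (∫ s in 0..b p.1 + p.2, (p.1 - a s)) - ∫ s in 0..b p.1, (p.1 - a s))
    ((hY.comp (by fun_prop : ContDiff ℝ ∞ fun p : ℝ × ℝ => (p.1, b p.1 + p.2))).sub
      (hY.comp (by fun_prop : ContDiff ℝ ∞ fun p : ℝ × ℝ => (p.1, b p.1))))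
    (.of_forall fun x => by simp) (by simpa [hF', sub_eq_zero, eq_comm] using hab)
    (by simp only; rw [hF']; simp [hb₀, ha'])
  refine ⟨κ, b, v, T, hκ, hb, hv, hT, hb₀, hab, hv₀, hTv, hvT, ?_⟩
  filter_upwards [hFT] with p hp
  rw [← hp, add_sub_cancel]

theorem exists_morse_chart (ha : ContDiff ℝ ∞ a) (ha₀ : a 0 = 0) (ha' : deriv a 0 ≠ 0) :
    ∃ (κ : ℝ) (y₀ β : ℝ → ℝ) (τ θ : ℝ × ℝ → ℝ), κ ≠ 0 ∧ ContDiff ℝ ∞ y₀ ∧ ContDiff ℝ ∞ β ∧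
      ContDiff ℝ ∞ τ ∧ ContDiff ℝ ∞ θ ∧ β 0 ≠ 0 ∧ θ 0 ≠ 0 ∧
      (∀ᶠ p in 𝓝 0, τ p = p.1 * β p.1 + p.2 * θ p) ∧
      IsLocalDiffeoAt (fun p : ℝ × ℝ => (p.1, τ p)) 0 ∧
      ∀ᶠ p : ℝ × ℝ in 𝓝 0, ∫ s in 0..τ p, (p.1 - a s) = y₀ p.1 + κ * p.2 ^ 2 := by
  obtain ⟨κ, b, v, T, hκ, hb, hv, hT, hb₀, hab, hv₀, hTv, hvT, hmorse⟩ :=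
    exists_morse_coordinates ha ha₀ ha'
  have hT₀ : ∀ᶠ x in 𝓝 0, T (x, 0) = 0 := by
    filter_upwards [hTv.curry_nhds] with x hx
    simpa [hv₀] using hx.self_of_nhds
  obtain ⟨θ, hθ, hTθ⟩ := exists_eventually_eq_mul hT hT₀
  obtain ⟨β, hβ, hbβ⟩ := exists_eventuallyEq_pow_mul (n := 1) hb
    (by simpa [hb₀] using (hb.differentiable (by simp) 0).hasDerivAt.isBigO_sub)
  simp only [pow_one] at hbβ
  have hderiv_b : deriv b 0 = β 0 :=
    (EventuallyEq.deriv_eq hbβ).trans (hasDerivAt_id_mul hβ.continuous.continuousAt).deriv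
  have hderiv_T : deriv (fun t => T (0, t)) 0 = θ (0, 0) :=
    (EventuallyEq.deriv_eq hTθ.curry_nhds.self_of_nhds).trans
      (hasDerivAt_id_mul (by have := hθ.continuous; fun_prop)).deriv
  refine ⟨κ, fun x => ∫ s in 0..b x, (x - a s), β, fun p => b p.1 + T p, θ, hκ,
    (contDiff_integral_sub ha).comp (contDiff_id.prodMk hb), hβ, by fun_prop, hθ, ?_, ?_, ?_,
    isLocalDiffeoAt_fst_add hb hv hT hb₀ hTv hvT hT₀.self_of_nhds, hmorse⟩
  · rw [← hderiv_b]
    exact deriv_ne_zero_of_comp_eventually_eq (hb.differentiable (by simp) 0)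
      (ha.differentiable (by simp) _) hab
  · rw [Prod.zero_eq_mk, ← hderiv_T]
    exact deriv_ne_zero_of_comp_eventually_eq (g := fun t => v (0, t))
      ((hT.differentiable (by simp)).comp (by fun_prop) 0)
      ((hv.differentiable (by simp)).comp (by fun_prop) _) hvT.curry_nhds.self_of_nhds
  · filter_upwards [hTθ, continuousAt_fst.eventually hbβ] with p hp hp₁
    rw [hp, hp₁]

end ModelGerm

section EdgeNormalForm

theorem hasDerivAt_comp_sq {g : ℝ × ℝ → ℝ} (hg : ContDiff ℝ ∞ g) (x v : ℝ) :
    HasDerivAt (fun v => g (x, v ^ 2)) (2 * v * pw g (x, v ^ 2)) v := by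
  have hsq := (hasDerivAt_const v x).prodMk ((hasDerivAt_id' v).fun_pow 2)
  have h := (hg.differentiable (by simp) (x, v ^ 2)).hasFDerivAt.comp_hasDerivAt v hsq
  have hdir : ((0 : ℝ), ((2 : ℕ) : ℝ) * v ^ (2 - 1) * 1) = (2 * v) • ((0 : ℝ), (1 : ℝ)) := by simp
  rwa [hdir, map_smul] at h

theorem hasDerivAt_add_pow_three_mul_comp_sq {e o : ℝ × ℝ → ℝ} (he : ContDiff ℝ ∞ e)
    (ho : ContDiff ℝ ∞ o) (x v : ℝ) :
    HasDerivAt (fun v => e (x, v ^ 2) + v ^ 3 * o (x, v ^ 2))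
      (v * (2 * pw e (x, v ^ 2) + 3 * v * o (x, v ^ 2) + 2 * v ^ 3 * pw o (x, v ^ 2))) v := by
  refine ((hasDerivAt_comp_sq he x v).fun_add
    (((hasDerivAt_id' v).fun_pow 3).fun_mul (hasDerivAt_comp_sq ho x v))).congr_deriv ?_
  simp only [Nat.cast_ofNat]
  ring

theorem continuous_pw {g : ℝ × ℝ → ℝ} (hg : ContDiff ℝ ∞ g) : Continuous (pw g) :=
  (hg.continuous_fderiv (by simp)).clm_apply continuous_const

theorem exists_eq_add_pow_three_mul_comp_sq {f : ℝ × ℝ → ℝ} (hf : ContDiff ℝ ∞ f)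
    (hf' : ∀ᶠ x in 𝓝 0, deriv (fun v => f (x, v)) 0 = 0) :
    ∃ e o : ℝ × ℝ → ℝ, ContDiff ℝ ∞ e ∧ ContDiff ℝ ∞ o ∧
      ∀ᶠ p in 𝓝 0, f p = e (p.1, p.2 ^ 2) + p.2 ^ 3 * o (p.1, p.2 ^ 2) := by
  obtain ⟨e, o, he, ho, hfeo⟩ :=
    exists_eq_add_mul_comp_sq (x₀ := (0 : ℝ)) (f := f) (.of_forall fun p => hf.contDiffAt)
  have ho₀ : ∀ᶠ x in 𝓝 0, o (x, 0) = 0 := by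
    filter_upwards [hfeo.curry_nhds, hf'] with x hx hx'
    have hodd := hasDerivAt_id_mul (g := fun v => o (x, v ^ 2))
      (by have := ho.continuous; fun_prop)
    have h := (((hasDerivAt_comp_sq he x 0).fun_add hodd).congr_of_eventuallyEq hx).deriv
    simpa [hx'] using h.symm
  obtain ⟨o', ho', hoo'⟩ := exists_eventually_eq_mul ho ho₀
  refine ⟨e, o', he, ho', ?_⟩
  filter_upwards [hfeo, tendsto_fst_sq.eventually hoo'] with p hp hop
  rw [hp, hop]
  ring

theorem eventually_sub_comp_neg_eq {f m e o : ℝ × ℝ → ℝ} (he : ContDiff ℝ ∞ e)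
    (ho : ContDiff ℝ ∞ o) (hfeo : ∀ᶠ p in 𝓝 0, f p = e (p.1, p.2 ^ 2) + p.2 ^ 3 * o (p.1, p.2 ^ 2))
    (hfm : ∀ᶠ p in 𝓝 (0 : ℝ × ℝ), HasDerivAt (fun v => f (p.1, v)) (p.2 * m p) p.2) :
    ∀ᶠ p in 𝓝 (0 : ℝ × ℝ), m p - m (p.1, -p.2) =
      p.2 * (6 * o (p.1, p.2 ^ 2) + 4 * p.2 ^ 2 * pw o (p.1, p.2 ^ 2)) := by
  have hm : ∀ᶠ p in 𝓝 (0 : ℝ × ℝ), p.2 ≠ 0 → m p = 2 * pw e (p.1, p.2 ^ 2) +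
      3 * p.2 * o (p.1, p.2 ^ 2) + 2 * p.2 ^ 3 * pw o (p.1, p.2 ^ 2) := by
    filter_upwards [hfeo.eventually_nhds, hfm] with ⟨x, v⟩ hfp hmp hv
    have hslice : (fun v => f (x, v)) =ᶠ[𝓝 v] fun v => e (x, v ^ 2) + v ^ 3 * o (x, v ^ 2) :=
      (Continuous.prodMk_right x).continuousAt.eventually hfp
    exact mul_left_cancel₀ hv (hmp.unique
      ((hasDerivAt_add_pow_three_mul_comp_sq he ho x v).congr_of_eventuallyEq hslice))
  have hneg : Tendsto (fun p : ℝ × ℝ => (p.1, -p.2)) (𝓝 0) (𝓝 0) := by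
    simpa [Prod.zero_eq_mk] using
      (by fun_prop : Continuous fun p : ℝ × ℝ => (p.1, -p.2)).tendsto 0
  filter_upwards [hm, hneg.eventually hm] with ⟨x, v⟩ hp hnp
  rcases eq_or_ne v 0 with rfl | hv
  · simp
  · rw [hp hv, hnp (neg_ne_zero.2 hv), neg_sq]
    ring

variable {a c : ℝ → ℝ}

theorem isLocalDiffeoAt_shear {κ : ℝ} {y₀ : ℝ → ℝ} {e : ℝ × ℝ → ℝ} (hκ : κ ≠ 0)
    (hy₀ : ContDiff ℝ ∞ y₀) (he : ContDiff ℝ ∞ e) (z : R3) :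
    IsLocalDiffeoAt (fun z : R3 =>
      (![z 0, (z 1 - y₀ (z 0)) / κ, z 2 - e (z 0, (z 1 - y₀ (z 0)) / κ)] : R3)) z := by
  refine .of_inverse (g := fun z : R3 => (![z 0, κ * z 1 + y₀ (z 0), z 2 + e (z 0, z 1)] : R3))
    (contDiffAt_vec3 (by fun_prop) (by fun_prop) (by fun_prop)) rfl
    (contDiffAt_vec3 (by fun_prop) (by fun_prop) (by fun_prop))
    (.of_forall fun z => ?_) (.of_forall fun z => ?_) <;>
  · ext i
    fin_cases i <;> simp [mul_div_cancel₀, mul_div_cancel_left₀, hκ]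

theorem eventually_hasDerivAt_integral_comp {y₀ : ℝ → ℝ} {τ : ℝ × ℝ → ℝ} {κ : ℝ}
    (ha : ContDiff ℝ ∞ a) (hc : ContDiff ℝ ∞ c) (hτ : ContDiff ℝ ∞ τ)
    (hY : ∀ᶠ p : ℝ × ℝ in 𝓝 0, ∫ s in 0..τ p, (p.1 - a s) = y₀ p.1 + κ * p.2 ^ 2) :
    ∀ᶠ p : ℝ × ℝ in 𝓝 0, HasDerivAt (fun v => ∫ s in 0..τ (p.1, v), (p.1 - a s) * c s)
      (p.2 * (2 * κ * c (τ p))) p.2 := by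
  filter_upwards [hY.eventually_nhds] with ⟨x, v⟩ hp
  have hτv : HasDerivAt (fun v => τ (x, v)) (pw τ (x, v)) v :=
    (hτ.differentiable (by simp) (x, v)).hasFDerivAt.comp_hasDerivAt v
      ((hasDerivAt_const _ _).prodMk (hasDerivAt_id _))
  have hslice : (fun v => ∫ s in 0..τ (x, v), (x - a s)) =ᶠ[𝓝 v] fun v => y₀ x + κ * v ^ 2 :=
    (Continuous.prodMk_right x).continuousAt.eventually hp
  have hvel := ((hasDerivAt_integral_sub ha x _).comp v hτv).unique
    ((((hasDerivAt_id' v).fun_pow 2).const_mul κ |>.const_add (y₀ x)).congr_of_eventuallyEq hslice)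
  refine ((hasDerivAt_integral_sub_mul ha hc x _).comp v hτv).congr_deriv ?_
  simp only [Nat.cast_ofNat] at hvel
  linear_combination c (τ (x, v)) * hvel

/-- Twice the odd part in `v` of `c (x β(x) + v θ(x, v))`. -/
def oddPart (c β : ℝ → ℝ) (θ : ℝ × ℝ → ℝ) (p : ℝ × ℝ) : ℝ :=
  c (p.1 * β p.1 + p.2 * θ p) - c (p.1 * β p.1 - p.2 * θ (p.1, -p.2))

theorem exists_aequivAt_modelGerm_edgeGerm (ha : ContDiff ℝ ∞ a) (hc : ContDiff ℝ ∞ c)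
    (ha₀ : a 0 = 0) (ha' : deriv a 0 ≠ 0) :
    ∃ (κ : ℝ) (β : ℝ → ℝ) (θ o : ℝ × ℝ → ℝ), κ ≠ 0 ∧ ContDiff ℝ ∞ β ∧ ContDiff ℝ ∞ θ ∧
      ContDiff ℝ ∞ o ∧ β 0 ≠ 0 ∧ θ 0 ≠ 0 ∧
      (∀ᶠ p in 𝓝 (0 : ℝ × ℝ),
        κ * oddPart c β θ p = p.2 * (3 * o (p.1, p.2 ^ 2) + 2 * p.2 ^ 2 * pw o (p.1, p.2 ^ 2))) ∧
      AEquivAt (modelGerm a c) 0 (edgeGerm o) 0 := by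
  obtain ⟨κ, y₀, β, τ, θ, hκ, hy₀, hβ, hτ, hθ, hβ₀, hθ₀, hτβθ, hchart, hY⟩ :=
    exists_morse_chart ha ha₀ ha'
  have hN : ContDiff ℝ ∞ fun p : ℝ × ℝ => ∫ s in 0..τ p, (p.1 - a s) * c s :=
    (contDiff_integral_sub_mul ha hc).comp (contDiff_fst.prodMk hτ)
  have hN' := eventually_hasDerivAt_integral_comp ha hc hτ hY
  obtain ⟨e, o, he, ho, hNeo⟩ := exists_eq_add_pow_three_mul_comp_sq hN <| by
    filter_upwards [hN'.curry_nhds] with x hx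
    simpa using hx.self_of_nhds.deriv
  refine ⟨κ, β, θ, o, hκ, hβ, hθ, ho, hβ₀, hθ₀, ?_, _, _, hchart, ?_,
    isLocalDiffeoAt_shear hκ hy₀ he _, ?_⟩
  · have hneg : Tendsto (fun p : ℝ × ℝ => (p.1, -p.2)) (𝓝 0) (𝓝 0) := by
      simpa [Prod.zero_eq_mk] using
        (by fun_prop : Continuous fun p : ℝ × ℝ => (p.1, -p.2)).tendsto 0
    filter_upwards [eventually_sub_comp_neg_eq he ho hNeo hN', hτβθ, hneg.eventually hτβθ]
      with p hp hτp hτn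
    rw [hτp, hτn] at hp
    simp only [neg_mul, ← sub_eq_add_neg] at hp
    rw [oddPart]
    linear_combination hp / 2
  · exact Prod.ext rfl (by simpa using hτβθ.self_of_nhds)
  · filter_upwards [hY, hNeo] with p hYp hNp
    ext i
    fin_cases i <;> simp [modelGerm, edgeGerm, hYp, hNp, hκ]

end EdgeNormalForm

section EdgeCriteria

theorem exists_eventuallyEq_pow_mul_ne_zero {n : ℕ} {f : ℝ → ℝ} (hf : ContDiff ℝ ∞ f)
    (hfn : f =O[𝓝 0] fun t => t ^ n) (hfn' : ¬ f =O[𝓝 0] fun t => t ^ (n + 1)) :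
    ∃ r : ℝ → ℝ, ContDiff ℝ ∞ r ∧ r 0 ≠ 0 ∧ ∀ᶠ t in 𝓝 0, f t = t ^ n * r t := by
  obtain ⟨r, hr, hfr⟩ := exists_eventuallyEq_pow_mul hf hfn
  refine ⟨r, hr, fun hr₀ => hfn' ?_, hfr⟩
  have hr_id : r =O[𝓝 0] fun t => t := by
    simpa [hr₀] using (hr.differentiable (by simp) 0).hasDerivAt.isBigO_sub
  exact ((isBigO_refl (fun t : ℝ => t ^ n) (𝓝 0)).mul hr_id).congr' (hfr.mono fun t ht => ht.symm)
    .rfl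

theorem hasDerivAt_pow_succ_mul {n : ℕ} {c r : ℝ → ℝ} (hr : ContDiff ℝ ∞ r) {t : ℝ}
    (hcr : ∀ᶠ s in 𝓝 t, c s = s ^ (n + 1) * r s) :
    HasDerivAt c (t ^ n * ((n + 1) * r t + t * deriv r t)) t := by
  refine ((((hasDerivAt_id' t).fun_pow (n + 1)).fun_mul
    (hr.differentiable (by simp) t).hasDerivAt).congr_of_eventuallyEq hcr).congr_deriv ?_
  push_cast
  simp only [mul_one]
  ring

theorem deriv_ne_zero_of_not_isBigO {a : ℝ → ℝ} (ha : ContDiff ℝ ∞ a) (ha₀ : a 0 = 0)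
    (ha' : ¬ a =O[𝓝 0] fun t => t ^ 2) : deriv a 0 ≠ 0 := by
  obtain ⟨r, hr, hr₀, har⟩ := exists_eventuallyEq_pow_mul_ne_zero (n := 1) ha
    (by simpa [ha₀] using (ha.differentiable (by simp) 0).hasDerivAt.isBigO_sub) ha'
  rw [(hasDerivAt_pow_succ_mul (n := 0) hr (by simpa using har)).deriv]
  simpa using hr₀

variable {κ : ℝ} {a c β ρ : ℝ → ℝ} {θ o : ℝ × ℝ → ℝ} {n : ℕ}

theorem exists_eventually_eq_pow_mul_of_oddPart (hβ : ContDiff ℝ ∞ β) (hθ : ContDiff ℝ ∞ θ)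
    (hρ : ContDiff ℝ ∞ ρ) (ho : ContDiff ℝ ∞ o) (hcρ : ∀ᶠ t in 𝓝 0, c t = t ^ (n + 1) * ρ t)
    (h : ∀ᶠ p in 𝓝 (0 : ℝ × ℝ), κ * oddPart c β θ p =
      p.2 * (3 * o (p.1, p.2 ^ 2) + 2 * p.2 ^ 2 * pw o (p.1, p.2 ^ 2))) :
    ∃ r : ℝ → ℝ, ContDiff ℝ ∞ r ∧ r 0 = 2 * (n + 1) / 3 * κ * ρ 0 * β 0 ^ n * θ 0 ∧
      ∀ᶠ x in 𝓝 0, o (x, 0) = x ^ n * r x := by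
  have : ContDiff ℝ ∞ (deriv ρ) := (contDiff_infty_iff_deriv.1 hρ).2
  refine ⟨fun x => 2 / 3 * κ * β x ^ n * ((n + 1) * ρ (x * β x) + x * β x * deriv ρ (x * β x)) *
    θ (x, 0), by fun_prop, by simp only [zero_mul, add_zero, ← Prod.zero_eq_mk]; ring, ?_⟩
  have hbase : Tendsto (fun x => x * β x) (𝓝 0) (𝓝 0) := by
    simpa using (by have := hβ.continuous; fun_prop : Continuous fun x => x * β x).tendsto 0
  filter_upwards [h.curry_nhds, hbase.eventually hcρ.eventually_nhds] with x hx hcx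
  have hc := hasDerivAt_pow_succ_mul hρ hcx
  have hplus : HasDerivAt (fun v => x * β x + v * θ (x, v)) (θ (x, 0)) 0 :=
    (hasDerivAt_id_mul (by have := hθ.continuous; fun_prop)).const_add _
  have hminus : HasDerivAt (fun v => x * β x - v * θ (x, -v)) (-θ (x, -0)) 0 :=
    (hasDerivAt_id_mul (g := fun v => θ (x, -v)) (by have := hθ.continuous; fun_prop)).const_sub _
  have hodd : HasDerivAt (fun v => κ * oddPart c β θ (x, v)) _ 0 :=
    ((HasDerivAt.comp 0 (by simpa using hc) hplus).sub
      (HasDerivAt.comp 0 (by simpa using hc) hminus)).const_mul κ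
  have hrhs := hasDerivAt_id_mul
    (g := fun v => 3 * o (x, v ^ 2) + 2 * v ^ 2 * pw o (x, v ^ 2))
    (by have := ho.continuous; have := continuous_pw ho; fun_prop)
  have heq := hodd.unique (hrhs.congr_of_eventuallyEq hx)
  simp only [neg_zero, ne_eq, OfNat.ofNat_ne_zero, not_false_eq_true, zero_pow, mul_zero, zero_mul,
    add_zero, mul_pow] at heq
  linear_combination -heq / 3

theorem exists_aequivAt_modelGerm_edgeGerm_of_pow (ha : ContDiff ℝ ∞ a) (hc : ContDiff ℝ ∞ c)
    (ha₀ : a 0 = 0) (ha' : ¬ a =O[𝓝 0] fun t => t ^ 2) (hcn : c =O[𝓝 0] fun t => t ^ (n + 1))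
    (hcn' : ¬ c =O[𝓝 0] fun t => t ^ (n + 2)) :
    ∃ (r : ℝ → ℝ) (o : ℝ × ℝ → ℝ), ContDiff ℝ ∞ r ∧ ContDiff ℝ ∞ o ∧ r 0 ≠ 0 ∧
      (∀ᶠ x in 𝓝 0, o (x, 0) = x ^ n * r x) ∧ AEquivAt (modelGerm a c) 0 (edgeGerm o) 0 := by
  obtain ⟨ρ, hρ, hρ₀, hcρ⟩ := exists_eventuallyEq_pow_mul_ne_zero hc hcn hcn'
  obtain ⟨κ, β, θ, o, hκ, hβ, hθ, ho, hβ₀, hθ₀, hodd, hequiv⟩ :=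
    exists_aequivAt_modelGerm_edgeGerm ha hc ha₀ (deriv_ne_zero_of_not_isBigO ha ha₀ ha')
  obtain ⟨r, hr, hr₀, hor⟩ := exists_eventually_eq_pow_mul_of_oddPart hβ hθ hρ ho hcρ hodd
  refine ⟨r, o, hr, ho, ?_, hor, hequiv⟩
  rw [hr₀]
  positivity

theorem aequivAt_modelGerm_cuspidalEdge (ha : ContDiff ℝ ∞ a) (hc : ContDiff ℝ ∞ c) (ha₀ : a 0 = 0)
    (ha' : ¬ a =O[𝓝 0] fun t => t ^ 2) (hc₀ : c 0 = 0) (hc' : ¬ c =O[𝓝 0] fun t => t ^ 2) :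
    AEquivAt (modelGerm a c) 0 (edgeGerm fun _ => 1) 0 := by
  obtain ⟨r, o, -, ho, hr₀, hor, hequiv⟩ := exists_aequivAt_modelGerm_edgeGerm_of_pow (n := 0) ha hc
    ha₀ ha' (by simpa [hc₀] using (hc.differentiable (by simp) 0).hasDerivAt.isBigO_sub) hc'
  refine hequiv.trans (aequivAt_edgeGerm_one ho ?_)
  rw [Prod.zero_eq_mk, hor.self_of_nhds]
  simpa using hr₀

theorem aequivAt_modelGerm_cuspidalCrossCap (ha : ContDiff ℝ ∞ a) (hc : ContDiff ℝ ∞ c)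
    (ha₀ : a 0 = 0) (ha' : ¬ a =O[𝓝 0] fun t => t ^ 2) (hc₂ : c =O[𝓝 0] fun t => t ^ 2)
    (hc₃ : ¬ c =O[𝓝 0] fun t => t ^ 3) : AEquivAt (modelGerm a c) 0 (edgeGerm Prod.fst) 0 := by
  obtain ⟨r, o, hr, ho, hr₀, hor, hequiv⟩ :=
    exists_aequivAt_modelGerm_edgeGerm_of_pow (n := 1) ha hc ha₀ ha' hc₂ hc₃
  simp only [pow_one] at hor
  refine hequiv.trans (aequivAt_edgeGerm_fst ho ?_ ?_)
  · rw [Prod.zero_eq_mk, hor.self_of_nhds, zero_mul]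
  · rwa [EventuallyEq.deriv_eq hor, (hasDerivAt_id_mul hr.continuous.continuousAt).deriv]

theorem pw_eq_of_eventually_eq {e : ℝ × ℝ → ℝ} (ho : DifferentiableAt ℝ o 0) (he : Continuous e)
    (hoe : ∀ᶠ p in 𝓝 (0 : ℝ × ℝ), o p = o (p.1, 0) + p.2 * e p) : pw o 0 = e 0 := by
  have hslice : HasDerivAt (fun y => o (0, y)) (pw o 0) 0 :=
    ho.hasFDerivAt.comp_hasDerivAt (0 : ℝ)
      ((hasDerivAt_const _ _).prodMk (hasDerivAt_id' _))
  refine hslice.unique (((hasDerivAt_id_mul (g := fun y => e (0, y))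
    (by fun_prop)).const_add (o (0, 0))).congr_of_eventuallyEq ?_)
  exact (Continuous.tendsto' (by fun_prop : Continuous fun y : ℝ => ((0 : ℝ), y)) 0 0
    rfl).eventually hoe

theorem eq_of_oddPart_of_pow_three {e : ℝ × ℝ → ℝ} (hθ : Continuous θ) (hρ : Continuous ρ)
    (ho : ContDiff ℝ ∞ o) (he : Continuous e)
    (hcρ : ∀ᶠ t in 𝓝 0, c t = t ^ 3 * ρ t)
    (hoe : ∀ᶠ p in 𝓝 (0 : ℝ × ℝ), o p = o (p.1, 0) + p.2 * e p) (ho₀ : o 0 = 0)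
    (h : ∀ᶠ p in 𝓝 (0 : ℝ × ℝ), κ * oddPart c β θ p =
      p.2 * (3 * o (p.1, p.2 ^ 2) + 2 * p.2 ^ 2 * pw o (p.1, p.2 ^ 2))) :
    5 * e 0 = 2 * κ * ρ 0 * θ 0 ^ 3 := by
  have hpwc := continuous_pw ho
  have hcancel := (eq_zero_and_eq_of_pow_mul_eq (n := 3) (r := 0)
    (u := fun v => κ * (θ (0, v) ^ 3 * ρ (v * θ (0, v)) + θ (0, -v) ^ 3 * ρ (-v * θ (0, -v))))
    (q := fun v => 3 * e (0, v ^ 2) + 2 * pw o (0, v ^ 2)) (by fun_prop) (by fun_prop) ?_).2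
  · simp only [neg_zero, zero_mul, ← Prod.zero_eq_mk, ne_eq, OfNat.ofNat_ne_zero,
      not_false_eq_true, zero_pow,
      pw_eq_of_eventually_eq (ho.differentiable (by simp) 0) he hoe] at hcancel
    linear_combination hcancel
  have hsnd {f : ℝ → ℝ} (hf : Continuous f) (hf₀ : f 0 = 0) :
      Tendsto (fun v => ((0 : ℝ), f v)) (𝓝 0) (𝓝 0) :=
    Continuous.tendsto' (by fun_prop) 0 0 (by rw [hf₀, Prod.zero_eq_mk])
  have hzero {f : ℝ → ℝ} (hf : Continuous f) (hf₀ : f 0 = 0) : Tendsto f (𝓝 0) (𝓝 0) :=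
    hf.tendsto' 0 0 hf₀
  filter_upwards [(hsnd continuous_id rfl).eventually h,
    (hsnd (f := fun v => v ^ 2) (by fun_prop) (by simp)).eventually hoe,
    (hzero (f := fun v => v * θ (0, v)) (by fun_prop) (by simp)).eventually hcρ,
    (hzero (f := fun v => -v * θ (0, -v)) (by fun_prop) (by simp)).eventually hcρ] with
    v hv hov hc₁ hc₂
  rw [← Prod.zero_eq_mk, ho₀] at hov
  simp only [id, oddPart, zero_mul, zero_add, zero_sub, ← neg_mul, hc₁, hc₂, hov] at hv
  simp only [Pi.zero_apply, zero_mul, Finset.sum_const_zero, add_zero]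
  linear_combination hv

theorem aequivAt_modelGerm_cuspidalS₁ (ha : ContDiff ℝ ∞ a) (hc : ContDiff ℝ ∞ c)
    (ha₀ : a 0 = 0) (ha' : ¬ a =O[𝓝 0] fun t => t ^ 2) (hc₃ : c =O[𝓝 0] fun t => t ^ 3)
    (hc₄ : ¬ c =O[𝓝 0] fun t => t ^ 4) :
    AEquivAt (modelGerm a c) 0 (edgeGerm fun p => p.1 ^ 2 + p.2) 0 := by
  obtain ⟨ρ, hρ, hρ₀, hcρ⟩ := exists_eventuallyEq_pow_mul_ne_zero hc hc₃ hc₄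
  obtain ⟨κ, β, θ, o, hκ, hβ, hθ, ho, hβ₀, hθ₀, hodd, hequiv⟩ :=
    exists_aequivAt_modelGerm_edgeGerm ha hc ha₀ (deriv_ne_zero_of_not_isBigO ha ha₀ ha')
  obtain ⟨r, hr, hr₀, hor⟩ := exists_eventually_eq_pow_mul_of_oddPart hβ hθ hρ ho hcρ hodd
  obtain ⟨e, he, hoe⟩ := exists_eventually_eq_mul (x₀ := (0 : ℝ)) (f := fun p => o p - o (p.1, 0))
    (by fun_prop) (.of_forall fun x => by simp)
  simp only [sub_eq_iff_eq_add'] at hoe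
  have he₀ := eq_of_oddPart_of_pow_three hθ.continuous hρ.continuous ho he.continuous hcρ hoe
    (by rw [Prod.zero_eq_mk, hor.self_of_nhds]; simp) hodd
  have hpos : 0 < r 0 * e 0 := by
    have hsq : r 0 * e 0 = (2 * κ * ρ 0 * β 0 * θ 0 ^ 2) ^ 2 / 5 := by
      rw [hr₀, eq_div_of_mul_eq (by norm_num) ((mul_comm _ _).trans he₀)]
      push_cast
      ring
    rw [hsq]
    positivity
  refine hequiv.trans (.trans (aequivAt_edgeGerm_of_eventuallyEq ?_)
    (aequivAt_edgeGerm_sq_add hr he hpos))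
  filter_upwards [hoe, continuousAt_fst.eventually hor] with p hp hrp
  rw [hp, hrp]

end EdgeCriteria

section RuledSurface

theorem eventually_forall_uIcc {P : ℝ → Prop} (hP : ∀ᶠ t in 𝓝 0, P t) :
    ∀ᶠ t in 𝓝 0, ∀ s ∈ Set.uIcc 0 t, P s := by
  obtain ⟨r, hr, hball⟩ := Metric.eventually_nhds_iff_ball.1 hP
  filter_upwards [Metric.ball_mem_nhds (0 : ℝ) hr] with t ht s hs
  exact hball s <| (convex_ball (0 : ℝ) r).ordConnected.uIcc_subset (Metric.mem_ball_self hr) ht hs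

variable {a c s y : ℝ → ℝ} {n : ℕ}

theorem isBigO_pow_succ_iff_deriv (ha : ContDiff ℝ ∞ a) (ha₀ : a 0 = 0) :
    (a =O[𝓝 0] fun t => t ^ (n + 1)) ↔ deriv a =O[𝓝 0] fun t => t ^ n := by
  constructor <;> intro h
  · obtain ⟨r, hr, har⟩ := exists_eventuallyEq_pow_mul ha h
    have hbdd := ((by have := (contDiff_infty_iff_deriv.1 hr).2.continuous
                      have := hr.continuous
                      fun_prop : Continuous fun t => (n + 1) * r t + t * deriv r t).continuousAt
      (x := 0)).isBigO_one ℝ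
    refine ((isBigO_refl (fun t : ℝ => t ^ n) (𝓝 0)).mul hbdd).congr' ?_
      (.of_forall fun t => mul_one _)
    filter_upwards [har.eventually_nhds] with t ht
    exact (hasDerivAt_pow_succ_mul hr ht).deriv.symm
  · obtain ⟨C, hC⟩ := h.bound
    refine .of_bound |C| ?_
    filter_upwards [eventually_forall_uIcc hC] with t ht
    have hbound (s : ℝ) (hs : s ∈ Set.uIcc 0 t) : ‖deriv a s‖ ≤ |C| * ‖t‖ ^ n := by
      have hst : ‖s‖ ≤ ‖t‖ := by simpa using Set.abs_sub_left_of_mem_uIcc hs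
      calc ‖deriv a s‖ ≤ C * ‖s ^ n‖ := ht s hs
        _ ≤ |C| * ‖t‖ ^ n := by rw [norm_pow]; gcongr; exact le_abs_self C
    have hmvt := (convex_uIcc 0 t).norm_image_sub_le_of_norm_deriv_le
      (fun s _ => ha.differentiable (by simp) s) hbound Set.left_mem_uIcc Set.right_mem_uIcc
    simpa [ha₀, pow_succ, mul_assoc] using hmvt

theorem eventually_add_mul_eq_integral (ha : ContDiff ℝ ∞ a) (hs : ContDiff ℝ ∞ s)
    (hy : Differentiable ℝ y) (hs₀ : s 0 = 0) (hy₀ : y 0 = 0)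
    (h : ∀ᶠ t in 𝓝 0, deriv y t = s t * deriv a t) :
    ∀ᶠ p in 𝓝 (0 : ℝ × ℝ), y p.2 + (p.1 - a p.2) * s p.2 =
      ∫ t in 0..p.2, (p.1 - a t) * deriv s t := by
  filter_upwards [continuousAt_snd.eventually (eventually_forall_uIcc h)] with p hp
  have hderiv (t : ℝ) (ht : t ∈ Set.uIcc 0 p.2) :
      HasDerivAt (fun t => y t + (p.1 - a t) * s t) ((p.1 - a t) * deriv s t) t := by
    refine ((hy t).hasDerivAt.add (((ha.differentiable (by simp) t).hasDerivAt.const_sub p.1).mul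
      (hs.differentiable (by simp) t).hasDerivAt)).congr_deriv ?_
    rw [hp t ht]
    ring
  rw [intervalIntegral.integral_eq_sub_of_hasDerivAt hderiv]
  · simp [hs₀, hy₀]
  · have := (contDiff_infty_iff_deriv.1 hs).2.continuous
    have := ha.continuous
    exact Continuous.intervalIntegrable (by fun_prop) _ _

theorem exists_eventually_eq_mul_of_ne_zero {f g : ℝ → ℝ} {u₀ : ℝ} (hf : ContDiff ℝ ∞ f)
    (hg : ContDiff ℝ ∞ g) (hg₀ : g u₀ ≠ 0) :
    ∃ b : ℝ → ℝ, ContDiff ℝ ∞ b ∧ ∀ᶠ u in 𝓝 u₀, f u = b u * g u := by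
  have hg_ne : ∀ᶠ u in 𝓝 u₀, g u ≠ 0 := hg.continuous.continuousAt.eventually_ne hg₀
  obtain ⟨b, hb, -, hbfg⟩ := exists_contDiff_hasCompactSupport_eventuallyEq
    (hg_ne.mono fun u hu => hf.contDiffAt.div hg.contDiffAt hu)
  refine ⟨b, hb, ?_⟩
  filter_upwards [hbfg, hg_ne] with u hu hne
  rw [hu, Pi.div_apply, div_mul_cancel₀ _ hne]

variable {σ ν : ℝ → R3} {l : ℝ → ℝ} {u₀ : ℝ}

theorem exists_slope_parametrization (hν : ContDiff ℝ ∞ ν) (hν₀ : ν u₀ = ![1, 0, 0])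
    (hν' : deriv ν u₀ 1 ≠ 0) :
    ∃ r β s : ℝ → ℝ, ContDiff ℝ ∞ r ∧ ContDiff ℝ ∞ β ∧ ContDiff ℝ ∞ s ∧ β 0 = u₀ ∧ s 0 = 0 ∧
      (∀ᶠ u in 𝓝 u₀, β (r u) = u) ∧ (∀ᶠ t in 𝓝 0, r (β t) = t) ∧
      (∀ᶠ t in 𝓝 0, ν (β t) 1 = t * ν (β t) 0) ∧ ∀ᶠ t in 𝓝 0, ν (β t) 2 = s t * ν (β t) 0 := by
  have hνi (i : Fin 3) : ContDiff ℝ ∞ fun u => ν u i := contDiff_pi.1 hν i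
  have hν₀_ne : ν u₀ 0 ≠ 0 := by simp [hν₀]
  obtain ⟨r, hr, hνr⟩ := exists_eventually_eq_mul_of_ne_zero (hνi 1) (hνi 0) hν₀_ne
  obtain ⟨b, hb, hνb⟩ := exists_eventually_eq_mul_of_ne_zero (hνi 2) (hνi 0) hν₀_ne
  have hr₀ : r u₀ = 0 := by simpa [hν₀] using hνr.self_of_nhds.symm
  have hb₀ : b u₀ = 0 := by simpa [hν₀] using hνb.self_of_nhds.symm
  have hr' : deriv r u₀ ≠ 0 := by
    have hprod := ((hr.differentiable (by simp) u₀).hasDerivAt.mul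
      ((hνi 0).differentiable (by simp) u₀).hasDerivAt).congr_of_eventuallyEq hνr
    rw [(hasDerivAt_pi.1 (hν.differentiable (by simp) u₀).hasDerivAt 1).unique hprod] at hν'
    simpa [hν₀, hr₀] using hν'
  obtain ⟨β, hβ, hβ₀, hβr, hrβ⟩ := exists_contDiff_localInverse_of_deriv_ne_zero hr hr'
  rw [hr₀] at hβ₀ hrβ
  have hβt : Tendsto β (𝓝 0) (𝓝 u₀) := hβ.continuous.tendsto' 0 u₀ hβ₀
  refine ⟨r, β, fun t => b (β t), hr, hβ, hb.comp hβ, hβ₀, by simp only [hβ₀, hb₀], hβr, hrβ, ?_,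
    hβt.eventually hνb⟩
  filter_upwards [hβt.eventually hνr, hrβ] with t ht htβ
  rw [ht, htβ]

theorem isLocalDiffeoAt_ruled_chart {r β a m : ℝ → ℝ} (hr : ContDiff ℝ ∞ r)
    (hβ : ContDiff ℝ ∞ β) (ha : ContDiff ℝ ∞ a) (hm : ContDiff ℝ ∞ m)
    (hβ₀ : β 0 = u₀) (ha₀ : a u₀ = 0) (hm₀ : m u₀ ≠ 0) (hβr : ∀ᶠ u in 𝓝 u₀, β (r u) = u)
    (hrβ : ∀ᶠ t in 𝓝 0, r (β t) = t) :
    IsLocalDiffeoAt (fun p : ℝ × ℝ => (β p.2, (p.1 - a (β p.2)) / m (β p.2))) 0 := by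
  have hβt : Tendsto β (𝓝 0) (𝓝 u₀) := hβ.continuous.tendsto' 0 u₀ hβ₀
  have hm_ne : ∀ᶠ u in 𝓝 u₀, m u ≠ 0 := hm.continuous.continuousAt.eventually_ne hm₀
  refine .of_inverse (q := (u₀, 0)) (g := fun q => (a q.1 + q.2 * m q.1, r q.1)) ?_
    (by simp [hβ₀, ha₀]) (by fun_prop) ?_ ?_
  · exact (hβ.contDiffAt.comp _ contDiffAt_snd).prodMk
      (.div (by fun_prop) (by fun_prop) (by simpa [hβ₀] using hm₀))
  · filter_upwards [continuousAt_snd.eventually hrβ,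
      continuousAt_snd.eventually (hβt.eventually hm_ne)] with p hp hmp
    ext <;> simp [hp, div_mul_cancel₀ _ hmp]
  · filter_upwards [continuousAt_fst.eventually hβr, continuousAt_fst.eventually hm_ne]
      with q hq hmq
    ext <;> simp [hq, hmq]

theorem aequivAt_ruled_modelGerm {r β s : ℝ → ℝ} (hσ : ContDiff ℝ ∞ σ) (hν : ContDiff ℝ ∞ ν)
    (hσ' : ∀ u, deriv σ u = l u • ν u) (hσ₀ : σ u₀ = 0) (hν₀ : ν u₀ 0 ≠ 0)
    (hr : ContDiff ℝ ∞ r) (hβ : ContDiff ℝ ∞ β) (hs : ContDiff ℝ ∞ s)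
    (hβ₀ : β 0 = u₀) (hs₀ : s 0 = 0) (hβr : ∀ᶠ u in 𝓝 u₀, β (r u) = u)
    (hrβ : ∀ᶠ t in 𝓝 0, r (β t) = t) (hν₁ : ∀ᶠ t in 𝓝 0, ν (β t) 1 = t * ν (β t) 0)
    (hν₂ : ∀ᶠ t in 𝓝 0, ν (β t) 2 = s t * ν (β t) 0) :
    AEquivAt (fun p => σ p.1 + p.2 • ν p.1) (u₀, 0)
      (modelGerm (fun t => σ (β t) 0) (deriv s)) 0 := by
  have hνi (i : Fin 3) : ContDiff ℝ ∞ fun u => ν u i := contDiff_pi.1 hν i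
  have hσi (i : Fin 3) : ContDiff ℝ ∞ fun u => σ u i := contDiff_pi.1 hσ i
  have hσβ (i : Fin 3) (t : ℝ) : HasDerivAt (fun t => σ (β t) i)
      (l (β t) * ν (β t) i * deriv β t) t := by
    have hcoord := hasDerivAt_pi.1 (hσ.differentiable (by simp) (β t)).hasDerivAt i
    rw [hσ'] at hcoord
    exact hcoord.comp t (hβ.differentiable (by simp) t).hasDerivAt
  have hcoord {i : Fin 3} {e : ℝ → ℝ} (he : ContDiff ℝ ∞ e) (he₀ : e 0 = 0)
      (hνe : ∀ᶠ t in 𝓝 0, ν (β t) i = e t * ν (β t) 0) :=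
    eventually_add_mul_eq_integral (y := fun t => σ (β t) i) (a := fun t => σ (β t) 0)
      ((hσi 0).comp hβ) he
      (fun t => (hσβ i t).differentiableAt) he₀ (by simp [hβ₀, hσ₀]) <| by
        filter_upwards [hνe] with t ht
        rw [(hσβ i t).deriv, (hσβ 0 t).deriv, ht]
        ring
  have hν_ne : ∀ᶠ t in 𝓝 0, ν (β t) 0 ≠ 0 :=
    ((hνi 0).continuous.comp hβ.continuous).continuousAt.eventually_ne (by simpa [hβ₀] using hν₀)
  refine ⟨fun p => (β p.2, (p.1 - σ (β p.2) 0) / ν (β p.2) 0), id,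
    isLocalDiffeoAt_ruled_chart hr hβ (hσi 0) (hνi 0) hβ₀ (by simp [hσ₀]) hν₀ hβr hrβ,
    by simp [hβ₀, hσ₀], .id, ?_⟩
  filter_upwards [hcoord contDiff_id rfl hν₁, hcoord hs hs₀ hν₂,
    continuousAt_snd.eventually hν_ne, continuousAt_snd.eventually hν₁,
    continuousAt_snd.eventually hν₂] with p h₁ h₂ hne hp₁ hp₂
  ext i
  fin_cases i
  · simp [modelGerm, hne]
  · refine .trans ?_ (h₁.trans (by simp [modelGerm]))
    simp [hp₁, field]
  · refine .trans ?_ h₂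
    simp [hp₂, field]

end RuledSurface

section FrameSlopes

variable {f g e β κ κs s : ℝ → ℝ} {T h ν σ : ℝ → R3} {l : ℝ → ℝ} {x u₀ : ℝ} {n : ℕ}

theorem isBigO_unit_mul_iff (he : ContinuousAt e x) (hex : e x ≠ 0) :
    (fun t => e t * f t) =O[𝓝 x] g ↔ f =O[𝓝 x] g := by
  constructor <;> intro h
  · have hinv := (he.inv₀ hex).isBigO_one ℝ
    refine (hinv.mul h).congr' ?_ (.of_forall fun t => one_mul _)
    filter_upwards [he.eventually_ne hex] with t ht
    exact inv_mul_cancel_left₀ ht _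
  · simpa using (he.isBigO_one ℝ).mul h

theorem isBigO_comp_pow_iff {β' : ℝ} (hβ : HasStrictDerivAt β β' 0) (hβ' : β' ≠ 0) :
    ((fun t => f (β t)) =O[𝓝 0] fun t => t ^ n) ↔
      f =O[𝓝 (β 0)] fun u => (u - β 0) ^ n := by
  have hθ : (fun t => β t - β 0) =Θ[𝓝 0] fun t : ℝ => t := by
    simpa [Function.comp_def, IsTheta] using hβ.hasDerivAt.isTheta_sub hβ'
  rw [← hβ.map_nhds_eq hβ', isBigO_map]
  exact (hθ.pow n).isBigO_congr_right.symm

theorem hasDerivAt_coord_comp {F F' : ℝ → R3} (hF : ∀ u, HasDerivAt F (F' u) u) (i : Fin 3) {t : ℝ}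
    (hβ : DifferentiableAt ℝ β t) :
    HasDerivAt (fun t => F (β t) i) (F' (β t) i * deriv β t) t :=
  (hasDerivAt_pi.1 (hF (β t)) i).comp t hβ.hasDerivAt

theorem deriv_slope_mul_eq (hν : ∀ u, HasDerivAt ν (-κ u • T u) u) (hβ : ContDiff ℝ ∞ β)
    (hs : ContDiff ℝ ∞ s) (hν₀ : ν (β 0) 0 ≠ 0)
    (hν₁ : ∀ᶠ t in 𝓝 0, ν (β t) 1 = t * ν (β t) 0)
    (hν₂ : ∀ᶠ t in 𝓝 0, ν (β t) 2 = s t * ν (β t) 0) :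
    ∀ᶠ t in 𝓝 0, deriv s t * (T (β t) 1 - t * T (β t) 0) = T (β t) 2 - s t * T (β t) 0 := by
  have hdν (i : Fin 3) (t : ℝ) := hasDerivAt_coord_comp hν i (hβ.differentiable (by simp) t)
  filter_upwards [(hdν 0 0).continuousAt.eventually_ne hν₀, hν₁.eventually_nhds,
    hν₂.eventually_nhds] with t hne h₁ h₂
  have h₁' := (hdν 1 t).unique (((hasDerivAt_id t).mul (hdν 0 t)).congr_of_eventuallyEq h₁)
  have h₂' := (hdν 2 t).unique
    (((hs.differentiable (by simp) t).hasDerivAt.mul (hdν 0 t)).congr_of_eventuallyEq h₂)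
  simp only [Pi.smul_apply, smul_eq_mul, id_eq] at h₁' h₂'
  have hspeed : κ (β t) * deriv β t ≠ 0 := by
    intro h0
    refine hne ?_
    linear_combination -h₁' + (t * T (β t) 0 - T (β t) 1) * h0
  refine mul_left_cancel₀ hspeed ?_
  linear_combination h₂' - deriv s t * h₁'

theorem deriv_deriv_slope_mul_eq (hT : ∀ u, HasDerivAt T (κs u • h u + κ u • ν u) u)
    (hβ : ContDiff ℝ ∞ β) (hs : ContDiff ℝ ∞ s)
    (hν₁ : ∀ᶠ t in 𝓝 0, ν (β t) 1 = t * ν (β t) 0)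
    (hν₂ : ∀ᶠ t in 𝓝 0, ν (β t) 2 = s t * ν (β t) 0)
    (hslope : ∀ᶠ t in 𝓝 0,
      deriv s t * (T (β t) 1 - t * T (β t) 0) = T (β t) 2 - s t * T (β t) 0) :
    ∀ᶠ t in 𝓝 0, deriv (deriv s) t * (T (β t) 1 - t * T (β t) 0) = deriv β t *
      (h (β t) 2 - s t * h (β t) 0 - deriv s t * (h (β t) 1 - t * h (β t) 0)) * κs (β t) := by
  have hdT (i : Fin 3) (t : ℝ) := hasDerivAt_coord_comp hT i (hβ.differentiable (by simp) t)
  have hds (t : ℝ) := (hs.differentiable (by simp) t).hasDerivAt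
  have hdds (t : ℝ) := ((contDiff_infty_iff_deriv.1 hs).2.differentiable (by simp) t).hasDerivAt
  filter_upwards [hν₁, hν₂, hslope.eventually_nhds] with t h₁ h₂ hslope
  have hdiff := ((hdds t).mul ((hdT 1 t).sub ((hasDerivAt_id t).mul (hdT 0 t)))).unique
    (((hdT 2 t).sub ((hds t).mul (hdT 0 t))).congr_of_eventuallyEq hslope)
  simp only [Pi.add_apply, Pi.smul_apply, smul_eq_mul, id_eq, Pi.sub_apply, Pi.mul_apply,
    h₁, h₂] at hdiff
  linear_combination hdiff

theorem isBigO_coord_comp_iff (hσ : ContDiff ℝ ∞ σ) (hν : Continuous ν)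
    (hσ' : ∀ u, deriv σ u = l u • ν u) (hβ : ContDiff ℝ ∞ β) (hβ' : deriv β 0 ≠ 0)
    (hσ₀ : σ (β 0) = 0) (hν₀ : ν (β 0) 0 ≠ 0) :
    ((fun t => σ (β t) 0) =O[𝓝 0] fun t => t ^ (n + 1)) ↔
      l =O[𝓝 (β 0)] fun u => (u - β 0) ^ n := by
  have hderiv : deriv (fun t => σ (β t) 0) = fun t => (ν (β t) 0 * deriv β t) * l (β t) := by
    ext t
    have hdσ (u : ℝ) : HasDerivAt σ (l u • ν u) u :=
      hσ' u ▸ (hσ.differentiable (by simp) u).hasDerivAt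
    rw [(hasDerivAt_coord_comp hdσ 0 (hβ.differentiable (by simp) t)).deriv]
    simp only [Pi.smul_apply, smul_eq_mul]
    ring
  have hunit : Continuous fun t => ν (β t) 0 * deriv β t :=
    ((continuous_apply 0).comp (hν.comp hβ.continuous)).mul
      (contDiff_infty_iff_deriv.1 hβ).2.continuous
  rw [isBigO_pow_succ_iff_deriv (a := fun t => σ (β t) 0) (contDiff_pi.1 (hσ.comp hβ) 0)
      (by simp [hσ₀]), hderiv,
    isBigO_unit_mul_iff (f := fun t => l (β t)) hunit.continuousAt (mul_ne_zero hν₀ hβ'),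
    isBigO_comp_pow_iff (hβ.contDiffAt.hasStrictDerivAt (by simp)) hβ']

theorem isBigO_deriv_slope_iff (hT : ContDiff ℝ ∞ T) (hh : Continuous h)
    (hT' : ∀ u, deriv T u = κs u • h u + κ u • ν u) (hβ : ContDiff ℝ ∞ β) (hβ' : deriv β 0 ≠ 0)
    (hs : ContDiff ℝ ∞ s) (hs₀ : s 0 = 0) (hs' : deriv s 0 = 0) (hT₁ : T (β 0) 1 ≠ 0)
    (hh₂ : h (β 0) 2 ≠ 0) (hν₁ : ∀ᶠ t in 𝓝 0, ν (β t) 1 = t * ν (β t) 0)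
    (hν₂ : ∀ᶠ t in 𝓝 0, ν (β t) 2 = s t * ν (β t) 0)
    (hslope : ∀ᶠ t in 𝓝 0,
      deriv s t * (T (β t) 1 - t * T (β t) 0) = T (β t) 2 - s t * T (β t) 0) :
    (deriv s =O[𝓝 0] fun t => t ^ (n + 1)) ↔ κs =O[𝓝 (β 0)] fun u => (u - β 0) ^ n := by
  have hdT (u : ℝ) : HasDerivAt T (κs u • h u + κ u • ν u) u :=
    hT' u ▸ (hT.differentiable (by simp) u).hasDerivAt
  have hdiff := deriv_deriv_slope_mul_eq hdT hβ hs hν₁ hν₂ hslope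
  have hds := (contDiff_infty_iff_deriv.1 hs).2
  have hTi (i : Fin 3) : Continuous fun t => T (β t) i := contDiff_pi.1 (hT.comp hβ) i |>.continuous
  have hhi (i : Fin 3) : Continuous fun t => h (β t) i :=
    (continuous_apply i).comp (hh.comp hβ.continuous)
  set den := fun t => T (β t) 1 - t * T (β t) 0 with hden
  set num := fun t =>
    deriv β t * (h (β t) 2 - s t * h (β t) 0 - deriv s t * (h (β t) 1 - t * h (β t) 0)) with hnum
  have hden_cont : Continuous den := (hTi 1).sub (continuous_id.mul (hTi 0))
  have hnum_cont : Continuous num := (contDiff_infty_iff_deriv.1 hβ).2.continuous.mul <|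
    ((hhi 2).sub (hs.continuous.mul (hhi 0))).sub
      (hds.continuous.mul ((hhi 1).sub (continuous_id.mul (hhi 0))))
  have hden₀ : den 0 ≠ 0 := by simpa [hden] using hT₁
  have hderiv : deriv (deriv s) =ᶠ[𝓝 0] fun t => num t / den t * κs (β t) := by
    filter_upwards [hdiff, hden_cont.continuousAt.eventually_ne hden₀] with t ht hne
    rw [div_mul_eq_mul_div, eq_div_iff hne, ht]
  rw [isBigO_pow_succ_iff_deriv hds hs', isBigO_congr hderiv .rfl,
    isBigO_unit_mul_iff (e := fun t => num t / den t) (f := fun t => κs (β t))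
      (hnum_cont.continuousAt.div hden_cont.continuousAt hden₀)
      (div_ne_zero (by simp [hnum, hs₀, hs', hβ', hh₂]) hden₀),
    isBigO_comp_pow_iff (hβ.contDiffAt.hasStrictDerivAt (by simp)) hβ']

theorem exists_aequivAt_ruled_modelGerm (hσ : ContDiff ℝ ∞ σ) (hT : ContDiff ℝ ∞ T)
    (hh : Continuous h) (hν : ContDiff ℝ ∞ ν) (hσ' : ∀ u, deriv σ u = l u • ν u)
    (hT' : ∀ u, deriv T u = κs u • h u + κ u • ν u) (hν' : ∀ u, deriv ν u = -κ u • T u)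
    (hσ₀ : σ u₀ = 0) (hν₀ : ν u₀ = ![1, 0, 0]) (hT₀ : T u₀ = ![0, 1, 0]) (hh₀ : h u₀ = ![0, 0, 1])
    (hκ₀ : κ u₀ ≠ 0) :
    ∃ a c : ℝ → ℝ, ContDiff ℝ ∞ a ∧ ContDiff ℝ ∞ c ∧ a 0 = 0 ∧ c 0 = 0 ∧
      AEquivAt (fun p => σ p.1 + p.2 • ν p.1) (u₀, 0) (modelGerm a c) 0 ∧
      ∀ n, ((a =O[𝓝 0] fun t => t ^ (n + 1)) ↔ l =O[𝓝 u₀] fun u => (u - u₀) ^ n) ∧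
        ((c =O[𝓝 0] fun t => t ^ (n + 1)) ↔ κs =O[𝓝 u₀] fun u => (u - u₀) ^ n) := by
  obtain ⟨r, β, s, hr, hβ, hs, rfl, hs₀, hβr, hrβ, hν₁, hν₂⟩ :=
    exists_slope_parametrization hν hν₀ (by simp [hν', hT₀, hκ₀])
  have hβ' : deriv β 0 ≠ 0 := deriv_ne_zero_of_comp_eventually_eq
    (hβ.differentiable (by simp) 0) (hr.differentiable (by simp) _) hrβ
  have hν₀_ne : ν (β 0) 0 ≠ 0 := by simp [hν₀]
  have hdν (u : ℝ) : HasDerivAt ν (-κ u • T u) u :=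
    hν' u ▸ (hν.differentiable (by simp) u).hasDerivAt
  have hslope := deriv_slope_mul_eq hdν hβ hs hν₀_ne hν₁ hν₂
  have hs' : deriv s 0 = 0 := by simpa [hT₀, hs₀] using hslope.self_of_nhds
  exact ⟨_, _, contDiff_pi.1 (hσ.comp hβ) 0, (contDiff_infty_iff_deriv.1 hs).2, by simp [hσ₀], hs',
    aequivAt_ruled_modelGerm hσ hν hσ' hσ₀ hν₀_ne hr hβ hs rfl hs₀ hβr hrβ hν₁ hν₂,
    fun n => ⟨isBigO_coord_comp_iff hσ hν.continuous hσ' hβ hβ' hσ₀ hν₀_ne,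
      isBigO_deriv_slope_iff hT hh hT' hβ hβ' hs hs₀ hs' (by simp [hT₀]) (by simp [hh₀]) hν₁ hν₂
        hslope⟩⟩

end FrameSlopes

section NormalRuledSurface

variable {f : ℝ → ℝ} {u₀ w₀ : ℝ} {n : ℕ}

theorem isBigO_sub_pow_succ_iff (hf : ContDiff ℝ ∞ f) :
    (f =O[𝓝 u₀] fun u => (u - u₀) ^ (n + 1)) ↔
      f u₀ = 0 ∧ deriv f =O[𝓝 u₀] fun u => (u - u₀) ^ n := by
  have htranslate (g : ℝ → ℝ) (m : ℕ) : (g =O[𝓝 u₀] fun u => (u - u₀) ^ m) ↔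
      (fun t => g (u₀ + t)) =O[𝓝 0] fun t => t ^ m := by
    simpa using (isBigO_comp_pow_iff (n := m) (f := g)
      ((hasStrictDerivAt_id (0 : ℝ)).const_add u₀) one_ne_zero).symm
  have hsucc (h₀ : f u₀ = 0) := isBigO_pow_succ_iff_deriv (n := n) (a := fun t => f (u₀ + t))
    (by fun_prop) (by simpa using h₀)
  have hderiv : deriv (fun t => f (u₀ + t)) = fun t => deriv f (u₀ + t) :=
    funext fun t => deriv_comp_const_add f u₀ t
  rw [hderiv, ← htranslate, ← htranslate] at hsucc
  refine ⟨fun h => ?_, fun ⟨h₀, h⟩ => (hsucc h₀).2 h⟩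
  have h₀ : f u₀ = 0 := by
    obtain ⟨C, hC⟩ := h.bound
    simpa using hC.self_of_nhds
  exact ⟨h₀, (hsucc h₀).1 h⟩

theorem isBigO_sub_pow_one_iff (hf : ContDiff ℝ ∞ f) :
    (f =O[𝓝 u₀] fun u => (u - u₀) ^ 1) ↔ f u₀ = 0 := by
  rw [isBigO_sub_pow_succ_iff hf, and_iff_left]
  simpa using ((contDiff_infty_iff_deriv.1 hf).2.continuous.continuousAt (x := u₀)).isBigO_one ℝ

theorem isBigO_sub_pow_two_iff (hf : ContDiff ℝ ∞ f) :
    (f =O[𝓝 u₀] fun u => (u - u₀) ^ 2) ↔ f u₀ = 0 ∧ deriv f u₀ = 0 := by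
  rw [isBigO_sub_pow_succ_iff hf, isBigO_sub_pow_one_iff (contDiff_infty_iff_deriv.1 hf).2]

theorem isBigO_sub_pow_three_iff (hf : ContDiff ℝ ∞ f) :
    (f =O[𝓝 u₀] fun u => (u - u₀) ^ 3) ↔
      f u₀ = 0 ∧ deriv f u₀ = 0 ∧ deriv (deriv f) u₀ = 0 := by
  rw [isBigO_sub_pow_succ_iff hf, isBigO_sub_pow_two_iff (contDiff_infty_iff_deriv.1 hf).2]

theorem dot3_comm (a b : R3) : dot3 a b = dot3 b a := by
  simp only [dot3, mul_comm]

theorem exists_continuousLinearEquiv_of_orthonormal {a b c : R3} (haa : dot3 a a = 1)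
    (hbb : dot3 b b = 1) (hcc : dot3 c c = 1) (hab : dot3 a b = 0) (hac : dot3 a c = 0)
    (hbc : dot3 b c = 0) :
    ∃ L : R3 ≃L[ℝ] R3, L a = ![1, 0, 0] ∧ L b = ![0, 1, 0] ∧ L c = ![0, 0, 1] := by
  have hM : Matrix.of ![a, b, c] * (Matrix.of ![a, b, c]).transpose = 1 := by
    simp only [dot3] at *
    ext i j
    fin_cases i <;> fin_cases j <;> simp [Matrix.mul_apply, Fin.sum_univ_three] <;> linarith
  refine ⟨(Matrix.toLin'OfInv (mul_eq_one_comm.1 hM) hM).toContinuousLinearEquiv, ?_, ?_, ?_⟩ <;>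
  · simp only [dot3] at *
    ext i
    fin_cases i <;> simp [Matrix.mulVec, dotProduct, Fin.sum_univ_three] <;> linarith

theorem isLocalDiffeoAt_continuousLinearEquiv_sub (L : R3 ≃L[ℝ] R3) (c y : R3) :
    IsLocalDiffeoAt (fun z => L (z - c)) y :=
  .of_inverse (g := fun z => L.symm z + c) (L.contDiff.contDiffAt.comp _ (by fun_prop)) rfl
    (L.symm.contDiff.contDiffAt.add contDiffAt_const) (.of_forall fun z => by simp)
    (.of_forall fun z => by simp)

theorem aequivAt_NR_striction {γ ν : ℝ → R3} {ρ : ℝ → ℝ} (hρ : ContDiff ℝ ∞ ρ) (L : R3 ≃L[ℝ] R3)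
    (c : R3) :
    AEquivAt (NR γ ν) (u₀, ρ u₀)
      (fun p => L (γ p.1 + ρ p.1 • ν p.1 - c) + p.2 • L (ν p.1)) (u₀, 0) := by
  refine ⟨fun p => (p.1, p.2 + ρ p.1), fun z => L (z - c), ?_, by simp,
    isLocalDiffeoAt_continuousLinearEquiv_sub L c _, .of_forall fun p => ?_⟩
  · exact .of_inverse (g := fun p => (p.1, p.2 - ρ p.1)) (by fun_prop) rfl (by fun_prop)
      (.of_forall fun p => by simp) (.of_forall fun p => by simp)
  · simp only [NR, ← map_smul, ← map_add]
    congr 1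
    module

namespace FrenetSetup

variable {γ h ν : ℝ → R3} {κs κν κt : ℝ → ℝ}

theorem hasDerivAt_edge (H : FrenetSetup γ h ν κs κν κt) (hdev : ∀ u, κt u = 0)
    (hnoncyl : ∀ u, κν u ≠ 0) (u : ℝ) :
    HasDerivAt (fun u => γ u + (κν u)⁻¹ • ν u) ((-((κν u) ^ 2)⁻¹ * deriv κν u) • ν u) u := by
  have hγ := (H.smooth_γ.differentiable (by simp) u).hasDerivAt
  have hν := (H.smooth_ν.differentiable (by simp) u).hasDerivAt
  have hκν := (H.smooth_κν.differentiable (by simp) u).hasDerivAt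
  refine (hγ.add ((hκν.inv (hnoncyl u)).smul hν)).congr_deriv ?_
  rw [H.frenet_ν, hdev, zero_smul, sub_zero, smul_smul]
  have hcancel : (κν u)⁻¹ * -κν u = -1 := by
    rw [mul_neg, inv_mul_cancel₀ (hnoncyl u)]
  rw [Pi.inv_apply, hcancel, div_eq_inv_mul, mul_neg, neg_mul]
  module

theorem exists_aequivAt_NR_modelGerm (H : FrenetSetup γ h ν κs κν κt) (hdev : ∀ u, κt u = 0)
    (hnoncyl : ∀ u, κν u ≠ 0) (hsing : w₀ * κν u₀ = 1) :
    ∃ a c : ℝ → ℝ, ContDiff ℝ ∞ a ∧ ContDiff ℝ ∞ c ∧ a 0 = 0 ∧ c 0 = 0 ∧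
      AEquivAt (NR γ ν) (u₀, w₀) (modelGerm a c) 0 ∧
      ∀ n, ((a =O[𝓝 0] fun t => t ^ (n + 1)) ↔ deriv κν =O[𝓝 u₀] fun u => (u - u₀) ^ n) ∧
        ((c =O[𝓝 0] fun t => t ^ (n + 1)) ↔ κs =O[𝓝 u₀] fun u => (u - u₀) ^ n) := by
  obtain ⟨L, hLν, hLγ, hLh⟩ := exists_continuousLinearEquiv_of_orthonormal
    (H.unit_ν u₀) (H.unit_t u₀) (H.unit_h u₀) (by rw [dot3_comm, H.orth_tν])
    (by rw [dot3_comm, H.orth_hν]) (H.orth_th u₀)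
  have hw₀ : (κν u₀)⁻¹ = w₀ := (eq_inv_of_mul_eq_one_left hsing).symm
  have hinv : ContDiff ℝ ∞ fun u => (κν u)⁻¹ := H.smooth_κν.inv hnoncyl
  have hγ' : ContDiff ℝ ∞ (deriv γ) := (contDiff_infty_iff_deriv.1 H.smooth_γ).2
  have hderiv {F : ℝ → R3} {F' : R3} {u : ℝ} (hF : HasDerivAt F F' u) :
      deriv (fun u => L (F u)) u = L F' := (L.hasFDerivAt.comp_hasDerivAt u hF).deriv
  obtain ⟨a, c, ha, hc, ha₀, hc₀, hac, horder⟩ := exists_aequivAt_ruled_modelGerm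
    (σ := fun u => L (γ u + (κν u)⁻¹ • ν u - (γ u₀ + (κν u₀)⁻¹ • ν u₀)))
    (T := fun u => L (deriv γ u)) (h := fun u => L (h u)) (ν := fun u => L (ν u)) (u₀ := u₀)
    (l := fun u => -((κν u) ^ 2)⁻¹ * deriv κν u) (κs := κs) (κ := κν)
    (L.contDiff.comp ((H.smooth_γ.add (hinv.smul H.smooth_ν)).sub contDiff_const))
    (L.contDiff.comp hγ') (L.continuous.comp H.smooth_h.continuous)
    (L.contDiff.comp H.smooth_ν)
    (fun u => (hderiv ((H.hasDerivAt_edge hdev hnoncyl u).sub_const _)).trans (map_smul ..))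
    (fun u => by
      rw [hderiv (hγ'.differentiable (by simp) u).hasDerivAt, H.frenet_t, map_add, map_smul,
        map_smul])
    (fun u => by
      rw [hderiv (H.smooth_ν.differentiable (by simp) u).hasDerivAt, H.frenet_ν, hdev, zero_smul,
        sub_zero, map_smul])
    (by simp) hLν hLγ hLh (hnoncyl u₀)
  refine ⟨a, c, ha, hc, ha₀, hc₀,
    hw₀ ▸ (aequivAt_NR_striction hinv L _).trans hac, fun n => ⟨?_, (horder n).2⟩⟩
  have hκν := H.smooth_κν.continuous.continuousAt (x := u₀)
  have hκν₀ := pow_ne_zero 2 (hnoncyl u₀)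
  rw [(horder n).1, isBigO_unit_mul_iff (e := fun u => -((κν u) ^ 2)⁻¹)
    ((hκν.pow 2).inv₀ hκν₀).neg (neg_ne_zero.2 (inv_ne_zero hκν₀))]

end FrenetSetup

end NormalRuledSurface

section RemainderCoefficients

theorem eq_zero_and_deriv_eq_zero_of_mul {f g : ℝ → ℝ} {x : ℝ} (hf : DifferentiableAt ℝ f x)
    (hg : DifferentiableAt ℝ g x) (hgx : g x ≠ 0) (hfg : f x * g x = 0)
    (hfg' : deriv (fun t => f t * g t) x = 0) : f x = 0 ∧ deriv f x = 0 := by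
  have hfx : f x = 0 := (mul_eq_zero.1 hfg).resolve_right hgx
  refine ⟨hfx, ?_⟩
  rw [deriv_fun_mul hf hg, hfx, zero_mul, add_zero] at hfg'
  exact (mul_eq_zero.1 hfg').resolve_right hgx

variable {V : Type*} [NormedAddCommGroup V] [NormedSpace ℝ V] {x₀ : V} {n k : ℕ}

theorem eventually_fderiv_eq_of_eventually_eq_monicEval_mul {f Q : V × ℝ → ℝ} {m : V → Fin n → ℝ}
    (hf : ContDiff ℝ ∞ f) (hm : ContDiffAt ℝ ∞ m x₀) (hQ : ContDiffAt ℝ ∞ Q (x₀, 0))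
    (hm₀ : m x₀ = 0) (h : ∀ᶠ p in 𝓝 (x₀, 0), f p = monicEval (m p.1) p.2 * Q p) (v : V) :
    ∀ᶠ t in 𝓝 (0 : ℝ), fderiv ℝ f (x₀, t) (v, 0) =
      (∑ j, fderiv ℝ m x₀ v j * t ^ (j : ℕ)) * Q (x₀, t) +
        t ^ n * fderiv ℝ Q (x₀, t) (v, 0) := by
  have hline (t : ℝ) : HasDerivAt (fun ε : ℝ => (x₀ + ε • v, t)) (v, 0) 0 := by
    simpa using (((hasDerivAt_id (0 : ℝ)).smul_const v).const_add x₀).prodMk (hasDerivAt_const 0 t)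
  have hmj (j : Fin n) : HasDerivAt (fun ε : ℝ => m (x₀ + ε • v) j) (fderiv ℝ m x₀ v j) 0 := by
    have hm' : HasFDerivAt m (fderiv ℝ m x₀) (x₀ + (0 : ℝ) • v) := by
      simpa using (hm.differentiableAt (by simp)).hasFDerivAt
    exact hasDerivAt_pi.1 (hm'.comp_hasDerivAt 0
      (by simpa using ((hasDerivAt_id (0 : ℝ)).smul_const v).const_add x₀)) j
  have hQ_diff : ∀ᶠ p in 𝓝 (x₀, (0 : ℝ)), DifferentiableAt ℝ Q p :=
    ((hQ.of_le (by simp : (1 : WithTop ℕ∞) ≤ ∞)).eventually (by simp)).mono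
      fun p hp => hp.differentiableAt (by simp)
  filter_upwards [(Continuous.prodMk_right x₀).continuousAt.eventually h.eventually_nhds,
    (Continuous.prodMk_right x₀).continuousAt.eventually hQ_diff] with t ht hQt
  have hft := (hf.differentiable (by simp) (x₀, t)).hasFDerivAt
  have hl := HasFDerivAt.comp_hasDerivAt (0 : ℝ) (by simpa using hft) (hline t)
  have hr := (HasDerivAt.fun_sum fun j (_ : j ∈ Finset.univ) =>
    (hmj j).mul_const (t ^ (j : ℕ))).const_add (t ^ n) |>.mul
    (HasFDerivAt.comp_hasDerivAt (0 : ℝ) (by simpa using hQt.hasFDerivAt) (hline t))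
  have heq := hl.unique (hr.congr_of_eventuallyEq <| by
    have hcont := (hline t).continuousAt.eventually (by simpa using ht)
    filter_upwards [hcont] with ε hε
    simpa [monicEval] using hε)
  simpa [hm₀] using heq

theorem isBigO_fderiv_of_eventually_eq_monicEval_mul {f Q : V × ℝ → ℝ} {m : V → Fin n → ℝ}
    (hf : ContDiff ℝ ∞ f) (hm : ContDiffAt ℝ ∞ m x₀) (hQ : ContDiffAt ℝ ∞ Q (x₀, 0))
    (hm₀ : m x₀ = 0) (h : ∀ᶠ p in 𝓝 (x₀, 0), f p = monicEval (m p.1) p.2 * Q p) {v : V}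
    (hkn : k ≤ n) (hv : ∀ j : Fin n, (j : ℕ) < k → fderiv ℝ m x₀ v j = 0) :
    (fun t => fderiv ℝ f (x₀, t) (v, 0)) =O[𝓝 0] fun t => t ^ k := by
  have hQ_bdd : (fun t => Q (x₀, t)) =O[𝓝 0] fun _ => (1 : ℝ) :=
    (hQ.continuousAt.comp (Continuous.prodMk_right x₀).continuousAt).isBigO_one ℝ
  have hQ'_bdd : (fun t => fderiv ℝ Q (x₀, t) (v, 0)) =O[𝓝 0] fun _ => (1 : ℝ) := by
    have hQ' : ContDiffAt ℝ ∞ (fderiv ℝ Q) (x₀, 0) := hQ.fderiv_right le_rfl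
    exact ((hQ'.continuousAt.comp (Continuous.prodMk_right x₀).continuousAt).clm_apply
      continuousAt_const).isBigO_one ℝ
  have hsum : (fun t => ∑ j, fderiv ℝ m x₀ v j * t ^ (j : ℕ)) =O[𝓝 0] fun t => t ^ k := by
    refine IsBigO.fun_sum fun j _ => ?_
    rcases lt_or_ge (j : ℕ) k with hjk | hjk
    · simp only [hv j hjk, zero_mul]
      exact isBigO_zero _ _
    · exact (isBigO_pow_pow_of_le hjk).const_mul_left _
  refine IsBigO.congr' ?_ (EventuallyEq.symm
    (eventually_fderiv_eq_of_eventually_eq_monicEval_mul hf hm hQ hm₀ h v)) .rfl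
  simpa using (hsum.mul hQ_bdd).add ((isBigO_pow_pow_of_le hkn).mul hQ'_bdd)

end RemainderCoefficients

section Depress

/-- The swallowtail `(x, z) ↦ (x, 4z³ + 2xz, 3z⁴ + xz²)`, which parametrizes the quartics
`Z⁴ + xZ² - yZ + w` with a multiple root `z`. -/
def swallowtailGerm (p : ℝ × ℝ) : R3 :=
  ![p.1, 4 * p.2 ^ 3 + 2 * p.1 * p.2, 3 * p.2 ^ 4 + p.1 * p.2 ^ 2]

/-- The coefficients `(λ₂, -λ₁, λ₀)` of the depressed quartic `z⁴ + λ₂z² + λ₁z + λ₀` obtained from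
the monic quartic with coefficients `m` by Tschirnhaus' substitution `z = s + m₃ / 4`; the order and
the sign are those of `swallowtailGerm`. -/
def depress (m : Fin 4 → ℝ) : R3 :=
  ![m 2 - 3 / 8 * m 3 ^ 2, -(m 1 - m 2 * m 3 / 2 + m 3 ^ 3 / 8),
    m 0 - m 1 * m 3 / 4 + m 2 * m 3 ^ 2 / 16 - 3 * m 3 ^ 4 / 256]

theorem depress_eq_swallowtailGerm {m : Fin 4 → ℝ} {s : ℝ} (hs : monicEval m s = 0)
    (hs' : deriv (monicEval m) s = 0) :
    depress m = swallowtailGerm (depress m 0, s + m 3 / 4) := by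
  have heval (t : ℝ) : monicEval m t = t ^ 4 + (m 0 + m 1 * t + m 2 * t ^ 2 + m 3 * t ^ 3) := by
    simp [monicEval, Fin.sum_univ_four]
  have hderiv : HasDerivAt (monicEval m)
      (4 * s ^ 3 + (m 1 + m 2 * (2 * s) + m 3 * (3 * s ^ 2))) s := by
    rw [funext heval]
    simpa using (hasDerivAt_pow 4 s).fun_add (((((hasDerivAt_id s).const_mul (m 1)).const_add
      (m 0)).fun_add ((hasDerivAt_pow 2 s).const_mul (m 2))).fun_add
        ((hasDerivAt_pow 3 s).const_mul (m 3)))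
  rw [heval] at hs
  rw [hderiv.deriv] at hs'
  ext i
  fin_cases i
  · rfl
  · simp [depress, swallowtailGerm]
    linear_combination -hs'
  · simp [depress, swallowtailGerm]
    linear_combination hs - (s + m 3 / 4) * hs'

theorem contDiff_depress : ContDiff ℝ ∞ depress :=
  contDiff_iff_contDiffAt.2 fun _ => contDiffAt_vec3 (by fun_prop) (by fun_prop) (by fun_prop)

theorem depress_zero : depress 0 = 0 := by
  ext i; fin_cases i <;> simp [depress]

theorem fderiv_depress_zero (v : Fin 4 → ℝ) : fderiv ℝ depress 0 v = ![v 2, -v 1, v 0] := by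
  have hline : HasDerivAt (fun ε : ℝ => ε • v) v 0 := by
    simpa using (hasDerivAt_id (0 : ℝ)).smul_const v
  have hcomp := HasFDerivAt.comp_hasDerivAt (0 : ℝ) (l := depress) (by
    simpa using (contDiff_depress.differentiable (by simp) 0).hasFDerivAt) hline
  have heq : depress ∘ (fun ε : ℝ => ε • v) = fun ε => ![ε * (v 2 - 3 / 8 * ε * v 3 ^ 2),
      ε * -(v 1 - ε * v 2 * v 3 / 2 + ε ^ 2 * v 3 ^ 3 / 8),
      ε * (v 0 - ε * v 1 * v 3 / 4 + ε ^ 2 * v 2 * v 3 ^ 2 / 16 - 3 * ε ^ 3 * v 3 ^ 4 / 256)] := by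
    ext ε i
    fin_cases i <;> simp [depress] <;> ring
  rw [heq] at hcomp
  refine hcomp.unique (hasDerivAt_pi.2 fun i => ?_)
  fin_cases i
  · exact (hasDerivAt_id_mul (by fun_prop)).congr_deriv (by simp)
  · exact (hasDerivAt_id_mul (by fun_prop)).congr_deriv (by simp)
  · exact (hasDerivAt_id_mul (by fun_prop)).congr_deriv (by simp)

end Depress

section TangentFamily

variable {a c : ℝ → ℝ}

/-- The function of `y ∈ ℝ³` and `t` whose zero set at fixed `t` is the plane tangent to the
developable surface `modelGerm a c` along its `t`-th ruling. -/
def tangentFamily (a c : ℝ → ℝ) (p : R3 × ℝ) : ℝ :=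
  p.1 2 - c p.2 * p.1 1 + (∫ s in 0..p.2, s * deriv c s) * p.1 0 -
    ∫ s in 0..p.2, deriv c s * ∫ r in 0..s, a r

theorem contDiff_tangentFamily (ha : ContDiff ℝ ∞ a) (hc : ContDiff ℝ ∞ c) :
    ContDiff ℝ ∞ (tangentFamily a c) := by
  have hc' : ContDiff ℝ ∞ (deriv c) := (contDiff_infty_iff_deriv.1 hc).2
  have h₁ := contDiff_primitive (contDiff_id.mul hc')
  have h₂ := contDiff_primitive (hc'.mul (contDiff_primitive ha))
  simp only [id_eq] at h₁
  unfold tangentFamily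
  fun_prop

theorem hasDerivAt_tangentFamily (ha : ContDiff ℝ ∞ a) (hc : ContDiff ℝ ∞ c) {y : ℝ → R3} {y' : R3}
    {t : ℝ} (hy : HasDerivAt y y' t) :
    HasDerivAt (fun t => tangentFamily a c (y t, t))
      (y' 2 - c t * y' 1 + (∫ s in 0..t, s * deriv c s) * y' 0 +
        deriv c t * (t * y t 0 - y t 1 - ∫ r in 0..t, a r)) t := by
  have hc' : Continuous (deriv c) := (contDiff_infty_iff_deriv.1 hc).2.continuous
  have : Continuous fun t => ∫ r in 0..t, a r := (contDiff_primitive ha).continuous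
  have hy_coord (i : Fin 3) := hasDerivAt_pi.1 hy i
  have hsc := ((by fun_prop : Continuous fun s => s * deriv c s).integral_hasStrictDerivAt
    0 t).hasDerivAt
  have hcA := ((by fun_prop : Continuous fun s =>
    deriv c s * ∫ r in 0..s, a r).integral_hasStrictDerivAt 0 t).hasDerivAt
  refine ((((hy_coord 2).sub ((hc.differentiable (by simp) t).hasDerivAt.mul (hy_coord 1))).add
    (hsc.mul (hy_coord 0))).sub hcA).congr_deriv ?_
  ring

theorem hasDerivAt_modelGerm_snd (ha : ContDiff ℝ ∞ a) (hc : ContDiff ℝ ∞ c) (x t : ℝ) :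
    HasDerivAt (fun t => modelGerm a c (x, t)) ![0, x - a t, (x - a t) * c t] t := by
  refine hasDerivAt_pi.2 fun i => ?_
  fin_cases i
  · exact hasDerivAt_const t x
  · exact hasDerivAt_integral_sub ha x t
  · exact hasDerivAt_integral_sub_mul ha hc x t

theorem integral_const_sub_eq (ha : Continuous a) (x t : ℝ) :
    ∫ s in 0..t, (x - a s) = t * x - ∫ s in 0..t, a s := by
  simpa [mul_comm x t] using integral_sub_mul_eq ha continuous_one x t

theorem deriv_tangentFamily_modelGerm (ha : ContDiff ℝ ∞ a) (hc : ContDiff ℝ ∞ c) (x t : ℝ) :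
    deriv (fun s => tangentFamily a c (modelGerm a c (x, t), s)) t = 0 := by
  rw [(hasDerivAt_tangentFamily ha hc (hasDerivAt_const t _)).deriv]
  simp [modelGerm, integral_const_sub_eq ha.continuous]

theorem tangentFamily_modelGerm (ha : ContDiff ℝ ∞ a) (hc : ContDiff ℝ ∞ c) (x t : ℝ) :
    tangentFamily a c (modelGerm a c (x, t), t) = 0 := by
  have hderiv (t : ℝ) : HasDerivAt (fun t => tangentFamily a c (modelGerm a c (x, t), t)) 0 t := by
    refine (hasDerivAt_tangentFamily ha hc (hasDerivAt_modelGerm_snd ha hc x t)).congr_deriv ?_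
    simp [modelGerm, integral_const_sub_eq ha.continuous]
    ring
  rw [is_const_of_deriv_eq_zero (fun t => (hderiv t).differentiableAt)
    (fun t => (hderiv t).deriv) t 0]
  simp [tangentFamily, modelGerm]

theorem fderiv_tangentFamily_fst (ha : ContDiff ℝ ∞ a) (hc : ContDiff ℝ ∞ c) (v : R3) (t : ℝ) :
    fderiv ℝ (tangentFamily a c) (0, t) (v, 0) =
      v 2 - c t * v 1 + (∫ s in 0..t, s * deriv c s) * v 0 := by
  have hline : HasDerivAt (fun ε : ℝ => (ε • v, t)) (v, 0) 0 := by
    simpa using ((hasDerivAt_id (0 : ℝ)).smul_const v).prodMk (hasDerivAt_const 0 t)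
  have hcomp := HasFDerivAt.comp_hasDerivAt (0 : ℝ) (l := tangentFamily a c) (by
    simpa using ((contDiff_tangentFamily ha hc).differentiable (by simp) _).hasFDerivAt) hline
  refine hcomp.unique ?_
  have haff := ((hasDerivAt_id' (0 : ℝ)).mul_const
    (v 2 - c t * v 1 + (∫ s in 0..t, s * deriv c s) * v 0)).sub_const
    (∫ s in 0..t, deriv c s * ∫ r in 0..s, a r)
  rw [one_mul] at haff
  convert haff using 1
  ext ε
  simp [tangentFamily]
  ring

theorem exists_tangentFamily_eq_pow_mul (ha : ContDiff ℝ ∞ a) (hc : ContDiff ℝ ∞ c)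
    (haO : a =O[𝓝 0] fun t => t ^ 2) (haO' : ¬ a =O[𝓝 0] fun t => t ^ 3) (hc' : deriv c 0 ≠ 0) :
    ∃ r : ℝ → ℝ, ContDiff ℝ ∞ r ∧ r 0 ≠ 0 ∧
      ∀ᶠ t in 𝓝 0, tangentFamily a c (0, t) = t ^ 4 * r t := by
  have hA : ContDiff ℝ ∞ fun t => ∫ r in 0..t, a r := contDiff_primitive ha
  have hc'' : ContDiff ℝ ∞ (deriv c) := (contDiff_infty_iff_deriv.1 hc).2
  have hcurve : ContDiff ℝ ∞ fun t => tangentFamily a c (0, t) :=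
    (contDiff_tangentFamily ha hc).comp (by fun_prop : ContDiff ℝ ∞ fun t : ℝ => ((0 : R3), t))
  have horder (n : ℕ) : ((fun t => tangentFamily a c (0, t)) =O[𝓝 0] fun t => t ^ (n + 2)) ↔
      a =O[𝓝 0] fun t => t ^ n := by
    have hderiv : deriv (fun t => tangentFamily a c (0, t)) =
        fun t => deriv c t * -∫ r in 0..t, a r :=
      funext fun t => by
        simpa using (hasDerivAt_tangentFamily ha hc (hasDerivAt_const t (0 : R3))).deriv
    rw [isBigO_pow_succ_iff_deriv hcurve (by simp [tangentFamily]), hderiv,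
      isBigO_unit_mul_iff hc''.continuous.continuousAt hc', isBigO_neg_left,
      isBigO_pow_succ_iff_deriv hA (by simp)]
    rw [funext (ha.continuous.deriv_integral a 0)]
  exact exists_eventuallyEq_pow_mul_ne_zero hcurve ((horder 2).2 haO) (mt (horder 3).1 haO')

end TangentFamily

section Swallowtail

theorem AEquivAt.of_comp_eventuallyEq_comp {f g : ℝ × ℝ → R3} {Λ : R3 → R3} {σ : ℝ × ℝ → ℝ × ℝ}
    {p q : ℝ × ℝ} (hΛ : IsLocalDiffeoAt Λ (f p)) (hσ : IsLocalDiffeoAt σ p) (hpq : σ p = q)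
    (h : ∀ᶠ x in 𝓝 p, Λ (f x) = g (σ x)) : AEquivAt f p g q := by
  subst hpq
  obtain ⟨φ, hφ, hφp, -, hσφ⟩ := hσ.exists_inverse
  refine ⟨φ, Λ, hφ, hφp, hΛ, ?_⟩
  have hφ_tendsto : Tendsto φ (𝓝 (σ p)) (𝓝 p) := by
    simpa only [hφp] using hφ.1.continuousAt.tendsto
  filter_upwards [hφ_tendsto.eventually h, hσφ] with x hx hσφx
  rw [hx, hσφx]

theorem IsLocalDiffeoAt.eq_zero_of_fderiv_eq_zero {E F : Type*} [NormedAddCommGroup E]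
    [NormedSpace ℝ E] [NormedAddCommGroup F] [NormedSpace ℝ F] {f : E → F} {p v : E}
    (hf : IsLocalDiffeoAt f p) (hv : fderiv ℝ f p v = 0) : v = 0 := by
  obtain ⟨hf, g, hg, hgf, -⟩ := hf
  have hid : fderiv ℝ (fun x => g (f x)) p = .id ℝ E :=
    (EventuallyEq.fderiv_eq hgf).trans fderiv_fun_id
  rw [fderiv_fun_comp p (hg.differentiableAt (by simp)) (hf.differentiableAt (by simp))] at hid
  simpa [hv] using (DFunLike.congr_fun hid v).symm

theorem isLocalDiffeoAt_lift {f g : ℝ × ℝ → R3} {Λ : R3 → R3} {l k : R3 → ℝ} {p : ℝ × ℝ}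
    (hf : ContDiffAt ℝ ∞ f p) (hΛ : IsLocalDiffeoAt Λ (f p)) (hl : ContDiffAt ℝ ∞ l (f p))
    (hk : ContDiffAt ℝ ∞ k (f p)) (hg : ContDiff ℝ ∞ g)
    (h : ∀ᶠ x in 𝓝 p, Λ (f x) = g (l (f x), x.2 + k (f x)))
    (hker : ∀ v, fderiv ℝ f p v = 0 → v.1 = 0) :
    IsLocalDiffeoAt (fun x => (l (f x), x.2 + k (f x))) p := by
  have hlf : ContDiffAt ℝ ∞ (fun x => l (f x)) p := hl.comp p hf
  have hkf : ContDiffAt ℝ ∞ (fun x => k (f x)) p := hk.comp p hf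
  have hσ : ContDiffAt ℝ ∞ (fun x => (l (f x), x.2 + k (f x))) p :=
    hlf.prodMk (contDiffAt_snd.add hkf)
  have hfd := hf.differentiableAt (by simp)
  refine .of_fderiv_injective hσ fun v hv => ?_
  have hΛfv : fderiv ℝ Λ (f p) (fderiv ℝ f p v) = 0 := by
    have h' := EventuallyEq.fderiv_eq (𝕜 := ℝ) h
    rw [fderiv_fun_comp p (hΛ.1.differentiableAt (by simp)) hfd,
      fderiv_fun_comp p (hg.differentiable (by simp) _) (hσ.differentiableAt (by simp))] at h'
    simpa [hv] using DFunLike.congr_fun h' v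
  have hfv : fderiv ℝ f p v = 0 := hΛ.eq_zero_of_fderiv_eq_zero hΛfv
  have hkfv : fderiv ℝ (fun x => k (f x)) p v = 0 := by
    rw [fderiv_fun_comp p (hk.differentiableAt (by simp)) hfd]
    simp [hfv]
  have hσ' := (hlf.differentiableAt (by simp)).hasFDerivAt.prodMk
    (hasFDerivAt_snd.fun_add (hkf.differentiableAt (by simp)).hasFDerivAt)
  rw [hσ'.fderiv] at hv
  refine Prod.ext (hker v hfv) ?_
  simpa [hkfv] using congrArg Prod.snd hv

variable {a c : ℝ → ℝ} {m : R3 → Fin 4 → ℝ} {Q : R3 × ℝ → ℝ}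

theorem eq_zero_of_fderiv_coeff_eq_zero (ha : ContDiff ℝ ∞ a) (hc : ContDiff ℝ ∞ c)
    (hc₀ : c 0 = 0) (hc' : deriv c 0 ≠ 0) (hm : ContDiffAt ℝ ∞ m 0)
    (hQ : ContDiffAt ℝ ∞ Q (0, 0)) (hm₀ : m 0 = 0)
    (h : ∀ᶠ p in 𝓝 (0, 0), tangentFamily a c p = monicEval (m p.1) p.2 * Q p) {v : R3}
    (hv : ∀ j : Fin 4, (j : ℕ) < 3 → fderiv ℝ m 0 v j = 0) : v = 0 := by
  have hc'' : ContDiff ℝ ∞ (deriv c) := (contDiff_infty_iff_deriv.1 hc).2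
  have hsc : ContDiff ℝ ∞ fun t => ∫ s in 0..t, s * deriv c s :=
    contDiff_primitive (contDiff_id.mul hc'')
  have hO := isBigO_fderiv_of_eventually_eq_monicEval_mul (contDiff_tangentFamily ha hc) hm hQ hm₀ h
    (by norm_num) hv
  simp only [fderiv_tangentFamily_fst ha hc] at hO
  have hv2 : v 2 = 0 := by
    simpa [hc₀] using hO.eq_zero_imp.self_of_nhds
  have hderiv : deriv (fun t => v 2 - c t * v 1 + (∫ s in 0..t, s * deriv c s) * v 0) =
      fun t => deriv c t * (v 0 * t - v 1) := by
    ext t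
    have := ((by fun_prop : Continuous fun s => s * deriv c s).integral_hasStrictDerivAt
      0 t).hasDerivAt
    rw [((((hc.differentiable (by simp) t).hasDerivAt.mul_const (v 1)).const_sub (v 2)).fun_add
      (this.mul_const (v 0))).deriv]
    ring
  rw [isBigO_pow_succ_iff_deriv (by fun_prop) (by simp [hv2, hc₀]), hderiv,
    isBigO_unit_mul_iff hc''.continuous.continuousAt hc'] at hO
  have hlin := eq_zero_of_sum_mul_pow_isBigO (n := 2) (v := ![-v 1, v 0])
    (by simpa [Fin.sum_univ_two, neg_add_eq_sub] using hO)
  ext i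
  fin_cases i
  · simpa using congrFun hlin 1
  · simpa using congrFun hlin 0
  · exact hv2

theorem isLocalDiffeoAt_depress_coeff (ha : ContDiff ℝ ∞ a) (hc : ContDiff ℝ ∞ c)
    (hc₀ : c 0 = 0) (hc' : deriv c 0 ≠ 0) (hm : ContDiffAt ℝ ∞ m 0)
    (hQ : ContDiffAt ℝ ∞ Q (0, 0)) (hm₀ : m 0 = 0)
    (h : ∀ᶠ p in 𝓝 (0, 0), tangentFamily a c p = monicEval (m p.1) p.2 * Q p) :
    IsLocalDiffeoAt (fun y => depress (m y)) 0 := by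
  refine .of_fderiv_injective (contDiff_depress.contDiffAt.comp 0 hm) fun v hv => ?_
  refine eq_zero_of_fderiv_coeff_eq_zero ha hc hc₀ hc' hm hQ hm₀ h fun j hj => ?_
  have hcomp := fderiv_fun_comp (0 : R3) (contDiff_depress.differentiable (by simp) (m 0))
    (hm.differentiableAt (by simp))
  rw [hcomp, hm₀, ContinuousLinearMap.comp_apply, fderiv_depress_zero] at hv
  have hv_coord (i : Fin 3) := congrFun hv i
  fin_cases j
  · simpa using hv_coord 2
  · simpa using hv_coord 1
  · simpa using hv_coord 0
  · simp at hj

theorem eventually_depress_coeff_eq_swallowtailGerm (ha : ContDiff ℝ ∞ a) (hc : ContDiff ℝ ∞ c)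
    (hQ : ContDiffAt ℝ ∞ Q (0, 0)) (hQ₀ : Q (0, 0) ≠ 0)
    (h : ∀ᶠ p in 𝓝 (0, 0), tangentFamily a c p = monicEval (m p.1) p.2 * Q p) :
    ∀ᶠ p in 𝓝 0, depress (m (modelGerm a c p)) = swallowtailGerm
      (depress (m (modelGerm a c p)) 0, p.2 + m (modelGerm a c p) 3 / 4) := by
  have hQ_ev : ∀ᶠ p in 𝓝 ((0 : R3), (0 : ℝ)), DifferentiableAt ℝ Q p ∧ Q p ≠ 0 :=
    (((hQ.of_le (by simp : (1 : WithTop ℕ∞) ≤ ∞)).eventually (by simp)).mono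
      fun p hp => hp.differentiableAt (by simp)).and (hQ.continuousAt.eventually_ne hQ₀)
  have hlift : Tendsto (fun p : ℝ × ℝ => (modelGerm a c p, p.2)) (𝓝 0) (𝓝 (0, 0)) := by
    have := (contDiff_modelGerm ha hc).continuous
    simpa [modelGerm_zero] using (by fun_prop :
      Continuous fun p : ℝ × ℝ => (modelGerm a c p, p.2)).tendsto 0
  filter_upwards [hlift.eventually (hQ_ev.and h.eventually_nhds)] with ⟨x, t⟩ ⟨⟨hQd, hQne⟩, hfac⟩
  have hfac_t := (Continuous.prodMk_right (modelGerm a c (x, t))).continuousAt.eventually hfac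
  obtain ⟨hroot, hroot'⟩ := eq_zero_and_deriv_eq_zero_of_mul (x := t)
    (f := monicEval (m (modelGerm a c (x, t)))) (g := fun s => Q (modelGerm a c (x, t), s))
    (by unfold monicEval; fun_prop) (hQd.comp t (by fun_prop)) hQne
    (hfac_t.self_of_nhds.symm.trans (tangentFamily_modelGerm ha hc x t))
    ((EventuallyEq.deriv_eq hfac_t).symm.trans (deriv_tangentFamily_modelGerm ha hc x t))
  exact depress_eq_swallowtailGerm hroot hroot'

theorem fderiv_modelGerm_zero (ha : ContDiff ℝ ∞ a) (hc : ContDiff ℝ ∞ c) (ha₀ : a 0 = 0)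
    (v : ℝ × ℝ) : fderiv ℝ (modelGerm a c) 0 v = ![v.1, 0, 0] := by
  have hf := ((contDiff_modelGerm ha hc).differentiable (by simp) 0).hasFDerivAt
  have hx : HasDerivAt (fun x => modelGerm a c (x, 0)) ![1, 0, 0] 0 := by
    refine hasDerivAt_pi.2 fun i => ?_
    fin_cases i
    · exact hasDerivAt_id' (0 : ℝ)
    · simpa [modelGerm] using hasDerivAt_const (0 : ℝ) (0 : ℝ)
    · simpa [modelGerm] using hasDerivAt_const (0 : ℝ) (0 : ℝ)
  have hx' : fderiv ℝ (modelGerm a c) 0 (1, 0) = ![1, 0, 0] :=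
    (hf.comp_hasDerivAt (f := fun x => (x, 0)) (0 : ℝ)
      ((hasDerivAt_id' 0).prodMk (hasDerivAt_const _ _))).unique hx
  have ht' : fderiv ℝ (modelGerm a c) 0 (0, 1) = ![0, 0 - a 0, (0 - a 0) * c 0] :=
    (hf.comp_hasDerivAt (f := fun t => (0, t)) (0 : ℝ)
      ((hasDerivAt_const _ _).prodMk (hasDerivAt_id' 0))).unique
        (hasDerivAt_modelGerm_snd ha hc 0 0)
  calc fderiv ℝ (modelGerm a c) 0 v
      = fderiv ℝ (modelGerm a c) 0 (v.1 • (1, 0) + v.2 • (0, 1)) := by simp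
    _ = ![v.1, 0, 0] := by rw [map_add, map_smul, map_smul, hx', ht']; simp [ha₀]

theorem contDiff_swallowtailGerm : ContDiff ℝ ∞ swallowtailGerm :=
  contDiff_iff_contDiffAt.2 fun _ => contDiffAt_vec3 (by fun_prop) (by fun_prop) (by fun_prop)

theorem aequivAt_modelGerm_swallowtailGerm (ha : ContDiff ℝ ∞ a) (hc : ContDiff ℝ ∞ c)
    (ha₀ : a 0 = 0) (haO : a =O[𝓝 0] fun t => t ^ 2) (haO' : ¬ a =O[𝓝 0] fun t => t ^ 3)
    (hc₀ : c 0 = 0) (hcO : ¬ c =O[𝓝 0] fun t => t ^ 2) :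
    AEquivAt (modelGerm a c) 0 swallowtailGerm 0 := by
  have hc' := deriv_ne_zero_of_not_isBigO hc hc₀ hcO
  obtain ⟨r, hr, hr₀, htan⟩ := exists_tangentFamily_eq_pow_mul ha hc haO haO' hc'
  obtain ⟨m, Q, hm, hQ, hm₀, hQ₀, hfac⟩ := exists_eventually_eq_monicEval_mul
    (.of_forall fun p => (contDiff_tangentFamily ha hc).contDiffAt) hr.continuous.continuousAt hr₀
    htan
  have hΛ := isLocalDiffeoAt_depress_coeff ha hc hc₀ hc' hm hQ hm₀ hfac
  have hsw := eventually_depress_coeff_eq_swallowtailGerm ha hc hQ hQ₀ hfac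
  refine .of_comp_eventuallyEq_comp (by rwa [modelGerm_zero]) ?_ ?_ hsw
  · refine isLocalDiffeoAt_lift (Λ := fun y => depress (m y)) (l := fun y => depress (m y) 0)
      (k := fun y => m y 3 / 4) (contDiff_modelGerm ha hc).contDiffAt (by rwa [modelGerm_zero])
      (by rw [modelGerm_zero]; exact contDiffAt_pi.1 hΛ.1 0)
      (by rw [modelGerm_zero]; exact (contDiffAt_pi.1 hm 3).div_const 4)
      contDiff_swallowtailGerm hsw fun v hv => ?_
    simpa [fderiv_modelGerm_zero ha hc ha₀] using congrFun hv 0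
  · simp [modelGerm_zero, hm₀, depress_zero]

end Swallowtail

section Invariants

variable {E F : Type*} [NormedAddCommGroup E] [NormedSpace ℝ E] [NormedAddCommGroup F]
  [NormedSpace ℝ F]

/-- The Łojasiewicz-type inequality `‖x - p‖ ^ k ≤ C * ‖f x - f p‖` for `x` near `p`. The least
such `k` is an invariant of the germ under `𝒜`-equivalence. -/
def HasLojasiewiczBoundAt (f : E → F) (p : E) (k : ℕ) : Prop :=
  (fun x => ‖x - p‖ ^ k) =O[𝓝 p] fun x => f x - f p

/-- The map `f` has contact of order at least `k` at `p` with some smooth hypersurface through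
`f p`, given as a regular level set of `ψ`. -/
def HasContactOrderAt (f : E → F) (p : E) (k : ℕ) : Prop :=
  ∃ ψ : F → ℝ, ContDiffAt ℝ ∞ ψ (f p) ∧ fderiv ℝ ψ (f p) ≠ 0 ∧
    (fun x => ψ (f x) - ψ (f p)) =O[𝓝 p] fun x => ‖x - p‖ ^ k

theorem IsLocalDiffeoAt.isBigO_sub {f : E → F} {p : E} (hf : IsLocalDiffeoAt f p) :
    (fun x => f x - f p) =O[𝓝 p] fun x => x - p :=
  (hf.1.differentiableAt (by simp)).isBigO_sub

theorem IsLocalDiffeoAt.isBigO_sub_rev {f : E → F} {p : E} (hf : IsLocalDiffeoAt f p) :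
    (fun x => x - p) =O[𝓝 p] fun x => f x - f p := by
  obtain ⟨g, hg, hgp, hgf, -⟩ := hf.exists_inverse
  refine (hg.isBigO_sub.comp_tendsto hf.1.continuousAt).congr' ?_ .rfl
  filter_upwards [hgf] with x hx
  simp only [Function.comp_apply, hx, hgp]

variable {G : Type*} [NormedAddCommGroup G] {f g : ℝ × ℝ → R3} {p q : ℝ × ℝ} {k : ℕ}

theorem AEquivAt.hasLojasiewiczBoundAt (h : AEquivAt f p g q) (hf : ContinuousAt f p)
    (hk : HasLojasiewiczBoundAt f p k) : HasLojasiewiczBoundAt g q k := by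
  obtain ⟨φ, Φ, hφ, rfl, hΦ, hg⟩ := h
  have hsource := hφ.isBigO_sub_rev.norm_norm.pow k
  have hfφ : Tendsto (fun x => f (φ x)) (𝓝 q) (𝓝 (f (φ q))) := hf.tendsto.comp hφ.1.continuousAt
  refine (hsource.trans (hk.comp_tendsto hφ.1.continuousAt)).trans
    ((hΦ.isBigO_sub_rev.comp_tendsto hfφ).congr' .rfl ?_)
  filter_upwards [hg] with x hx
  rw [Function.comp_apply, hx, hg.self_of_nhds]

theorem AEquivAt.hasContactOrderAt (h : AEquivAt f p g q) (hf : ContinuousAt f p)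
    (hk : HasContactOrderAt f p k) : HasContactOrderAt g q k := by
  obtain ⟨φ, Φ, hφ, rfl, hΦ, hg⟩ := h
  obtain ⟨ψ, hψ, hψ', hO⟩ := hk
  obtain ⟨Θ, hΘ, hΘΦ₀, hΘΦ, -⟩ := hΦ.exists_inverse
  have hgq : g q = Φ (f (φ q)) := hg.self_of_nhds.symm
  have hψΘ : ContDiffAt ℝ ∞ (ψ ∘ Θ) (g q) := hgq ▸ .comp _ (hΘΦ₀.symm ▸ hψ) hΘ.1
  refine ⟨ψ ∘ Θ, hψΘ, fun hzero => hψ' ?_, ?_⟩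
  · have hψ_eq : ψ =ᶠ[𝓝 (f (φ q))] fun y => (ψ ∘ Θ) (Φ y) :=
      hΘΦ.mono fun y hy => by simp only [Function.comp_apply, hy]
    rw [hψ_eq.fderiv_eq (𝕜 := ℝ), fderiv_fun_comp _ (hgq ▸ hψΘ.differentiableAt (by simp))
      (hΦ.1.differentiableAt (by simp)), ← hgq, hzero, ContinuousLinearMap.zero_comp]
  · have hfφ : Tendsto (fun x => f (φ x)) (𝓝 q) (𝓝 (f (φ q))) :=
      hf.tendsto.comp hφ.1.continuousAt
    refine ((hO.comp_tendsto hφ.1.continuousAt).trans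
      (hφ.isBigO_sub.norm_norm.pow k)).congr' ?_ .rfl
    filter_upwards [hg, hfφ.eventually hΘΦ] with x hx hΘx
    simp only [Function.comp_apply, ← hx, hgq, hΘx, hΘΦ₀]

theorem HasContactOrderAt.mono {f : G → F} {p : G} {k l : ℕ} (hkl : k ≤ l)
    (h : HasContactOrderAt f p l) : HasContactOrderAt f p k := by
  obtain ⟨ψ, hψ, hψ', hO⟩ := h
  exact ⟨ψ, hψ, hψ', hO.trans ((isBigO_pow_pow_of_le hkl).comp_tendsto
    (tendsto_norm_sub_self p))⟩

theorem isBigO_pow_smul {w : ℝ → E} (hw : ContinuousAt w 0) (n : ℕ) :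
    (fun t => t ^ n • w t) =O[𝓝 0] fun t => t ^ n := by
  simpa using (isBigO_refl (fun t : ℝ => t ^ n) (𝓝 0)).smul (hw.isBigO_one ℝ)

theorem hasLojasiewiczBoundAt_of_isBigO {f : ℝ × ℝ → G} (hf₀ : f 0 = 0)
    (h₁ : (fun x => x.1 ^ k) =O[𝓝 0] f) (h₂ : (fun x => x.2 ^ k) =O[𝓝 0] f) :
    HasLojasiewiczBoundAt f 0 k := by
  have hnorm : (fun x : ℝ × ℝ => ‖x‖ ^ k) =O[𝓝 0] fun x => (x.1 ^ k, x.2 ^ k) := by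
    refine .of_bound 1 (.of_forall fun x => ?_)
    rw [norm_pow, norm_norm, one_mul, Prod.norm_def x]
    rcases max_choice ‖x.1‖ ‖x.2‖ with h | h <;> rw [h, ← norm_pow]
    exacts [norm_fst_le (x.1 ^ k, x.2 ^ k), norm_snd_le (x.1 ^ k, x.2 ^ k)]
  simpa only [HasLojasiewiczBoundAt, hf₀, sub_zero] using hnorm.trans (h₁.prod_left h₂)

theorem not_isBigO_pow_succ (n : ℕ) : ¬(fun t : ℝ => t ^ n) =O[𝓝 0] fun t => t ^ (n + 1) := by
  intro h
  have hself : (fun t : ℝ => t ^ n) =o[𝓝[≠] 0] fun t => t ^ n :=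
    (h.trans_isLittleO (isLittleO_pow_pow n.lt_succ_self)).mono nhdsWithin_le_nhds
  refine isLittleO_irrefl' (Eventually.frequently ?_) hself
  filter_upwards [eventually_mem_nhdsWithin] with t ht
  exact norm_ne_zero_iff.2 (pow_ne_zero n ht)

theorem not_hasLojasiewiczBoundAt_of_isBigO {f : ℝ × ℝ → G} (hf₀ : f 0 = 0)
    (h : (fun t => f (0, t)) =O[𝓝 0] fun t => t ^ (k + 1)) : ¬HasLojasiewiczBoundAt f 0 k := by
  intro hk
  have haxis : Tendsto (fun t : ℝ => ((0 : ℝ), t)) (𝓝 0) (𝓝 0) := by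
    simpa [Prod.zero_eq_mk] using (by fun_prop : Continuous fun t : ℝ => ((0 : ℝ), t)).tendsto 0
  refine not_isBigO_pow_succ k (.trans (.of_bound 1 (.of_forall fun t => ?_))
    ((hk.comp_tendsto haxis).trans ?_))
  · simp [Prod.norm_def]
  · simpa [Function.comp_def, hf₀] using h

theorem isBigO_apply (f : ℝ × ℝ → R3) (i : Fin 3) : (fun x => f x i) =O[𝓝 0] f :=
  isBigO_pi.1 (isBigO_refl f _) i

theorem isBigO_fst_pow_of_isBigO_fst {f : ℝ × ℝ → F} (h : (fun x => x.1) =O[𝓝 0] f) :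
    (fun x => x.1 ^ (k + 1)) =O[𝓝 0] f := by
  have hbdd : (fun x : ℝ × ℝ => x.1 ^ k) =O[𝓝 0] fun _ => (1 : ℝ) :=
    (continuousAt_fst.pow k).isBigO_one ℝ
  exact (hbdd.smul h).congr (fun x => (pow_succ x.1 k).symm) fun x => one_smul _ _

theorem hasLojasiewiczBoundAt_edgeGerm (q : ℝ × ℝ → ℝ) :
    HasLojasiewiczBoundAt (edgeGerm q) 0 2 :=
  hasLojasiewiczBoundAt_of_isBigO edgeGerm_zero
    (isBigO_fst_pow_of_isBigO_fst (isBigO_apply (edgeGerm q) 0)) (isBigO_apply (edgeGerm q) 1)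

theorem swallowtailGerm_zero : swallowtailGerm 0 = 0 := by
  ext i; fin_cases i <;> simp [swallowtailGerm]

theorem hasLojasiewiczBoundAt_swallowtailGerm : HasLojasiewiczBoundAt swallowtailGerm 0 3 := by
  refine hasLojasiewiczBoundAt_of_isBigO swallowtailGerm_zero
    (isBigO_fst_pow_of_isBigO_fst (isBigO_apply swallowtailGerm 0)) ?_
  have hbdd : (fun x : ℝ × ℝ => x.2 / 2) =O[𝓝 0] fun _ => (1 : ℝ) :=
    (by fun_prop : ContinuousAt (fun x : ℝ × ℝ => x.2 / 2) 0).isBigO_one ℝ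
  refine (((isBigO_apply swallowtailGerm 1).const_mul_left (1 / 4)).sub
    (by simpa only [one_smul] using hbdd.smul (isBigO_apply swallowtailGerm 0))).congr_left
      fun x => ?_
  simp only [swallowtailGerm, Matrix.cons_val, smul_eq_mul]
  ring

theorem not_hasLojasiewiczBoundAt_swallowtailGerm :
    ¬HasLojasiewiczBoundAt swallowtailGerm 0 2 := by
  refine not_hasLojasiewiczBoundAt_of_isBigO swallowtailGerm_zero (isBigO_pi.2 fun i => ?_)
  have hpow {u : ℝ → ℝ} (hu : ContinuousAt u 0) := isBigO_pow_smul hu 3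
  fin_cases i <;> simp only [swallowtailGerm]
  · simpa using hpow (u := 0) continuousAt_const
  · simpa [mul_comm] using hpow (u := fun _ => 4) continuousAt_const
  · refine (hpow (u := fun t => 3 * t) (by fun_prop)).congr_left fun t => ?_
    simp only [Fin.reduceFinMk, Matrix.cons_val]
    ring

variable {a c : ℝ → ℝ} {n : ℕ}

theorem isBigO_integral_pow_succ {f : ℝ → ℝ} (hf : ContDiff ℝ ∞ f) (h : f =O[𝓝 0] fun t => t ^ n) :
    (fun t => ∫ s in 0..t, f s) =O[𝓝 0] fun t => t ^ (n + 1) := by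
  rw [isBigO_pow_succ_iff_deriv (contDiff_primitive hf) intervalIntegral.integral_same]
  exact h.congr_left fun t => (hf.continuous.deriv_integral f 0 t).symm

theorem not_hasLojasiewiczBoundAt_modelGerm (ha : ContDiff ℝ ∞ a) (hc : ContDiff ℝ ∞ c)
    (h : a =O[𝓝 0] fun t => t ^ n) : ¬HasLojasiewiczBoundAt (modelGerm a c) 0 n := by
  refine not_hasLojasiewiczBoundAt_of_isBigO modelGerm_zero (isBigO_pi.2 fun i => ?_)
  have hac : (fun t => a t * c t) =O[𝓝 0] fun t => t ^ n := by
    simpa only [mul_one] using h.mul (hc.continuous.continuousAt.isBigO_one ℝ)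
  fin_cases i <;> simp only [modelGerm]
  · simpa using isBigO_zero _ _
  · simpa using (isBigO_integral_pow_succ ha h).neg_left
  · simpa using (isBigO_integral_pow_succ (ha.mul hc) hac).neg_left

theorem hasContactOrderAt_of_third {f : ℝ × ℝ → R3} (hf₀ : f 0 = 0)
    (h : (fun x => f x 2) =O[𝓝 0] fun x => ‖x‖ ^ k) : HasContactOrderAt f 0 k := by
  refine ⟨ContinuousLinearMap.proj 2, ContinuousLinearMap.contDiff _ |>.contDiffAt,
    fun hzero => ?_, ?_⟩
  · rw [ContinuousLinearMap.fderiv] at hzero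
    simpa using DFunLike.congr_fun hzero ![0, 0, 1]
  · simpa [hf₀] using h

theorem isBigO_fst_norm : (fun x : ℝ × ℝ => x.1) =O[𝓝 0] fun x => ‖x‖ :=
  isBigO_fst_prod'.norm_right

theorem isBigO_snd_norm : (fun x : ℝ × ℝ => x.2) =O[𝓝 0] fun x => ‖x‖ :=
  isBigO_snd_prod'.norm_right

theorem hasContactOrderAt_modelGerm (ha : ContDiff ℝ ∞ a) (hc : ContDiff ℝ ∞ c) (ha₀ : a 0 = 0)
    (h : c =O[𝓝 0] fun t => t ^ n) : HasContactOrderAt (modelGerm a c) 0 (n + 2) := by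
  refine hasContactOrderAt_of_third modelGerm_zero ?_
  have hsnd {m : ℕ} {f : ℝ → ℝ} (hf : f =O[𝓝 0] fun t => t ^ m) :
      (fun x : ℝ × ℝ => f x.2) =O[𝓝 0] fun x => ‖x‖ ^ m :=
    (hf.comp_tendsto (k := Prod.snd) (l' := 𝓝 (0 : ℝ × ℝ)) continuousAt_snd).trans
      (isBigO_snd_norm.pow m)
  have hlin : a =O[𝓝 0] fun t => t ^ 1 := by
    simpa [ha₀] using (ha.differentiable (by simp) 0).isBigO_sub
  have hac : (fun t => a t * c t) =O[𝓝 0] fun t => t ^ (n + 1) :=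
    (hlin.mul h).congr_right fun t => by ring
  simp only [modelGerm, Matrix.cons_val, integral_sub_mul_eq ha.continuous hc.continuous]
  refine .sub ((isBigO_fst_norm.mul (hsnd (isBigO_integral_pow_succ hc h))).congr_right
    fun x => by ring) (hsnd (isBigO_integral_pow_succ (ha.mul hc) hac))

theorem hasContactOrderAt_cuspidalCrossCap : HasContactOrderAt (edgeGerm Prod.fst) 0 4 := by
  refine hasContactOrderAt_of_third edgeGerm_zero ?_
  refine (isBigO_fst_norm.mul (isBigO_snd_norm.pow 3)).congr (fun x => ?_) fun x => by ring
  simp only [edgeGerm, Matrix.cons_val]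
  ring

theorem hasContactOrderAt_cuspidalS₁ :
    HasContactOrderAt (edgeGerm fun p => p.1 ^ 2 + p.2) 0 5 := by
  refine hasContactOrderAt_of_third edgeGerm_zero ?_
  have hfst : (fun x : ℝ × ℝ => x.1 ^ 2 * x.2 ^ 3) =O[𝓝 0] fun x => ‖x‖ ^ 5 :=
    ((isBigO_fst_norm.pow 2).mul (isBigO_snd_norm.pow 3)).congr_right fun x => by ring
  refine (hfst.add (isBigO_snd_norm.pow 5)).congr_left fun x => ?_
  simp only [edgeGerm, Matrix.cons_val]
  ring

end Invariants

section ContactOrder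

theorem eq_zero_of_pow_mul_isLittleO {n : ℕ} {u : ℝ → ℝ} (hu : ContinuousAt u 0)
    (h : (fun s => s ^ n * u s) =o[𝓝 0] fun s => s ^ n) : u 0 = 0 := by
  refine tendsto_nhds_unique (hu.mono_left nhdsWithin_le_nhds)
    ((h.mono nhdsWithin_le_nhds).tendsto_div_nhds_zero.congr' ?_ : Tendsto u (𝓝[≠] 0) (𝓝 0))
  filter_upwards [eventually_mem_nhdsWithin] with s hs
  exact mul_div_cancel_left₀ _ (pow_ne_zero n hs)

theorem isBigO_sub_sub_fderiv {E F : Type*} [NormedAddCommGroup E] [NormedSpace ℝ E]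
    [NormedAddCommGroup F] [NormedSpace ℝ F] {ψ : E → F} {y : E} (hψ : ContDiffAt ℝ 2 ψ y) :
    (fun p : E × E => ψ p.1 - ψ p.2 - fderiv ℝ ψ y (p.1 - p.2)) =O[𝓝 (y, y)]
      fun p => ‖p - (y, y)‖ * ‖p.1 - p.2‖ := by
  have hψ' : ContDiffAt ℝ 1 (fderiv ℝ ψ) y := hψ.fderiv_right (by norm_num)
  obtain ⟨K, hK, hO⟩ := (hψ'.differentiableAt (by simp)).isBigO_sub.exists_nonneg
  have hdiff : ∀ᶠ z in 𝓝 y, DifferentiableAt ℝ ψ z :=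
    (hψ.eventually (by simp)).mono fun z hz => hz.differentiableAt (by simp)
  obtain ⟨r, hr, hball⟩ := Metric.eventually_nhds_iff_ball.1 (hO.bound.and hdiff)
  refine .of_bound K ?_
  filter_upwards [Metric.ball_mem_nhds (y, y) hr] with p hp
  rw [mem_ball_iff_norm] at hp
  have hsub : Metric.closedBall y ‖p - (y, y)‖ ⊆ Metric.ball y r :=
    Metric.closedBall_subset_ball hp
  have hmvt := (convex_closedBall y ‖p - (y, y)‖).norm_image_sub_le_of_norm_hasFDerivWithin_le'
    (f := ψ) (φ := fderiv ℝ ψ y) (C := K * ‖p - (y, y)‖)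
    (fun z hz => (hball z (hsub hz)).2.hasFDerivAt.hasFDerivWithinAt)
    (fun z hz => (hball z (hsub hz)).1.trans (by gcongr; exact mem_closedBall_iff_norm.1 hz))
    (mem_closedBall_iff_norm.2 (norm_snd_le (p - (y, y))))
    (mem_closedBall_iff_norm.2 (norm_fst_le (p - (y, y))))
  rwa [norm_mul, norm_norm, norm_norm, ← mul_assoc]

variable {f : ℝ × ℝ → R3} {ψ : R3 → ℝ} {k n : ℕ}

theorem isBigO_comp_curve {E : Type*} [NormedAddCommGroup E] {ψ : E → ℝ} {f : ℝ × ℝ → E}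
    (hO : (fun x => ψ (f x) - ψ (f 0)) =O[𝓝 0] fun x => ‖x‖ ^ k) {c : ℝ → ℝ × ℝ} {m : ℕ}
    (hc : c =O[𝓝 0] fun s => s ^ (m + 1)) :
    (fun s => ψ (f (c s)) - ψ (f 0)) =O[𝓝 0] fun s => s ^ ((m + 1) * k) := by
  have hpow : Tendsto (fun s : ℝ => s ^ (m + 1)) (𝓝 0) (𝓝 0) := by
    simpa using (continuous_pow (m + 1) : Continuous fun s : ℝ => s ^ (m + 1)).tendsto 0
  exact (hO.comp_tendsto (hc.trans_tendsto hpow)).trans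
    ((hc.norm_left.pow k).congr_right fun s => (pow_mul s (m + 1) k).symm)

theorem fderiv_eq_zero_of_chord (hf : ContinuousAt f 0) (hψ : ContDiffAt ℝ ∞ ψ (f 0))
    (hO : (fun x => ψ (f x) - ψ (f 0)) =O[𝓝 0] fun x => ‖x‖ ^ k) {c d : ℝ → ℝ × ℝ}
    (hc : c =O[𝓝 0] fun s => s) (hd : d =O[𝓝 0] fun s => s) {w : ℝ → R3} (hw : ContinuousAt w 0)
    (hn : n < k) (h : ∀ s, f (c s) - f (d s) = s ^ n • w s) : fderiv ℝ ψ (f 0) (w 0) = 0 := by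
  have hf_comp {c : ℝ → ℝ × ℝ} (hc : c =O[𝓝 0] fun s => s) :
      Tendsto (fun s => f (c s)) (𝓝 0) (𝓝 (f 0)) := hf.tendsto.comp (hc.trans_tendsto tendsto_id)
  have hψ_comp {c : ℝ → ℝ × ℝ} (hc : c =O[𝓝 0] fun s => s) :
      (fun s => ψ (f (c s)) - ψ (f 0)) =o[𝓝 0] fun s => s ^ n :=
    (isBigO_comp_curve hO (m := 0) (by simpa using hc)).trans_isLittleO
      (isLittleO_pow_pow (by omega))
  have hchord : (fun s => f (c s) - f (d s)) =O[𝓝 0] fun s => s ^ n := by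
    simpa only [h] using isBigO_pow_smul hw n
  have hstrict := ((hψ.hasStrictFDerivAt (by simp)).isLittleO.comp_tendsto
    ((hf_comp hc).prodMk_nhds (hf_comp hd))).trans_isBigO hchord
  refine eq_zero_of_pow_mul_isLittleO (n := n) (u := fun s => fderiv ℝ ψ (f 0) (w s))
    ((fderiv ℝ ψ (f 0)).continuous.continuousAt.comp hw) ?_
  refine (((hψ_comp hc).sub (hψ_comp hd)).sub hstrict).congr_left fun s => ?_
  simp only [Function.comp_apply, h, map_smul, smul_eq_mul]
  ring

theorem eq_zero_of_vanish_on_basis {L : R3 →L[ℝ] ℝ} (h₀ : L ![1, 0, 0] = 0)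
    (h₁ : L ![0, 1, 0] = 0) (h₂ : L ![0, 0, 1] = 0) : L = 0 := by
  ext v
  have hv : v = v 0 • ![1, 0, 0] + v 1 • ![0, 1, 0] + v 2 • ![0, 0, 1] := by
    ext i; fin_cases i <;> simp
  rw [hv]
  simp only [map_add, map_smul, h₀, h₁, h₂, smul_zero, add_zero, zero_apply]

theorem fderiv_third_ne_zero_of_contact_edgeGerm {q : ℝ × ℝ → ℝ} (hq : Continuous q) (hk : 3 ≤ k)
    (hψ : ContDiffAt ℝ ∞ ψ (edgeGerm q 0)) (hψ' : fderiv ℝ ψ (edgeGerm q 0) ≠ 0)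
    (hO : (fun x => ψ (edgeGerm q x) - ψ (edgeGerm q 0)) =O[𝓝 0] fun x => ‖x‖ ^ k) :
    fderiv ℝ ψ (edgeGerm q 0) ![0, 0, 1] ≠ 0 := by
  have hcont := (continuous_edgeGerm hq).continuousAt (x := 0)
  have hx : fderiv ℝ ψ (edgeGerm q 0) ![1, 0, 0] = 0 :=
    fderiv_eq_zero_of_chord hcont hψ hO (n := 1) (c := fun s => (s, 0)) (d := 0)
      (w := fun _ => ![1, 0, 0]) ((isBigO_refl _ _).prod_left (isBigO_zero _ _)) (isBigO_zero _ _)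
      continuousAt_const (by omega) fun s => by ext i; fin_cases i <;> simp [edgeGerm]
  have hy : fderiv ℝ ψ (edgeGerm q 0) ![0, 1, 0] = 0 := by
    simpa using fderiv_eq_zero_of_chord hcont hψ hO (n := 2) (c := fun s => (0, s)) (d := 0)
      (w := fun s => ![0, 1, s * q (0, s ^ 2)]) ((isBigO_zero _ _).prod_left (isBigO_refl _ _))
      (isBigO_zero _ _) (by fun_prop) (by omega) fun s => by
        ext i; fin_cases i <;> simp [edgeGerm]; ring
  exact fun hz => hψ' (eq_zero_of_vanish_on_basis hx hy hz)

-- The third coordinate is half the chord joining the images of `(u, v)` and `(u, -v)`.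
theorem HasContactOrderAt.isBigO_edgeGerm {q : ℝ × ℝ → ℝ} (hq : Continuous q) (hk : 3 ≤ k)
    (h : HasContactOrderAt (edgeGerm q) 0 k) :
    (fun x : ℝ × ℝ => x.2 ^ 3 * q (x.1, x.2 ^ 2)) =O[𝓝 0] fun x => ‖x‖ ^ k := by
  obtain ⟨ψ, hψ, hψ', hO⟩ := h
  simp only [sub_zero] at hO
  have hcont := (continuous_edgeGerm hq).continuousAt (x := 0)
  have hz := fderiv_third_ne_zero_of_contact_edgeGerm hq hk hψ hψ' hO
  set b := fderiv ℝ ψ (edgeGerm q 0) ![0, 0, 1] with hb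
  have hneg : Tendsto (fun x : ℝ × ℝ => (x.1, -x.2)) (𝓝 0) (𝓝 0) := by
    simpa [Prod.zero_eq_mk] using
      (by fun_prop : Continuous fun x : ℝ × ℝ => (x.1, -x.2)).tendsto 0
  have hchord (x : ℝ × ℝ) : edgeGerm q x - edgeGerm q (x.1, -x.2) =
      (2 * (x.2 ^ 3 * q (x.1, x.2 ^ 2))) • ![0, 0, 1] := by
    ext i; fin_cases i <;> simp [edgeGerm]; ring
  have hchordO : (fun x => edgeGerm q x - edgeGerm q (x.1, -x.2)) =O[𝓝 0]
      fun x : ℝ × ℝ => 2 * (x.2 ^ 3 * q (x.1, x.2 ^ 2)) * b := by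
    simp only [hchord]
    exact ((isBigO_refl _ _).smul (isBigO_const_const (![0, 0, 1] : R3) hz _)).congr_right
      fun x => smul_eq_mul _ _
  have hO_neg : (fun x : ℝ × ℝ => ψ (edgeGerm q (x.1, -x.2)) - ψ (edgeGerm q 0)) =O[𝓝 0]
      fun x => ‖x‖ ^ k := by
    simpa [Function.comp_def, Prod.norm_def] using hO.comp_tendsto hneg
  have hstrict := ((hψ.hasStrictFDerivAt (by simp)).isLittleO.comp_tendsto
    (hcont.tendsto.prodMk_nhds (hcont.tendsto.comp hneg))).trans_isBigO hchordO
  have hmain : (fun x : ℝ × ℝ => 2 * (x.2 ^ 3 * q (x.1, x.2 ^ 2)) * b) =O[𝓝 0]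
      fun x => ‖x‖ ^ k :=
    hstrict.right_isBigO_add.trans <| (hO.sub hO_neg).congr_left fun x => by
      simp only [Function.comp_apply, hchord, map_smul, smul_eq_mul, ← hb]
      ring
  refine (hmain.const_mul_left (2 * b)⁻¹).congr_left fun x => ?_
  field_simp

theorem not_hasContactOrderAt_edgeGerm {q : ℝ × ℝ → ℝ} (hq : Continuous q) (hn : 2 ≤ n) (r : ℝ)
    (h : ∀ s, s ^ 3 * q (r * s, s ^ 2) = s ^ n) : ¬HasContactOrderAt (edgeGerm q) 0 (n + 1) := by
  intro hcontact
  have hline : (fun s : ℝ => (r * s, s)) =O[𝓝 0] fun s => s :=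
    (isBigO_const_mul_self r _ _).prod_left (isBigO_refl _ _)
  have hpow := (hcontact.isBigO_edgeGerm hq (by omega)).comp_tendsto
    (hline.trans_tendsto tendsto_id)
  refine not_isBigO_pow_succ n ((hpow.trans (hline.norm_left.pow (n + 1))).congr_left fun s => ?_)
  exact h s

theorem fderiv_first_eq_zero_of_contact_swallowtailGerm (hk : 1 < k)
    (hψ : ContDiffAt ℝ ∞ ψ (swallowtailGerm 0))
    (hO : (fun x => ψ (swallowtailGerm x) - ψ (swallowtailGerm 0)) =O[𝓝 0] fun x => ‖x‖ ^ k) :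
    fderiv ℝ ψ (swallowtailGerm 0) ![1, 0, 0] = 0 :=
  fderiv_eq_zero_of_chord contDiff_swallowtailGerm.continuous.continuousAt hψ hO (n := 1)
    (c := fun s => (s, 0)) (d := 0) (w := fun _ => ![1, 0, 0])
    ((isBigO_refl _ _).prod_left (isBigO_zero _ _)) (isBigO_zero _ _)
    continuousAt_const hk fun s => by ext i; fin_cases i <;> simp [swallowtailGerm]

theorem fderiv_second_eq_zero_of_contact_swallowtailGerm (hk : 2 < k)
    (hψ : ContDiffAt ℝ ∞ ψ (swallowtailGerm 0))
    (hO : (fun x => ψ (swallowtailGerm x) - ψ (swallowtailGerm 0)) =O[𝓝 0] fun x => ‖x‖ ^ k) :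
    fderiv ℝ ψ (swallowtailGerm 0) ![0, 1, 0] = 0 := by
  have h := fderiv_eq_zero_of_chord contDiff_swallowtailGerm.continuous.continuousAt hψ hO (n := 2)
    (c := fun s => (s, s)) (d := fun s => (s, 0))
    (w := fun s => (2 + 4 * s) • ![0, 1, 0] + (s + 3 * s ^ 2) • ![0, 0, 1])
    ((isBigO_refl _ _).prod_left (isBigO_refl _ _))
    ((isBigO_refl _ _).prod_left (isBigO_zero _ _)) (by fun_prop) hk fun s => by
      ext i; fin_cases i <;> simp [swallowtailGerm] <;> ring
  simpa only [mul_zero, zero_pow two_ne_zero, add_zero, zero_smul, map_smul, smul_eq_mul,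
    mul_eq_zero, two_ne_zero, false_or] using h

-- The chord joining the images of `(s³, s²)` and `(s³, 0)` has length of order `s⁵` and lies within
-- `s³` of the origin, so `ψ` is affine along it up to `O(s⁸)`, whereas its third coordinate is
-- `s⁷ + 3 s⁸`.
theorem fderiv_third_eq_zero_of_contact_swallowtailGerm
    (hψ : ContDiffAt ℝ ∞ ψ (swallowtailGerm 0))
    (hO : (fun x => ψ (swallowtailGerm x) - ψ (swallowtailGerm 0)) =O[𝓝 0] fun x => ‖x‖ ^ 4)
    (hy : fderiv ℝ ψ (swallowtailGerm 0) ![0, 1, 0] = 0) :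
    fderiv ℝ ψ (swallowtailGerm 0) ![0, 0, 1] = 0 := by
  have hpoint (s : ℝ) : (swallowtailGerm (s ^ 3, s ^ 2), swallowtailGerm (s ^ 3, 0)) -
      (swallowtailGerm 0, swallowtailGerm 0) =
      s ^ 3 • ((![1, 4 * s ^ 3 + 2 * s ^ 2, 3 * s ^ 5 + s ^ 4], ![1, 0, 0]) : R3 × R3) := by
    ext i <;> fin_cases i <;> simp [swallowtailGerm] <;> ring
  have hchord (s : ℝ) : swallowtailGerm (s ^ 3, s ^ 2) - swallowtailGerm (s ^ 3, 0) =
      s ^ 5 • ((4 * s + 2) • ![0, 1, 0] + (3 * s ^ 3 + s ^ 2) • ![0, 0, 1]) := by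
    ext i; fin_cases i <;> simp [swallowtailGerm] <;> ring
  have htendsto : Tendsto
      (fun s : ℝ => (swallowtailGerm (s ^ 3, s ^ 2), swallowtailGerm (s ^ 3, 0)))
      (𝓝 0) (𝓝 (swallowtailGerm 0, swallowtailGerm 0)) := by
    have := contDiff_swallowtailGerm.continuous
    simpa [Prod.zero_eq_mk] using (by fun_prop : Continuous fun s : ℝ =>
      (swallowtailGerm (s ^ 3, s ^ 2), swallowtailGerm (s ^ 3, 0))).tendsto 0
  have hpointO := (isBigO_pow_smul (w := fun s : ℝ =>
    ((![1, 4 * s ^ 3 + 2 * s ^ 2, 3 * s ^ 5 + s ^ 4], ![1, 0, 0]) : R3 × R3))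
    (by fun_prop) 3).congr_left fun s => (hpoint s).symm
  have hchordO := (isBigO_pow_smul (w := fun s : ℝ =>
    (4 * s + 2) • (![0, 1, 0] : R3) + (3 * s ^ 3 + s ^ 2) • ![0, 0, 1])
    (by fun_prop) 5).congr_left fun s => (hchord s).symm
  have hsecond := ((isBigO_sub_sub_fderiv (hψ.of_le (WithTop.coe_le_coe.2 le_top))).comp_tendsto
    htendsto).trans (hpointO.norm_left.mul hchordO.norm_left)
  have hstart := isBigO_comp_curve hO (m := 1) (c := fun s => (s ^ 3, s ^ 2))
    ((isBigO_pow_pow_of_le (by norm_num)).prod_left (isBigO_refl _ _))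
  have hend := isBigO_comp_curve hO (m := 2) (c := fun s => (s ^ 3, 0))
    ((isBigO_refl _ _).prod_left (isBigO_zero _ _))
  have hlittle := ((hstart.trans_isLittleO (isLittleO_pow_pow (by norm_num : 7 < 8))).sub
    (hend.trans_isLittleO (isLittleO_pow_pow (by norm_num : 7 < 12)))).sub
    ((hsecond.congr_right fun s => (pow_add s 3 5).symm).trans_isLittleO
      (isLittleO_pow_pow (by norm_num : 7 < 8)))
  simpa using eq_zero_of_pow_mul_isLittleO (n := 7)
    (u := fun s => (3 * s + 1) * fderiv ℝ ψ (swallowtailGerm 0) ![0, 0, 1]) (by fun_prop)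
    (hlittle.congr_left fun s => by
      simp only [Function.comp_apply, hchord, map_smul, map_add, hy, smul_eq_mul]
      ring)

theorem not_hasContactOrderAt_swallowtailGerm : ¬HasContactOrderAt swallowtailGerm 0 4 := by
  rintro ⟨ψ, hψ, hψ', hO⟩
  simp only [sub_zero] at hO
  have hx := fderiv_first_eq_zero_of_contact_swallowtailGerm (by norm_num) hψ hO
  have hy := fderiv_second_eq_zero_of_contact_swallowtailGerm (by norm_num) hψ hO
  have hz := fderiv_third_eq_zero_of_contact_swallowtailGerm hψ hO hy
  exact hψ' (eq_zero_of_vanish_on_basis hx hy hz)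

end ContactOrder

section Recognition

variable {a c : ℝ → ℝ} {f : ℝ × ℝ → R3} {q : ℝ × ℝ → ℝ} {n k : ℕ}

theorem continuousAt_modelGerm (ha : ContDiff ℝ ∞ a) (hc : ContDiff ℝ ∞ c) :
    ContinuousAt (modelGerm a c) 0 :=
  (contDiff_modelGerm ha hc).continuous.continuousAt

theorem not_isBigO_sq_of_aequivAt_edgeGerm (ha : ContDiff ℝ ∞ a) (hc : ContDiff ℝ ∞ c)
    (hq : Continuous q) (h : AEquivAt (modelGerm a c) 0 (edgeGerm q) 0) :
    ¬a =O[𝓝 0] fun t => t ^ 2 := fun ha₂ =>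
  not_hasLojasiewiczBoundAt_modelGerm ha hc ha₂
    ((h.symm (continuousAt_modelGerm ha hc)).hasLojasiewiczBoundAt
      (continuous_edgeGerm hq).continuousAt (hasLojasiewiczBoundAt_edgeGerm q))

theorem not_isBigO_pow_of_not_hasContactOrderAt (ha : ContDiff ℝ ∞ a) (hc : ContDiff ℝ ∞ c)
    (ha₀ : a 0 = 0) (h : AEquivAt (modelGerm a c) 0 f 0) (hf : ¬HasContactOrderAt f 0 (n + 2)) :
    ¬c =O[𝓝 0] fun t => t ^ n := fun hcn =>
  hf (h.hasContactOrderAt (continuousAt_modelGerm ha hc)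
    (hasContactOrderAt_modelGerm ha hc ha₀ hcn))

theorem not_hasContactOrderAt_cuspidalEdge : ¬HasContactOrderAt (edgeGerm fun _ => 1) 0 4 :=
  not_hasContactOrderAt_edgeGerm continuous_const (n := 3) (by norm_num) 0 fun s => by ring

theorem not_hasContactOrderAt_cuspidalCrossCap : ¬HasContactOrderAt (edgeGerm Prod.fst) 0 5 :=
  not_hasContactOrderAt_edgeGerm continuous_fst (n := 4) (by norm_num) 1 fun s => by ring

theorem not_hasContactOrderAt_cuspidalS₁ :
    ¬HasContactOrderAt (edgeGerm fun p => p.1 ^ 2 + p.2) 0 6 :=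
  not_hasContactOrderAt_edgeGerm (by fun_prop) (n := 5) (by norm_num) 0 fun s => by ring

theorem hasContactOrderAt_modelGerm_of_aequivAt (ha : ContDiff ℝ ∞ a) (hc : ContDiff ℝ ∞ c)
    (hq : Continuous q) (h : AEquivAt (modelGerm a c) 0 (edgeGerm q) 0)
    (hk : HasContactOrderAt (edgeGerm q) 0 k) : HasContactOrderAt (modelGerm a c) 0 k :=
  (h.symm (continuousAt_modelGerm ha hc)).hasContactOrderAt (continuous_edgeGerm hq).continuousAt hk

theorem isBigO_sq_of_hasContactOrderAt_four (ha : ContDiff ℝ ∞ a) (hc : ContDiff ℝ ∞ c)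
    (ha₀ : a 0 = 0) (hc₀ : c 0 = 0) (ha₂ : ¬a =O[𝓝 0] fun t => t ^ 2)
    (h : HasContactOrderAt (modelGerm a c) 0 4) : c =O[𝓝 0] fun t => t ^ 2 := by
  by_contra hc₂
  exact not_hasContactOrderAt_cuspidalEdge ((aequivAt_modelGerm_cuspidalEdge ha hc ha₀ ha₂ hc₀
    hc₂).hasContactOrderAt (continuousAt_modelGerm ha hc) h)

theorem isBigO_cube_of_hasContactOrderAt_five (ha : ContDiff ℝ ∞ a) (hc : ContDiff ℝ ∞ c)
    (ha₀ : a 0 = 0) (hc₀ : c 0 = 0) (ha₂ : ¬a =O[𝓝 0] fun t => t ^ 2)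
    (h : HasContactOrderAt (modelGerm a c) 0 5) : c =O[𝓝 0] fun t => t ^ 3 := by
  by_contra hc₃
  have hc₂ := isBigO_sq_of_hasContactOrderAt_four ha hc ha₀ hc₀ ha₂ (h.mono (by norm_num))
  exact not_hasContactOrderAt_cuspidalCrossCap ((aequivAt_modelGerm_cuspidalCrossCap ha hc ha₀ ha₂
    hc₂ hc₃).hasContactOrderAt (continuousAt_modelGerm ha hc) h)

theorem aequivAt_modelGerm_cuspidalEdge_iff (ha : ContDiff ℝ ∞ a) (hc : ContDiff ℝ ∞ c)
    (ha₀ : a 0 = 0) (hc₀ : c 0 = 0) :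
    AEquivAt (modelGerm a c) 0 (edgeGerm fun _ => 1) 0 ↔
      (¬a =O[𝓝 0] fun t => t ^ 2) ∧ ¬c =O[𝓝 0] fun t => t ^ 2 := by
  refine ⟨fun h => ⟨not_isBigO_sq_of_aequivAt_edgeGerm ha hc continuous_const h, ?_⟩,
    fun ⟨ha₂, hc₂⟩ => aequivAt_modelGerm_cuspidalEdge ha hc ha₀ ha₂ hc₀ hc₂⟩
  exact not_isBigO_pow_of_not_hasContactOrderAt ha hc ha₀ h not_hasContactOrderAt_cuspidalEdge

theorem aequivAt_modelGerm_swallowtailGerm_iff (ha : ContDiff ℝ ∞ a) (hc : ContDiff ℝ ∞ c)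
    (ha₀ : a 0 = 0) (hc₀ : c 0 = 0) :
    AEquivAt (modelGerm a c) 0 swallowtailGerm 0 ↔ (¬c =O[𝓝 0] fun t => t ^ 2) ∧
      (a =O[𝓝 0] fun t => t ^ 2) ∧ ¬a =O[𝓝 0] fun t => t ^ 3 := by
  have hmodel := continuousAt_modelGerm ha hc
  refine ⟨fun h => ⟨?_, ?_, fun ha₃ => ?_⟩,
    fun ⟨hc₂, ha₂, ha₃⟩ => aequivAt_modelGerm_swallowtailGerm ha hc ha₀ ha₂ ha₃ hc₀ hc₂⟩
  · exact not_isBigO_pow_of_not_hasContactOrderAt ha hc ha₀ h not_hasContactOrderAt_swallowtailGerm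
  · by_contra ha₂
    obtain ⟨-, -, -, o, -, -, -, ho, -, -, -, hedge⟩ := exists_aequivAt_modelGerm_edgeGerm ha hc ha₀
      (deriv_ne_zero_of_not_isBigO ha ha₀ ha₂)
    exact not_hasLojasiewiczBoundAt_swallowtailGerm
      (((hedge.symm hmodel).trans h).hasLojasiewiczBoundAt
        (continuous_edgeGerm ho.continuous).continuousAt (hasLojasiewiczBoundAt_edgeGerm o))
  · exact not_hasLojasiewiczBoundAt_modelGerm ha hc ha₃ ((h.symm hmodel).hasLojasiewiczBoundAt
      contDiff_swallowtailGerm.continuous.continuousAt hasLojasiewiczBoundAt_swallowtailGerm)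

theorem aequivAt_modelGerm_cuspidalCrossCap_iff (ha : ContDiff ℝ ∞ a) (hc : ContDiff ℝ ∞ c)
    (ha₀ : a 0 = 0) (hc₀ : c 0 = 0) :
    AEquivAt (modelGerm a c) 0 (edgeGerm Prod.fst) 0 ↔ (¬a =O[𝓝 0] fun t => t ^ 2) ∧
      (c =O[𝓝 0] fun t => t ^ 2) ∧ ¬c =O[𝓝 0] fun t => t ^ 3 := by
  refine ⟨fun h => ?_,
    fun ⟨ha₂, hc₂, hc₃⟩ => aequivAt_modelGerm_cuspidalCrossCap ha hc ha₀ ha₂ hc₂ hc₃⟩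
  have ha₂ := not_isBigO_sq_of_aequivAt_edgeGerm ha hc continuous_fst h
  exact ⟨ha₂, isBigO_sq_of_hasContactOrderAt_four ha hc ha₀ hc₀ ha₂
      (hasContactOrderAt_modelGerm_of_aequivAt ha hc continuous_fst h
        hasContactOrderAt_cuspidalCrossCap),
    not_isBigO_pow_of_not_hasContactOrderAt ha hc ha₀ h not_hasContactOrderAt_cuspidalCrossCap⟩

theorem aequivAt_modelGerm_cuspidalS₁_iff (ha : ContDiff ℝ ∞ a) (hc : ContDiff ℝ ∞ c)
    (ha₀ : a 0 = 0) (hc₀ : c 0 = 0) :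
    AEquivAt (modelGerm a c) 0 (edgeGerm fun p => p.1 ^ 2 + p.2) 0 ↔
      (¬a =O[𝓝 0] fun t => t ^ 2) ∧ (c =O[𝓝 0] fun t => t ^ 3) ∧ ¬c =O[𝓝 0] fun t => t ^ 4 := by
  refine ⟨fun h => ?_,
    fun ⟨ha₂, hc₃, hc₄⟩ => aequivAt_modelGerm_cuspidalS₁ ha hc ha₀ ha₂ hc₃ hc₄⟩
  have hq : Continuous fun p : ℝ × ℝ => p.1 ^ 2 + p.2 := by fun_prop
  have ha₂ := not_isBigO_sq_of_aequivAt_edgeGerm ha hc hq h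
  exact ⟨ha₂, isBigO_cube_of_hasContactOrderAt_five ha hc ha₀ hc₀ ha₂
      (hasContactOrderAt_modelGerm_of_aequivAt ha hc hq h hasContactOrderAt_cuspidalS₁),
    not_isBigO_pow_of_not_hasContactOrderAt ha hc ha₀ h not_hasContactOrderAt_cuspidalS₁⟩

theorem FrenetSetup.exists_modelGerm_forall_aequivAt_NR_iff {γ h ν : ℝ → R3} {κs κν κt : ℝ → ℝ}
    (H : FrenetSetup γ h ν κs κν κt) (hdev : ∀ u, κt u = 0) (hnoncyl : ∀ u, κν u ≠ 0) {u₀ w₀ : ℝ}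
    (hsing : w₀ * κν u₀ = 1) :
    ∃ a c : ℝ → ℝ, ContDiff ℝ ∞ a ∧ ContDiff ℝ ∞ c ∧ a 0 = 0 ∧ c 0 = 0 ∧
      (∀ f, AEquivAt (NR γ ν) (u₀, w₀) f 0 ↔ AEquivAt (modelGerm a c) 0 f 0) ∧
      ((a =O[𝓝 0] fun t => t ^ 2) ↔ deriv κν u₀ = 0) ∧
      ((a =O[𝓝 0] fun t => t ^ 3) ↔ deriv κν u₀ = 0 ∧ deriv (deriv κν) u₀ = 0) ∧
      ((c =O[𝓝 0] fun t => t ^ 2) ↔ κs u₀ = 0) ∧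
      ((c =O[𝓝 0] fun t => t ^ 3) ↔ κs u₀ = 0 ∧ deriv κs u₀ = 0) ∧
      ((c =O[𝓝 0] fun t => t ^ 4) ↔
        κs u₀ = 0 ∧ deriv κs u₀ = 0 ∧ deriv (deriv κs) u₀ = 0) := by
  obtain ⟨a, c, ha, hc, ha₀, hc₀, hNR, horder⟩ :=
    H.exists_aequivAt_NR_modelGerm hdev hnoncyl hsing
  have hκν : ContDiff ℝ ∞ (deriv κν) := (contDiff_infty_iff_deriv.1 H.smooth_κν).2
  have hNR_cont : Continuous (NR γ ν) := by
    have := H.smooth_γ.continuous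
    have := H.smooth_ν.continuous
    unfold NR
    fun_prop
  exact ⟨a, c, ha, hc, ha₀, hc₀,
    fun f => ⟨(hNR.symm hNR_cont.continuousAt).trans, hNR.trans⟩,
    (horder 1).1.trans (isBigO_sub_pow_one_iff hκν),
    (horder 2).1.trans (isBigO_sub_pow_two_iff hκν),
    (horder 1).2.trans (isBigO_sub_pow_one_iff H.smooth_κs),
    (horder 2).2.trans (isBigO_sub_pow_two_iff H.smooth_κs),
    (horder 3).2.trans (isBigO_sub_pow_three_iff H.smooth_κs)⟩

theorem cuspidalEdge_eq_edgeGerm :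
    (fun x : ℝ × ℝ => (![x.1, x.2 ^ 2, x.2 ^ 3] : R3)) = edgeGerm fun _ => 1 :=
  funext fun x => by rw [edgeGerm, mul_one]

theorem cuspidalCrossCap_eq_edgeGerm :
    (fun x : ℝ × ℝ => (![x.1, x.2 ^ 2, x.1 * x.2 ^ 3] : R3)) = edgeGerm Prod.fst :=
  funext fun x => by rw [edgeGerm, mul_comm]

end Recognition

/-- characterization of the singularities of a noncylindrical developable
normal ruled surface NR at a singular point q = (u₀,w₀) in terms of κ_s and κ_ν. -/
theorem stmt_7 (γ h ν : ℝ → R3) (κs κν κt : ℝ → ℝ) (H : FrenetSetup γ h ν κs κν κt)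
    (hdev : ∀ u : ℝ, κt u = 0) (hnoncyl : ∀ u : ℝ, κν u ≠ 0)
    (u₀ w₀ : ℝ) (hsing : w₀ * κν u₀ = 1) :
    (AEquivAt (NR γ ν) (u₀, w₀) (fun x : ℝ × ℝ => ![x.1, x.2 ^ 2, x.2 ^ 3]) 0 ↔
        κs u₀ * deriv κν u₀ ≠ 0) ∧
    (AEquivAt (NR γ ν) (u₀, w₀)
        (fun x : ℝ × ℝ => ![x.1, 4 * x.2 ^ 3 + 2 * x.1 * x.2,
          3 * x.2 ^ 4 + x.1 * x.2 ^ 2]) 0 ↔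
        (κs u₀ ≠ 0 ∧ deriv κν u₀ = 0 ∧ deriv (deriv κν) u₀ ≠ 0)) ∧
    (AEquivAt (NR γ ν) (u₀, w₀) (fun x : ℝ × ℝ => ![x.1, x.2 ^ 2, x.1 * x.2 ^ 3]) 0 ↔
        (κs u₀ = 0 ∧ deriv κs u₀ * deriv κν u₀ ≠ 0)) ∧
    (AEquivAt (NR γ ν) (u₀, w₀)
        (fun x : ℝ × ℝ => ![x.1, x.2 ^ 2, x.2 ^ 3 * (x.1 ^ 2 + x.2 ^ 2)]) 0 ↔
        (κs u₀ = 0 ∧ deriv κs u₀ = 0 ∧ deriv (deriv κs) u₀ * deriv κν u₀ ≠ 0)) := by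
  obtain ⟨a, c, ha, hc, ha₀, hc₀, hNR, ha₂, ha₃, hc₂, hc₃, hc₄⟩ :=
    H.exists_modelGerm_forall_aequivAt_NR_iff hdev hnoncyl hsing
  have hedge := (hNR _).trans (aequivAt_modelGerm_cuspidalEdge_iff ha hc ha₀ hc₀)
  have hswallowtail := (hNR _).trans (aequivAt_modelGerm_swallowtailGerm_iff ha hc ha₀ hc₀)
  have hcrossCap := (hNR _).trans (aequivAt_modelGerm_cuspidalCrossCap_iff ha hc ha₀ hc₀)
  have hS₁ := (hNR _).trans (aequivAt_modelGerm_cuspidalS₁_iff ha hc ha₀ hc₀)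
  rw [← cuspidalEdge_eq_edgeGerm, ha₂, hc₂] at hedge
  rw [hc₂, ha₂, ha₃] at hswallowtail
  rw [← cuspidalCrossCap_eq_edgeGerm, ha₂, hc₂, hc₃] at hcrossCap
  rw [ha₂, hc₃, hc₄] at hS₁
  exact ⟨hedge.trans (by rw [mul_ne_zero_iff]; grind), hswallowtail.trans (by grind),
    hcrossCap.trans (by rw [mul_ne_zero_iff]; grind), hS₁.trans (by rw [mul_ne_zero_iff]; grind)⟩
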